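/- Let Γ̄ = Γ × Γ* where Γ ≤ Isom X and Γ* ≤ Isom X* are countable subgroups with finite exponential growth relative to (X,d) and to (X*,d*) respectively. For every probability measure π on Γ̄ with finite first moment and non-elementary marginals μ and μ*, for ν_π-almost every ξ̄ ∈ ∂X × ∂X*: liminf_{r→0} log ν_π(B̄(ξ̄,r))/log r ≥ (h(π) − h(μ*))/l(X,μ) + h(μ*)/l(X*,μ*). -/

import Mathlib

open MeasureTheory Filter Topology Metric Set
open scoped ENNReal Classical

noncomputable section

namespace HMDim

/-! ### Gromov products and hyperbolicity -/

/-- The Gromov product `(x|y)_o = (d(x,o)+d(o,y)-d(x,y))/2`. -/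
def gp {X : Type*} [MetricSpace X] (o x y : X) : ℝ :=
  (dist x o + dist o y - dist x y) / 2

/-- `X` is `δ`-hyperbolic. -/
def IsHyperbolicWith (X : Type*) [MetricSpace X] (δ : ℝ) : Prop :=
  ∀ x y z w : X, min (gp w x z) (gp w z y) - δ ≤ gp w x y

/-- `X` is hyperbolic: `δ`-hyperbolic for some `δ ≥ 0`. -/
def IsHyperbolic (X : Type*) [MetricSpace X] : Prop :=
  ∃ δ : ℝ, 0 ≤ δ ∧ IsHyperbolicWith X δ

/-- `X` is `C`-roughly geodesic for some `C ≥ 0`: any two points are joined by a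
`C`-rough geodesic. -/
def IsRoughGeodesicSpace (X : Type*) [MetricSpace X] : Prop :=
  ∃ C : ℝ, 0 ≤ C ∧ ∀ x y : X, ∃ (b : ℝ) (γ : ℝ → X), 0 ≤ b ∧ γ 0 = x ∧ γ b = y ∧
    ∀ s ∈ Set.Icc (0:ℝ) b, ∀ t ∈ Set.Icc (0:ℝ) b, abs (dist (γ s) (γ t) - |s - t|) ≤ C

/-- Bounded growth at some scale: there are `0 < r < R` and `N` such that every ball of
radius `R` is covered by at most `N` balls of radius `r`. -/
def HasBoundedGrowthAtSomeScale (X : Type*) [MetricSpace X] : Prop :=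
  ∃ (r R : ℝ) (N : ℕ), 0 < r ∧ r < R ∧
    ∀ x : X, ∃ s : Finset X, s.card ≤ N ∧ Metric.ball x R ⊆ ⋃ y ∈ s, Metric.ball y r

/-! ### The Gromov boundary -/

/-- A sequence is divergent if it is Cauchy for the Gromov-product quasi-metric, i.e.
`(u n | u m)_o → ∞`. -/
def IsDivergent {X : Type*} [MetricSpace X] (o : X) (u : ℕ → X) : Prop :=
  Tendsto (fun pr : ℕ × ℕ => gp o (u pr.1) (u pr.2)) atTop atTop

/-- The type of divergent sequences. -/
def DivSeq (X : Type*) [MetricSpace X] (o : X) : Type _ := {u : ℕ → X // IsDivergent o u}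

/-- Two divergent sequences are equivalent when `(u n | v m)_o → ∞`. -/
def bndRel {X : Type*} [MetricSpace X] (o : X) (u v : DivSeq X o) : Prop :=
  Tendsto (fun pr : ℕ × ℕ => gp o (u.1 pr.1) (v.1 pr.2)) atTop atTop

/-- The Gromov boundary: equivalence classes of divergent sequences. -/
def Boundary (X : Type*) [MetricSpace X] (o : X) : Type _ := Quot (bndRel o)

/-- The boundary point of a divergent sequence. -/
def mkB {X : Type*} [MetricSpace X] (o : X) (u : DivSeq X o) : Boundary X o :=
  Quot.mk _ u

/-- The extended Gromov product of two boundary points: the infimum over pairs of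
representatives of the liminf of Gromov products. -/
def gpB {X : Type*} [MetricSpace X] (o : X) (ξ η : Boundary X o) : ℝ :=
  sInf {t : ℝ | ∃ u v : DivSeq X o, mkB o u = ξ ∧ mkB o v = η ∧
    t = Filter.liminf (fun pr : ℕ × ℕ => gp o (u.1 pr.1) (v.1 pr.2)) atTop}

/-- The quasi-metric `q(ξ,η) = exp(-(ξ|η)_o)` on the boundary (`0` on the diagonal). -/
def qB {X : Type*} [MetricSpace X] (o : X) (ξ η : Boundary X o) : ℝ :=
  if ξ = η then 0 else Real.exp (-(gpB o ξ η))

/-- The extended Gromov product of an interior point with a boundary point. -/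
def gpXB {X : Type*} [MetricSpace X] (o : X) (x : X) (ξ : Boundary X o) : ℝ :=
  sInf {t : ℝ | ∃ u : DivSeq X o, mkB o u = ξ ∧
    t = Filter.liminf (fun m : ℕ => gp o x (u.1 m)) atTop}

/-- Quasi-metric between an interior point and a boundary point. -/
def qXB {X : Type*} [MetricSpace X] (o : X) (x : X) (ξ : Boundary X o) : ℝ :=
  Real.exp (-(gpXB o x ξ))

/-- The open ball of a quasi-metric. -/
def qball {A : Type*} (q : A → A → ℝ) (ξ : A) (r : ℝ) : Set A := {η | q ξ η < r}

/-- The max quasi-metric `q̄` on the product of two boundaries. -/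
def qbb {X Xs : Type*} [MetricSpace X] [MetricSpace Xs] (o : X) (os : Xs)
    (ξ η : Boundary X o × Boundary Xs os) : ℝ :=
  max (qB o ξ.1 η.1) (qB os ξ.2 η.2)

/-- Boundaries are measurable spaces, with the σ-algebra generated by quasi-metric balls. -/
instance (X : Type*) [MetricSpace X] (o : X) : MeasurableSpace (Boundary X o) :=
  MeasurableSpace.generateFrom {s | ∃ ξ r, s = qball (qB o) ξ r}

/-! ### The boundary action of isometries -/

lemma gp_isometry_le {X : Type*} [MetricSpace X] (o : X) (g : X ≃ᵢ X) (x y : X) :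
    gp o x y - dist o (g o) ≤ gp o (g x) (g y) := by
  have e1 : dist (g x) (g o) = dist x o := g.dist_eq x o
  have e2 : dist (g o) (g y) = dist o y := g.dist_eq o y
  have e3 : dist (g x) (g y) = dist x y := g.dist_eq x y
  have e4 : dist (g o) o = dist o (g o) := dist_comm _ _
  have t1 : dist (g x) (g o) ≤ dist (g x) o + dist o (g o) := dist_triangle _ _ _
  have t2 : dist (g o) (g y) ≤ dist (g o) o + dist o (g y) := dist_triangle _ _ _
  simp only [gp]
  linarith [t1, t2, e1, e2, e3, e4]

lemma isDivergent_comp {X : Type*} [MetricSpace X] (o : X) (g : X ≃ᵢ X) {u : ℕ → X}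
    (h : IsDivergent o u) : IsDivergent o fun n => g (u n) := by
  have h' := tendsto_atTop_add_const_right atTop (-(dist o (g o)))
    (h : Tendsto (fun pr : ℕ × ℕ => gp o (u pr.1) (u pr.2)) atTop atTop)
  refine tendsto_atTop_mono (fun pr => ?_) h'
  have := gp_isometry_le o g (u pr.1) (u pr.2)
  simpa [sub_eq_add_neg] using this

lemma bndRel_comp {X : Type*} [MetricSpace X] (o : X) (g : X ≃ᵢ X) {u v : DivSeq X o}
    (h : bndRel o u v) :
    bndRel o ⟨fun n => g (u.1 n), isDivergent_comp o g u.2⟩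
      ⟨fun n => g (v.1 n), isDivergent_comp o g v.2⟩ := by
  have h' := tendsto_atTop_add_const_right atTop (-(dist o (g o)))
    (h : Tendsto (fun pr : ℕ × ℕ => gp o (u.1 pr.1) (v.1 pr.2)) atTop atTop)
  refine tendsto_atTop_mono (fun pr => ?_) h'
  have := gp_isometry_le o g (u.1 pr.1) (v.1 pr.2)
  simpa [sub_eq_add_neg] using this

/-- The induced action of an isometry on the Gromov boundary. -/
def bAct {X : Type*} [MetricSpace X] (o : X) (g : X ≃ᵢ X) :
    Boundary X o → Boundary X o :=
  Quot.map (fun u : DivSeq X o =>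
      (⟨fun n => g (u.1 n), isDivergent_comp o g u.2⟩ : DivSeq X o))
    (fun _ _ h => bndRel_comp o g h)

/-! ### Random walks on countable groups -/

/-- Convolution of two measures (as `ℝ≥0∞`-valued functions) on a group. -/
def conv {G : Type*} [Group G] (p q : G → ℝ≥0∞) : G → ℝ≥0∞ :=
  fun x => ∑' y : G, p y * q (y⁻¹ * x)

/-- The `n`-fold convolution power `π_n` of `p`. -/
def piN {G : Type*} [Group G] (p : G → ℝ≥0∞) : ℕ → G → ℝ≥0∞
  | 0 => fun x => if x = 1 then 1 else 0
  | n + 1 => conv (piN p n) p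

/-- The Shannon entropy `H(π_n)` of the `n`-th convolution power. -/
def entropySeq {G : Type*} [Group G] (p : G → ℝ≥0∞) (n : ℕ) : ℝ :=
  ∑' x : G, Real.negMulLog ((piN p n x).toReal)

/-- The first moment of `π_n` with respect to a displacement function `f`. -/
def momentSeq {G : Type*} [Group G] (p : G → ℝ≥0∞) (f : G → ℝ) (n : ℕ) : ℝ :=
  ∑' x : G, (piN p n x).toReal * f x

/-- `h` is the asymptotic entropy of the `p`-random walk:
`h = lim (1/n) H(π_n)`. -/
def HasEntropy {G : Type*} [Group G] (p : G → ℝ≥0∞) (h : ℝ) : Prop :=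
  Tendsto (fun n : ℕ => entropySeq p n / n) atTop (nhds h)

/-- `l` is the drift (rate of escape) of the `p`-random walk with respect to the
displacement `f`: `l = lim (1/n) Σ_x f(x) π_n(x)`. -/
def HasDrift {G : Type*} [Group G] (p : G → ℝ≥0∞) (f : G → ℝ) (l : ℝ) : Prop :=
  Tendsto (fun n : ℕ => momentSeq p f n / n) atTop (nhds l)

/-- `p` is a probability distribution. -/
def IsProb {G : Type*} (p : G → ℝ≥0∞) : Prop := ∑' x : G, p x = 1

/-- Finite first moment with respect to a displacement function `f`. -/
def FiniteFirstMoment {G : Type*} (p : G → ℝ≥0∞) (f : G → ℝ) : Prop :=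
  ∑' x : G, p x * ENNReal.ofReal (f x) ≠ ∞

/-- The pushforward of a distribution `p` by a map `f` (e.g. a marginal). -/
def marginalStar {G A : Type*} (p : G → ℝ≥0∞) (f : G → A) : A → ℝ≥0∞ :=
  fun a => ∑' x : G, if f x = a then p x else 0

/-- A subgroup is non-elementary (in the relevant sense) if it contains a free
subgroup of rank 2. -/
def IsNonElementarySubgroup {G : Type*} [Group G] (H : Subgroup G) : Prop :=
  ∃ φ : FreeGroup (Fin 2) →* G, Function.Injective φ ∧ φ.range ≤ H

/-- A measure `p` on a group is non-elementary if the subgroup generated by its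
support contains a free subgroup of rank 2. -/
def IsNonElemMeasure {G : Type*} [Group G] (p : G → ℝ≥0∞) : Prop :=
  IsNonElementarySubgroup (Subgroup.closure {x : G | p x ≠ 0})

/-- A group containing a free subgroup of rank 2 (a non-elementary group). -/
def HasFreeSubgroup (G : Type*) [Group G] : Prop :=
  ∃ φ : FreeGroup (Fin 2) →* G, Function.Injective φ

/-! ### Path space -/

/-- The position `w_n = x_1 ⋯ x_n` of the random walk with increments `ω`. -/
def walk {G : Type*} [Group G] (ω : ℕ → G) (n : ℕ) : G := ((List.range n).map ω).prod

/-- The cylinder set `[w̄_0, …, w̄_n]` of trajectories whose positions agree with those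
of `ω` up to time `n`. -/
def cyl {G : Type*} [Group G] (ω : ℕ → G) (n : ℕ) : Set (ℕ → G) :=
  {ω' | ∀ i ≤ n, walk ω' i = walk ω i}

/-- `P` is the distribution of the increments of the `p`-random walk: the product
measure `p^{⊗ℕ}` on the path space. -/
def IsRWMeasure {G : Type*} [Group G] [MeasurableSpace G] (p : G → ℝ≥0∞)
    (P : Measure (ℕ → G)) : Prop :=
  IsProbabilityMeasure P ∧
    ∀ (n : ℕ) (g : ℕ → G), P {ω | ∀ i < n, ω i = g i} = ∏ i ∈ Finset.range n, p (g i)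

/-- `ν` is the harmonic measure on the boundary of `X` for the random walk with path
measure `P` and orbit map `z`: the image of `P` under the a.s.-defined boundary map. -/
def IsHarmonic {Ω X : Type*} [MeasurableSpace Ω] [MetricSpace X] (o : X)
    (P : Measure Ω) (z : Ω → ℕ → X) (ν : Measure (Boundary X o)) : Prop :=
  ∃ bnd : Ω → Boundary X o, Measurable bnd ∧ ν = P.map bnd ∧
    ∀ᵐ ω ∂P, ∃ h : IsDivergent o (z ω), bnd ω = mkB o ⟨z ω, h⟩

/-- `ν` is the harmonic measure on the product of the boundaries of `X` and `Xs` for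
the random walk with path measure `P` and orbit maps `z`, `zs`. -/
def IsJointHarmonic {Ω X Xs : Type*} [MeasurableSpace Ω] [MetricSpace X] [MetricSpace Xs]
    (o : X) (os : Xs) (P : Measure Ω) (z : Ω → ℕ → X) (zs : Ω → ℕ → Xs)
    (ν : Measure (Boundary X o × Boundary Xs os)) : Prop :=
  ∃ bnd : Ω → Boundary X o × Boundary Xs os, Measurable bnd ∧ ν = P.map bnd ∧
    ∀ᵐ ω ∂P, ∃ (h1 : IsDivergent o (z ω)) (h2 : IsDivergent os (zs ω)),
      bnd ω = (mkB o ⟨z ω, h1⟩, mkB os ⟨zs ω, h2⟩)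

/-- `cond` is a disintegration (system of conditional measures) of `P` with respect to
the map `f`, over the pushforward `νB = f_* P`. -/
def IsDisintegration {A B : Type*} [MeasurableSpace A] [MeasurableSpace B]
    (P : Measure A) (f : A → B) (νB : Measure B) (cond : B → Measure A) : Prop :=
  νB = P.map f ∧ (∀ᵐ b ∂νB, IsProbabilityMeasure (cond b)) ∧
    (∀ᵐ b ∂νB, cond b (f ⁻¹' {b}) = 1) ∧
    ∀ s : Set A, MeasurableSet s → P s = ∫⁻ b, cond b s ∂νB

/-! ### Hausdorff dimension for quasi-metrics -/

/-- Diameter of a set for a quasi-metric. -/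
def qdiam {A : Type*} (q : A → A → ℝ) (E : Set A) : ℝ≥0∞ :=
  ⨆ x ∈ E, ⨆ y ∈ E, ENNReal.ofReal (q x y)

/-- Hausdorff pre-measure (content) at scale `Δ`. -/
def qHContent {A : Type*} (q : A → A → ℝ) (α Δ : ℝ) (E : Set A) : ℝ≥0∞ :=
  ⨅ (c : ℕ → Set A) (_ : E ⊆ ⋃ i, c i) (_ : ∀ i, qdiam q (c i) ≤ ENNReal.ofReal Δ),
    ∑' i, qdiam q (c i) ^ α

/-- The `α`-dimensional Hausdorff measure of a set for a quasi-metric. -/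
def qHMeasure {A : Type*} (q : A → A → ℝ) (α : ℝ) (E : Set A) : ℝ≥0∞ :=
  ⨆ (Δ : ℝ) (_ : 0 < Δ), qHContent q α Δ E

/-- The Hausdorff dimension of a set for a quasi-metric. -/
def qdimSet {A : Type*} (q : A → A → ℝ) (E : Set A) : ℝ :=
  sSup {α : ℝ | 0 ≤ α ∧ 0 < qHMeasure q α E}

/-- The upper Hausdorff dimension of a measure. -/
def qdimUpper {A : Type*} [MeasurableSpace A] (q : A → A → ℝ) (ν : Measure A) : ℝ :=
  sInf {d : ℝ | ∃ E : Set A, MeasurableSet E ∧ ν Eᶜ = 0 ∧ d = qdimSet q E}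

/-- The lower Hausdorff dimension of a measure. -/
def qdimLower {A : Type*} [MeasurableSpace A] (q : A → A → ℝ) (ν : Measure A) : ℝ :=
  sInf {d : ℝ | ∃ E : Set A, MeasurableSet E ∧ 0 < ν E ∧ d = qdimSet q E}

/-- The Hausdorff dimension of `ν` exists and equals `D`. -/
def HasDim {A : Type*} [MeasurableSpace A] (q : A → A → ℝ) (ν : Measure A) (D : ℝ) : Prop :=
  qdimUpper q ν = D ∧ qdimLower q ν = D

/-- `ν` is exact dimensional with dimension `D` for the quasi-metric `q`:
`lim_{r→0} log ν(B(ξ,r))/log r = D` for `ν`-a.e. `ξ`. -/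
def ExactDim {A : Type*} [MeasurableSpace A] (q : A → A → ℝ) (ν : Measure A) (D : ℝ) : Prop :=
  ∀ᵐ ξ ∂ν, Tendsto (fun r : ℝ => Real.log (ν (qball q ξ r)).toReal / Real.log r)
    (nhdsWithin 0 (Set.Ioi 0)) (nhds D)

/-! ### Differential entropy -/

/-- The differential entropy
`h(∂X*, μ*) = Σ_g μ*(g) ∫ log (d gν/dν) d(gν)` of a measure on the isometry group with
respect to a boundary measure. -/
def diffEntropy {Xs : Type*} [MetricSpace Xs] (os : Xs) (pstar : (Xs ≃ᵢ Xs) → ℝ≥0∞)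
    (νs : Measure (Boundary Xs os)) : ℝ :=
  ∑' g : (Xs ≃ᵢ Xs), (pstar g).toReal *
    ∫ η, Real.log ((Measure.rnDeriv (νs.map (bAct os g)) νs η).toReal)
      ∂(νs.map (bAct os g))

/-! ### Word metrics and hyperbolic groups -/

/-- The word length of `g` with respect to a (symmetrized) generating set `S`. -/
def wordLength {G : Type*} [Group G] (S : Set G) (g : G) : ℕ :=
  sInf {n : ℕ | ∃ f : Fin n → G, (∀ i, f i ∈ S ∨ (f i)⁻¹ ∈ S) ∧ g = (List.ofFn f).prod}

/-- The metric of `G` is quasi-isometric to a word metric of a finite generating set. -/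
def IsQIToWordMetric (G : Type*) [Group G] [MetricSpace G] : Prop :=
  ∃ S : Finset G, Subgroup.closure (S : Set G) = ⊤ ∧
    ∃ Λ c : ℝ, 1 ≤ Λ ∧ 0 ≤ c ∧ ∀ g : G,
      (wordLength (S : Set G) g : ℝ) / Λ - c ≤ dist (1 : G) g ∧
      dist (1 : G) g ≤ Λ * (wordLength (S : Set G) g) + c

/-- The metric of `G` is left invariant. -/
def LeftInvariantMetric (G : Type*) [Group G] [MetricSpace G] : Prop :=
  ∀ g x y : G, dist (g * x) (g * y) = dist x y

/-- `G`, with its metric, is a hyperbolic group: the metric is left invariant,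
hyperbolic and quasi-isometric to a word metric. -/
def IsHypGroupMetric (G : Type*) [Group G] [MetricSpace G] : Prop :=
  LeftInvariantMetric G ∧ IsHyperbolic G ∧ IsQIToWordMetric G

/-! ### Groups of isometries of a product -/

/-- First component of an element of a subgroup of `Isom X × Isom X*`. -/
def proj1 {X Xs : Type*} [MetricSpace X] [MetricSpace Xs]
    {Γb : Subgroup ((X ≃ᵢ X) × (Xs ≃ᵢ Xs))} (γ : Γb) : X ≃ᵢ X :=
  (γ : (X ≃ᵢ X) × (Xs ≃ᵢ Xs)).1

/-- Second component of an element of a subgroup of `Isom X × Isom X*`. -/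
def proj2 {X Xs : Type*} [MetricSpace X] [MetricSpace Xs]
    {Γb : Subgroup ((X ≃ᵢ X) × (Xs ≃ᵢ Xs))} (γ : Γb) : Xs ≃ᵢ Xs :=
  (γ : (X ≃ᵢ X) × (Xs ≃ᵢ Xs)).2

/-- Displacement `d̄(ō, γ·ō)` of the base point `ō = (o,o*)` (the metric of the product
is the max metric). -/
def disp {X Xs : Type*} [MetricSpace X] [MetricSpace Xs]
    {Γb : Subgroup ((X ≃ᵢ X) × (Xs ≃ᵢ Xs))} (o : X) (os : Xs) (γ : Γb) : ℝ :=
  dist (o, os) (proj1 γ o, proj2 γ os)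

/-- Finite exponential growth relative to a displacement function `f`:
`#{x : f(x) < r} ≤ c e^{c r}`. -/
def FinExpGrowth {G : Type*} (f : G → ℝ) : Prop :=
  ∃ c : ℝ, 0 < c ∧ ∀ r : ℝ, 0 < r →
    {x : G | f x < r}.Finite ∧ ({x : G | f x < r}.ncard : ℝ) ≤ c * Real.exp (c * r)

/-! ### The events of Lemmas `A` and `E_n(η)` -/

/-- The event `A_{ε,n} = ∩_{t ≥ n} {z̄_∞ exists and q̄(z̄_t, z̄_∞) ≤ e^{-(l*-ε)n}}`. -/
def Aev {X Xs : Type*} [MetricSpace X] [MetricSpace Xs]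
    (Γb : Subgroup ((X ≃ᵢ X) × (Xs ≃ᵢ Xs))) (o : X) (os : Xs) (ε lst : ℝ) (n : ℕ) :
    Set (ℕ → Γb) :=
  {ω | ∃ (h1 : IsDivergent o (fun t => proj1 (walk ω t) o))
        (h2 : IsDivergent os (fun t => proj2 (walk ω t) os)),
      ∀ t, n ≤ t →
        max (qXB o (proj1 (walk ω t) o) (mkB o ⟨_, h1⟩))
            (qXB os (proj2 (walk ω t) os) (mkB os ⟨_, h2⟩))
          ≤ Real.exp (-((lst - ε) * n))}

/-- The event
`E_{ε,n}(η) = {P^η([w̄_0,…,w̄_n] ∩ A_{ε,n}) ≤ e^{n(h*+ε)} P([w̄_0,…,w̄_n] ∩ A_{ε,n})}`. -/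
def Eev {X Xs : Type*} [MetricSpace X] [MetricSpace Xs]
    (Γb : Subgroup ((X ≃ᵢ X) × (Xs ≃ᵢ Xs))) [MeasurableSpace Γb] (o : X) (os : Xs)
    (P : Measure (ℕ → Γb)) (condP : Boundary Xs os → Measure (ℕ → Γb))
    (hst ε lst : ℝ) (η : Boundary Xs os) (n : ℕ) : Set (ℕ → Γb) :=
  {ω | condP η (cyl ω n ∩ Aev Γb o os ε lst n) ≤
        ENNReal.ofReal (Real.exp (n * (hst + ε))) * P (cyl ω n ∩ Aev Γb o os ε lst n)}

/-! ### Special measures -/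

/-- The measure `π^ρ = ρ μ×μ + (1-ρ) μ_diag` on `Γ × Γ`. -/
def pRho {Γ : Type*} (p : Γ → ℝ≥0∞) (ρ : ℝ) : Γ × Γ → ℝ≥0∞ :=
  fun g => ENNReal.ofReal ρ * (p g.1 * p g.2) +
    ENNReal.ofReal (1 - ρ) * (if g.1 = g.2 then p g.1 else 0)

/-- The uniform distribution on the symmetrized free basis of `F_{m+1}`. -/
def symFreeBasisUniform (m : ℕ) : FreeGroup (Fin (m + 1)) → ℝ≥0∞ :=
  fun g => if ∃ i : Fin (m + 1), g = FreeGroup.of i ∨ g = (FreeGroup.of i)⁻¹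
    then ENNReal.ofReal (1 / (2 * (m + 1))) else 0

/-- The homomorphism `F_{m+1} → F_m` sending `x_i ↦ y_i` for `i ≤ m` and `x_{m+1} ↦ 1`. -/
def projHom (m : ℕ) : FreeGroup (Fin (m + 1)) →* FreeGroup (Fin m) :=
  FreeGroup.lift (fun i => if h : (i : ℕ) < m then FreeGroup.of (⟨i, h⟩ : Fin m) else 1)

/-!
For almost every trajectory the drift and the entropy are attained along the path, by Kingman's
subadditive ergodic theorem; the drifts are positive because zero drift forces zero entropy, hence
asymptotically invariant probability measures, which a free subgroup does not allow. In a hyperbolic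
space a trajectory with positive drift `l` tracks a geodesic, so knowing its limit up to a ball of
radius `exp (-k)` determines its position at time `k / l` up to `exp (o(k))` possibilities.

A trajectory converging to a point of `B̄(ξ̄, exp (-k))` therefore has its first coordinate at time
`k / l` and its second coordinate at time `k / ls` essentially prescribed. At the smaller of the two
times both are, which costs the entropy `hπ` per step; up to the larger time only the slower factor
is, which costs `hs` or `hμ` per step. If the second factor is the slower one this gives exactly the
exponent `(hπ - hs) / l + hs / ls`, and otherwise a larger one, since `hπ ≤ hμ + hs`. A packing
argument together with Borel–Cantelli turns the estimate for typical trajectories into a pointwise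
estimate for the harmonic measure.
-/

/-! ### The path space -/

section Shift

/-- The shift on the space of sequences. -/
def shift {α : Type*} (ω : ℕ → α) : ℕ → α := fun i => ω (i + 1)

variable {α : Type*}

lemma shift_iterate_apply (n : ℕ) (ω : ℕ → α) (i : ℕ) : shift^[n] ω i = ω (i + n) := by
  induction n generalizing ω with
  | zero => rfl
  | succ n ih => rw [Function.iterate_succ_apply, ih]; rfl

lemma shift_iterate (n : ℕ) : (shift^[n] : (ℕ → α) → ℕ → α) = fun ω i => ω (i + n) :=
  funext fun ω => funext fun i => shift_iterate_apply n ω i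

variable [MeasurableSpace α]

lemma measurable_shift : Measurable (shift : (ℕ → α) → ℕ → α) :=
  measurable_pi_lambda _ fun i => measurable_pi_apply (i + 1)

/-- The σ-algebra generated by the coordinates with index in `S`. -/
@[reducible] def coordSigma (S : Set ℕ) : MeasurableSpace (ℕ → α) :=
  ⨆ i ∈ S, MeasurableSpace.comap (fun ω : ℕ → α => ω i) inferInstance

lemma coordSigma_le (S : Set ℕ) : coordSigma S ≤ (MeasurableSpace.pi : MeasurableSpace (ℕ → α)) :=
  iSup₂_le fun i _ => (measurable_pi_apply i).comap_le

lemma measurable_eval_coordSigma {S : Set ℕ} {i : ℕ} (hi : i ∈ S) :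
    Measurable[coordSigma S] fun ω : ℕ → α => ω i :=
  (comap_measurable _).mono (le_iSup₂_of_le i hi le_rfl) le_rfl

lemma measurable_shift_iterate_coordSigma (n : ℕ) :
    Measurable[coordSigma (Ici n)] (shift^[n] : (ℕ → α) → ℕ → α) := by
  rw [shift_iterate]
  exact @measurable_pi_lambda _ _ _ (_) _ _ fun i =>
    measurable_eval_coordSigma (Nat.le_add_left n i)

variable {ρ : Measure α} [IsProbabilityMeasure ρ]

lemma measurePreserving_shift :
    MeasurePreserving shift (Measure.infinitePi fun _ : ℕ => ρ)
      (Measure.infinitePi fun _ : ℕ => ρ) :=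
  ⟨measurable_shift, Measure.map_infinitePi_infinitePi_of_inj (P := fun _ : ℕ => ρ)
    (add_left_injective 1)⟩

lemma indep_coordSigma {S T : Set ℕ} (hST : Disjoint S T) :
    ProbabilityTheory.Indep (coordSigma S) (coordSigma T)
      (Measure.infinitePi fun _ : ℕ => ρ) :=
  ProbabilityTheory.indep_iSup_of_disjoint (fun i => (measurable_pi_apply i).comap_le)
    (ProbabilityTheory.iIndepFun_infinitePi (P := fun _ : ℕ => ρ) fun _ => measurable_id) hST

lemma indepFun_shift_iterate {β : Type*} [MeasurableSpace β] {n : ℕ} {f : (ℕ → α) → β}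
    (hf : Measurable[coordSigma (Iio n)] f) :
    ProbabilityTheory.IndepFun f (shift^[n]) (Measure.infinitePi fun _ : ℕ => ρ) :=
  (ProbabilityTheory.IndepFun_iff_Indep _ _ _).2 <|
    ProbabilityTheory.indep_of_indep_of_le_left
      (ProbabilityTheory.indep_of_indep_of_le_right
        (indep_coordSigma (Set.Iio_disjoint_Ici le_rfl))
        (measurable_shift_iterate_coordSigma n).comap_le)
      hf.comap_le

/-- Kolmogorov's zero-one law: a shift-invariant event is a tail event. -/
lemma ergodic_shift : Ergodic shift (Measure.infinitePi fun _ : ℕ => ρ) := by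
  refine ⟨measurePreserving_shift, ⟨fun B hB hinv => ?_⟩⟩
  have hinv_iterate : ∀ n, shift^[n] ⁻¹' B = B := fun n => by
    rw [Set.preimage_iterate_eq]
    exact Function.iterate_fixed hinv n
  have htail : MeasurableSet[limsup (fun i : ℕ =>
      MeasurableSpace.comap (fun ω : ℕ → α => ω i) inferInstance) atTop] B := by
    rw [Filter.limsup_eq_iInf_iSup_of_nat, MeasurableSpace.measurableSet_iInf]
    intro n
    have := measurable_shift_iterate_coordSigma n hB
    rwa [hinv_iterate] at this
  have h01 := ProbabilityTheory.measure_zero_or_one_of_measurableSet_limsup_atTop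
    (fun i => (measurable_pi_apply i).comap_le)
    (ProbabilityTheory.iIndepFun_infinitePi (P := fun _ : ℕ => ρ) fun _ => measurable_id) htail
  rw [eventuallyConst_set']
  rcases h01 with h | h
  · exact Or.inl (ae_eq_empty.2 h)
  · exact Or.inr (ae_eq_univ.2 ((prob_compl_eq_zero_iff hB).2 h))

end Shift

section Walk

variable {G H : Type*} [Group G] [Group H]

lemma walk_zero (ω : ℕ → G) : walk ω 0 = 1 := by simp [walk]

lemma walk_succ (ω : ℕ → G) (n : ℕ) : walk ω (n + 1) = walk ω n * ω n := by
  simp [walk, List.range_succ]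

lemma walk_one (ω : ℕ → G) : walk ω 1 = ω 0 := by simp [walk]

lemma walk_add (ω : ℕ → G) (n m : ℕ) :
    walk ω (n + m) = walk ω n * walk (shift^[n] ω) m := by
  induction m with
  | zero => simp [walk_zero]
  | succ k ih => rw [← add_assoc, walk_succ, ih, walk_succ, mul_assoc, shift_iterate_apply,
      add_comm n k]

lemma walk_map (φ : G →* H) (ω : ℕ → G) (n : ℕ) : walk (fun i => φ (ω i)) n = φ (walk ω n) := by
  induction n with
  | zero => simp [walk_zero]
  | succ k ih => rw [walk_succ, walk_succ, ih, map_mul]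

lemma measurable_map_increments [MeasurableSpace G] [DiscreteMeasurableSpace G]
    [MeasurableSpace H] (φ : G →* H) : Measurable fun (ω : ℕ → G) i => φ (ω i) :=
  measurable_pi_lambda _ fun i => Measurable.of_discrete.comp (measurable_pi_apply i)

variable [Countable G] [MeasurableSpace G] [DiscreteMeasurableSpace G]

lemma measurable_walk_coordSigma (n : ℕ) :
    Measurable[coordSigma (Iio n)]
      fun ω : ℕ → G => walk ω n := by
  suffices H : ∀ k ≤ n, Measurable[coordSigma (Iio n)] fun ω : ℕ → G => walk ω k from
    H n le_rfl
  intro k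
  induction k with
  | zero => exact fun _ => by simp only [walk_zero]; exact measurable_const
  | succ k ih =>
    intro hk
    simp only [walk_succ]
    have hmul : Measurable fun q : G × G => q.1 * q.2 := Measurable.of_discrete
    refine hmul.comp (Measurable.prodMk (ih (Nat.le_of_succ_le hk)) ?_)
    exact measurable_eval_coordSigma hk

lemma measurable_walk (n : ℕ) : Measurable fun ω : ℕ → G => walk ω n :=
  (measurable_walk_coordSigma n).mono (coordSigma_le _) le_rfl

end Walk

namespace IsRWMeasure

section Law

variable {G : Type*} [Group G] [MeasurableSpace G] {p : G → ℝ≥0∞} {P : Measure (ℕ → G)}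

lemma measure_eval_zero (hP : IsRWMeasure p P) (g : G) : P {ω | ω 0 = g} = p g := by
  simpa using hP.2 1 fun _ => g

lemma isProbabilityMeasure_map_eval_zero (hP : IsRWMeasure p P) :
    IsProbabilityMeasure (P.map (· 0)) :=
  have := hP.1
  Measure.isProbabilityMeasure_map (measurable_pi_apply 0).aemeasurable

lemma map_eval_zero_singleton [MeasurableSingletonClass G] (hP : IsRWMeasure p P) (g : G) :
    P.map (· 0) {g} = p g := by
  rw [Measure.map_apply (measurable_pi_apply 0) (measurableSet_singleton g)]
  exact hP.measure_eval_zero g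

variable [Countable G] [DiscreteMeasurableSpace G]

lemma eq_infinitePi (hP : IsRWMeasure p P) :
    P = Measure.infinitePi fun _ : ℕ => P.map (· 0) := by
  have := hP.1
  have := hP.isProbabilityMeasure_map_eval_zero
  refine IsProjectiveLimit.unique ((isProjectiveLimit_nat_iff
    (isProjectiveMeasureFamily_pi fun _ => P.map (· 0)) P).2 fun n => ?_)
    (Measure.isProjectiveLimit_infinitePi _)
  refine Measure.ext_of_singleton fun u => ?_
  let g : ℕ → G := fun i => if h : i ∈ Finset.Iic n then u ⟨i, h⟩ else 1
  have hg : ∀ i : Finset.Iic n, g i = u i := fun i => dif_pos i.2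
  have hcyl : Preorder.frestrictLe (π := fun _ => G) n ⁻¹' {u} =
      {ω : ℕ → G | ∀ i < n + 1, ω i = g i} := by
    ext ω
    simp only [mem_preimage, mem_singleton_iff, funext_iff, Subtype.forall,
      Preorder.frestrictLe_apply, mem_ofPred_eq, Finset.mem_Iic, Nat.lt_succ_iff]
    exact forall₂_congr fun i hi => by rw [hg ⟨i, Finset.mem_Iic.2 hi⟩]
  have hrange : Finset.range (n + 1) = Finset.Iic n := by
    ext i
    simp
  rw [Measure.map_apply (by fun_prop) (measurableSet_singleton u), hcyl, hP.2,
    Measure.pi_singleton, hrange, ← Finset.prod_coe_sort]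
  exact Finset.prod_congr rfl fun i _ => by rw [hg, hP.map_eval_zero_singleton]

protected lemma measurePreserving_shift (hP : IsRWMeasure p P) : MeasurePreserving shift P P := by
  have := hP.isProbabilityMeasure_map_eval_zero
  rw [hP.eq_infinitePi]
  exact HMDim.measurePreserving_shift

protected lemma ergodic_shift (hP : IsRWMeasure p P) : Ergodic shift P := by
  have := hP.isProbabilityMeasure_map_eval_zero
  rw [hP.eq_infinitePi]
  exact HMDim.ergodic_shift

lemma indepFun_walk_shift (hP : IsRWMeasure p P) (n : ℕ) :
    ProbabilityTheory.IndepFun (fun ω => walk ω n) (shift^[n]) P := by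
  have := hP.isProbabilityMeasure_map_eval_zero
  rw [hP.eq_infinitePi]
  exact indepFun_shift_iterate (measurable_walk_coordSigma n)

lemma ae_shift_iterate (hP : IsRWMeasure p P) {Q : (ℕ → G) → Prop} (hQ : ∀ᵐ ω ∂P, Q ω) (n : ℕ) :
    ∀ᵐ ω ∂P, Q (shift^[n] ω) :=
  (hP.measurePreserving_shift.iterate n).quasiMeasurePreserving.ae hQ

lemma measure_walk_inter_shift (hP : IsRWMeasure p P) (n : ℕ) (x : G) {B : Set (ℕ → G)}
    (hB : MeasurableSet B) :
    P ({ω | walk ω n = x} ∩ shift^[n] ⁻¹' B) = P {ω | walk ω n = x} * P B := by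
  rw [← (hP.measurePreserving_shift.iterate n).measure_preimage hB.nullMeasurableSet]
  exact (hP.indepFun_walk_shift n).measure_inter_preimage_eq_mul {x} B
    (measurableSet_singleton x) hB

lemma tsum_measure_walk_inter (P : Measure (ℕ → G)) (n : ℕ) (E : Set (ℕ → G)) :
    ∑' x, P ({ω | walk ω n = x} ∩ E) = P E := by
  have hfiber : ∀ x, MeasurableSet {ω : ℕ → G | walk ω n = x} := fun x =>
    measurable_walk n (measurableSet_singleton x)
  calc ∑' x, P ({ω | walk ω n = x} ∩ E)
      = ∑' x, P.restrict E {ω | walk ω n = x} :=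
        tsum_congr fun x => (Measure.restrict_apply (hfiber x)).symm
    _ = P.restrict E (⋃ x, {ω | walk ω n = x}) :=
        (measure_iUnion (fun x y hxy => Set.disjoint_left.2 fun ω hx hy => hxy (hx.symm.trans hy))
          hfiber).symm
    _ = P E := by
        have : ⋃ x, {ω : ℕ → G | walk ω n = x} = univ := by
          ext ω
          simp
        rw [this, Measure.restrict_apply_univ]

lemma measure_walk_eq (hP : IsRWMeasure p P) (n : ℕ) (x : G) :
    P {ω | walk ω n = x} = piN p n x := by
  have := hP.1
  induction n generalizing x with
  | zero =>
    by_cases hx : x = 1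
    · simp [walk_zero, piN, hx]
    · simp [walk_zero, piN, hx, Ne.symm hx]
  | succ n ih =>
    have hstep : ∀ y, P ({ω | walk ω n = y} ∩ {ω | walk ω (n + 1) = x}) =
        piN p n y * p (y⁻¹ * x) := fun y => by
      have hset : {ω | walk ω n = y} ∩ {ω | walk ω (n + 1) = x} =
          {ω | walk ω n = y} ∩ shift^[n] ⁻¹' {ω | ω 0 = y⁻¹ * x} := by
        ext ω
        simp only [mem_inter_iff, mem_ofPred_eq, mem_preimage, walk_succ, shift_iterate_apply,
          zero_add]
        exact and_congr_right fun h => by rw [h, eq_inv_mul_iff_mul_eq]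
      have hmeas : MeasurableSet {ω : ℕ → G | ω 0 = y⁻¹ * x} :=
        measurable_pi_apply 0 (measurableSet_singleton _)
      rw [hset, hP.measure_walk_inter_shift n y hmeas, ih, hP.measure_eval_zero]
    rw [← tsum_measure_walk_inter P n, tsum_congr hstep]
    rfl

lemma piN_one (hP : IsRWMeasure p P) (x : G) : piN p 1 x = p x := by
  rw [← hP.measure_walk_eq, ← hP.measure_eval_zero]
  simp only [walk_one]

lemma tsum_piN (hP : IsRWMeasure p P) (n : ℕ) : ∑' x, piN p n x = 1 := by
  have := hP.1
  rw [← measure_univ (μ := P), ← tsum_measure_walk_inter P n]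
  simp only [inter_univ, hP.measure_walk_eq]

lemma isProb (hP : IsRWMeasure p P) : IsProb p := by
  rw [IsProb, ← hP.tsum_piN 1]
  exact tsum_congr fun x => (hP.piN_one x).symm

lemma piN_le_one (hP : IsRWMeasure p P) (n : ℕ) (x : G) : piN p n x ≤ 1 :=
  hP.tsum_piN n ▸ ENNReal.le_tsum x

lemma piN_ne_top (hP : IsRWMeasure p P) (n : ℕ) (x : G) : piN p n x ≠ ∞ :=
  ne_top_of_le_ne_top ENNReal.one_ne_top (hP.piN_le_one n x)

lemma piN_mul_le (hP : IsRWMeasure p P) (n m : ℕ) (x y : G) :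
    piN p n x * piN p m y ≤ piN p (n + m) (x * y) := by
  have hmeas : MeasurableSet {ω : ℕ → G | walk ω m = y} :=
    measurable_walk m (measurableSet_singleton y)
  rw [← hP.measure_walk_eq n, ← hP.measure_walk_eq m, ← hP.measure_walk_eq,
    ← hP.measure_walk_inter_shift n x hmeas]
  refine measure_mono fun ω ⟨hx, hy⟩ => ?_
  simp only [mem_ofPred_eq, mem_preimage] at hx hy ⊢
  rw [walk_add, hx, hy]

lemma ae_piN_walk_ne_zero (hP : IsRWMeasure p P) :
    ∀ᵐ ω ∂P, ∀ k n, piN p n (walk (shift^[k] ω) n) ≠ 0 := by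
  have hn : ∀ n, ∀ᵐ ω ∂P, piN p n (walk ω n) ≠ 0 := fun n => by
    rw [ae_iff]
    simp only [ne_eq, not_not]
    rw [← tsum_measure_walk_inter P n, ENNReal.tsum_eq_zero]
    intro x
    by_cases hx : piN p n x = 0
    · exact measure_mono_null inter_subset_left ((hP.measure_walk_eq n x).trans hx)
    · have : {ω : ℕ → G | walk ω n = x} ∩ {ω | piN p n (walk ω n) = 0} = ∅ := by
        ext ω
        simp only [mem_inter_iff, mem_ofPred_eq, mem_empty_iff_false, iff_false, not_and]
        rintro rfl
        exact hx
      rw [this, measure_empty]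
  exact ae_all_iff.2 fun k => ae_all_iff.2 fun n => hP.ae_shift_iterate (hn n) k

lemma lintegral_walk (hP : IsRWMeasure p P) (n : ℕ) (F : G → ℝ≥0∞) :
    ∫⁻ ω, F (walk ω n) ∂P = ∑' x, piN p n x * F x := by
  rw [← lintegral_map (μ := P) (f := F) (g := fun ω => walk ω n) Measurable.of_discrete
    (measurable_walk n), lintegral_countable']
  refine tsum_congr fun x => ?_
  rw [Measure.map_apply (measurable_walk n) (measurableSet_singleton x), mul_comm,
    ← hP.measure_walk_eq]
  rfl

lemma integral_walk (hP : IsRWMeasure p P) (n : ℕ) {F : G → ℝ}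
    (hF : Integrable (fun ω => F (walk ω n)) P) :
    ∫ ω, F (walk ω n) ∂P = ∑' x, (piN p n x).toReal * F x := by
  have hmeas := (measurable_walk (G := G) n).aemeasurable (μ := P)
  have hF' : Integrable F (P.map fun ω => walk ω n) :=
    (integrable_map_measure (Measurable.of_discrete).aestronglyMeasurable hmeas).2 hF
  rw [← integral_map hmeas hF'.aestronglyMeasurable, integral_countable hF']
  refine tsum_congr fun x => ?_
  rw [smul_eq_mul, Measure.real, Measure.map_apply (measurable_walk n) (measurableSet_singleton x),
    ← hP.measure_walk_eq]
  rfl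

end Law

lemma map {G H : Type*} [Group G] [Countable G] [MeasurableSpace G] [DiscreteMeasurableSpace G]
    [Group H] [Countable H] [MeasurableSpace H] [DiscreteMeasurableSpace H]
    {p : G → ℝ≥0∞} {P : Measure (ℕ → G)} (hP : IsRWMeasure p P) (φ : G →* H) :
    IsRWMeasure (marginalStar p φ) (P.map fun ω i => φ (ω i)) := by
  have hφ : Measurable φ := Measurable.of_discrete
  have := hP.1
  have := hP.isProbabilityMeasure_map_eval_zero
  have := Measure.isProbabilityMeasure_map (μ := P.map (· 0)) hφ.aemeasurable
  refine ⟨Measure.isProbabilityMeasure_map (measurable_map_increments φ).aemeasurable,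
    fun n h => ?_⟩
  have hstep : ∀ a, (P.map (· 0)).map φ {a} = marginalStar p φ a := fun a => by
    rw [Measure.map_apply hφ (measurableSet_singleton a),
      ← Measure.tsum_indicator_apply_singleton _ _ (hφ (measurableSet_singleton a))]
    simp only [indicator_apply, mem_preimage, mem_singleton_iff, hP.map_eval_zero_singleton]
    rfl
  have hcyl : {ω : ℕ → H | ∀ i < n, ω i = h i} = (Finset.range n : Set ℕ).pi fun i => {h i} := by
    ext ω
    simp
  rw [hP.eq_infinitePi, Measure.infinitePi_map_pi (fun _ : ℕ => P.map (· 0)) fun _ => hφ, hcyl,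
    Measure.infinitePi_pi _ fun _ _ => measurableSet_singleton _]
  exact Finset.prod_congr rfl fun i _ => hstep (h i)

end IsRWMeasure

/-! ### Kingman's subadditive ergodic theorem -/

section Subadditive

variable {x : ℕ → ℕ → ℝ}

lemma le_sum_Ico_of_subadditive (hx0 : ∀ k, x 0 k = 0)
    (hx : ∀ n m k, x (n + m) k ≤ x n k + x m (k + n)) (M k : ℕ) :
    x M k ≤ ∑ i ∈ Finset.Ico k (k + M), x 1 i := by
  induction M with
  | zero => simp [hx0]
  | succ M ih =>
    rw [← add_assoc, Finset.sum_Ico_succ_top (Nat.le_add_right k M)]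
    exact (hx M 1 k).trans (by gcongr)

/-- Cover `[0, N)` greedily from the left, by intervals on which `x` is nonpositive where there is
one of length at most `L`, and by single steps elsewhere. Such an interval sticks out of `[0, N)`
only if it starts within distance `L` of `N`. -/
lemma le_sum_add_sum_of_subadditive {y z : ℕ → ℝ} {L : ℕ} (hx0 : ∀ k, x 0 k = 0)
    (hx : ∀ n m k, x (n + m) k ≤ x n k + x m (k + n)) (hy : 0 ≤ y) (hz : 0 ≤ z)
    (hxz : ∀ k, x 1 k ≤ z k)
    (hgood : ∀ k, x 1 k ≤ y k ∨ ∃ n, 1 ≤ n ∧ n ≤ L ∧ x n k ≤ 0) (N : ℕ) :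
    x N 0 ≤ ∑ i ∈ Finset.range N, y i + ∑ i ∈ Finset.Ico (N - L) N, z i := by
  suffices H : ∀ M k, k + M = N →
      x M k ≤ ∑ i ∈ Finset.Ico k N, y i + ∑ i ∈ Finset.Ico (N - L) N, z i by
    simpa using H N 0 (zero_add N)
  have hY : ∀ i j, i ≤ j → ∑ s ∈ Finset.Ico j N, y s ≤ ∑ s ∈ Finset.Ico i N, y s := fun i j hij =>
    Finset.sum_le_sum_of_subset_of_nonneg (Finset.Ico_subset_Ico_left hij) fun s _ _ => hy s
  have hY0 : ∀ i, 0 ≤ ∑ s ∈ Finset.Ico i N, y s := fun i => Finset.sum_nonneg fun s _ => hy s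
  intro M
  induction M using Nat.strong_induction_on with
  | _ M ih =>
    intro k hk
    obtain rfl | hM := Nat.eq_zero_or_pos M
    · rw [hx0]
      exact add_nonneg (hY0 k) (Finset.sum_nonneg fun s _ => hz s)
    rcases hgood k with hstep | ⟨n, hn1, hnL, hn⟩
    · have hrest := ih (M - 1) (by omega) (k + 1) (by omega)
      have hsplit := hx 1 (M - 1) k
      rw [Nat.add_sub_cancel' hM] at hsplit
      rw [Finset.sum_eq_sum_Ico_succ_bot (by omega : k < N)]
      linarith
    · obtain hnM | hMn := le_or_gt n M
      · have hrest := ih (M - n) (by omega) (k + n) (by omega)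
        have hsplit := hx n (M - n) k
        rw [Nat.add_sub_cancel' hnM] at hsplit
        linarith [hY k (k + n) (Nat.le_add_right k n)]
      · calc x M k ≤ ∑ i ∈ Finset.Ico k N, x 1 i := hk ▸ le_sum_Ico_of_subadditive hx0 hx M k
          _ ≤ ∑ i ∈ Finset.Ico k N, z i := Finset.sum_le_sum fun i _ => hxz i
          _ ≤ ∑ i ∈ Finset.Ico (N - L) N, z i := Finset.sum_le_sum_of_subset_of_nonneg
              (Finset.Ico_subset_Ico_left (by omega)) fun s _ _ => hz s
          _ ≤ _ := le_add_of_nonneg_left (hY0 k)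

/-- The sums `∑ r < N, x (n + r) 0` grow by at most `x N n` when `n` becomes `n + 1`. -/
lemma mul_le_sum_of_subadditive (hx : ∀ n m k, x (n + m) k ≤ x n k + x m (k + n)) (N n : ℕ) :
    N * x (n + N) 0 ≤ ∑ r ∈ Finset.range N, x r 0 + ∑ s ∈ Finset.range n, x N s +
      ∑ r ∈ Finset.range N, x (N - r) (n + r) := by
  have htel : ∑ r ∈ Finset.range N, x (n + r) 0 ≤
      ∑ r ∈ Finset.range N, x r 0 + ∑ s ∈ Finset.range n, x N s := by
    induction n with
    | zero => simp
    | succ n ih =>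
      have hshift : ∑ r ∈ Finset.range N, x (n + 1 + r) 0 =
          ∑ r ∈ Finset.range N, x (n + r) 0 + x (n + N) 0 - x n 0 := by
        rw [← Finset.sum_range_succ (fun r => x (n + r) 0), Finset.sum_range_succ', add_zero,
          add_sub_cancel_right]
        exact Finset.sum_congr rfl fun r _ => by rw [add_assoc, add_comm 1 r]
      have := hx n N 0
      rw [zero_add] at this
      rw [Finset.sum_range_succ]
      linarith
  have hlast : ∀ r ∈ Finset.range N, x (n + N) 0 ≤ x (n + r) 0 + x (N - r) (n + r) := fun r hr => by
    have := hx (n + r) (N - r) 0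
    rwa [zero_add, add_assoc, Nat.add_sub_cancel' (Finset.mem_range.1 hr).le] at this
  have hsum := Finset.sum_le_sum hlast
  rw [Finset.sum_const, Finset.card_range, nsmul_eq_mul, Finset.sum_add_distrib] at hsum
  linarith

end Subadditive

section Ergodic

variable {Ω : Type*} [MeasurableSpace Ω] {μ : Measure Ω} {T : Ω → Ω}

/-- A subadditive process over the dynamical system `T`: the cocycle `a` of Kingman's theorem. -/
structure IsSubadditiveProcess (T : Ω → Ω) (μ : Measure Ω) (a : ℕ → Ω → ℝ) : Prop where
  zero : ∀ ω, a 0 ω = 0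
  integrable : ∀ n, Integrable (a n) μ
  subadd : ∀ᵐ ω ∂μ, ∀ n m, a (n + m) ω ≤ a n ω + a m (T^[n] ω)

lemma integrable_comp_iterate (hT : MeasurePreserving T μ μ) {f : Ω → ℝ} (hf : Integrable f μ)
    (k : ℕ) : Integrable (fun ω => f (T^[k] ω)) μ :=
  (hT.iterate k).integrable_comp_of_integrable hf

lemma integral_comp_iterate (hT : MeasurePreserving T μ μ) {f : Ω → ℝ}
    (hf : AEStronglyMeasurable f μ) (k : ℕ) : ∫ ω, f (T^[k] ω) ∂μ = ∫ ω, f ω ∂μ := by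
  have hk := hT.iterate k
  rw [← integral_map hk.measurable.aemeasurable (hk.map_eq.symm ▸ hf), hk.map_eq]

namespace IsSubadditiveProcess

variable {a : ℕ → Ω → ℝ} {γ : ℝ}

lemma sub_mul (ha : IsSubadditiveProcess T μ a) [IsFiniteMeasure μ] (c : ℝ) :
    IsSubadditiveProcess T μ fun n ω => a n ω - c * n where
  zero ω := by simp [ha.zero]
  integrable n := (ha.integrable n).sub (integrable_const _)
  subadd := by
    filter_upwards [ha.subadd] with ω hω n m
    have := hω n m
    push_cast
    linarith

lemma ae_subadd_iterate (ha : IsSubadditiveProcess T μ a) (hT : MeasurePreserving T μ μ) :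
    ∀ᵐ ω ∂μ, ∀ n m k, a (n + m) (T^[k] ω) ≤ a n (T^[k] ω) + a m (T^[k + n] ω) := by
  have hk : ∀ᵐ ω ∂μ, ∀ k n m,
      a (n + m) (T^[k] ω) ≤ a n (T^[k] ω) + a m (T^[n] (T^[k] ω)) :=
    ae_all_iff.2 fun k => (hT.iterate k).quasiMeasurePreserving.ae ha.subadd
  filter_upwards [hk] with ω hω n m k
  have := hω k n m
  rwa [← Function.iterate_add_apply, add_comm n k] at this

lemma of_nonneg (hT : MeasurePreserving T μ μ) (zero : ∀ ω, a 0 ω = 0) (nonneg : ∀ n ω, 0 ≤ a n ω)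
    (hmeas : ∀ n, AEStronglyMeasurable (a n) μ) (hint : Integrable (a 1) μ)
    (subadd : ∀ᵐ ω ∂μ, ∀ n m, a (n + m) ω ≤ a n ω + a m (T^[n] ω)) :
    IsSubadditiveProcess T μ a where
  zero := zero
  subadd := subadd
  integrable n := by
    induction n with
    | zero => exact (integrable_zero Ω ℝ μ).congr (Eventually.of_forall fun ω => (zero ω).symm)
    | succ n ih =>
      refine (ih.add (integrable_comp_iterate hT hint n)).mono' (hmeas _) ?_
      filter_upwards [subadd] with ω hω
      rw [Real.norm_of_nonneg (nonneg _ _)]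
      exact hω n 1

lemma exists_tendsto_of_nonneg (ha : IsSubadditiveProcess T μ a) (hT : MeasurePreserving T μ μ)
    (ha0 : ∀ n ω, 0 ≤ a n ω) :
    ∃ γ, Tendsto (fun n : ℕ => (∫ ω, a n ω ∂μ) / n) atTop (𝓝 γ) := by
  have hsub : Subadditive fun n => ∫ ω, a n ω ∂μ := fun n m => by
    beta_reduce
    rw [← integral_comp_iterate hT (ha.integrable m).1 n,
      ← integral_add (ha.integrable n) (integrable_comp_iterate hT (ha.integrable m) n)]
    exact integral_mono_ae (ha.integrable _)
      ((ha.integrable n).add (integrable_comp_iterate hT (ha.integrable m) n))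
      (ha.subadd.mono fun ω hω => hω n m)
  refine ⟨hsub.lim, hsub.tendsto_lim ⟨0, ?_⟩⟩
  rintro _ ⟨n, rfl⟩
  exact div_nonneg (integral_nonneg (ha0 n)) n.cast_nonneg

lemma integral_le_of_bad (ha : IsSubadditiveProcess T μ a) (hT : MeasurePreserving T μ μ) {L : ℕ}
    {B : Set Ω} (hB : NullMeasurableSet B μ)
    (hgood : ∀ ω ∉ B, ∃ n, 1 ≤ n ∧ n ≤ L ∧ a n ω ≤ 0) (N : ℕ) :
    ∫ ω, a N ω ∂μ ≤ N * ∫ ω in B, max (a 1 ω) 0 ∂μ + L * ∫ ω, max (a 1 ω) 0 ∂μ := by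
  set z : Ω → ℝ := fun ω => max (a 1 ω) 0
  have hz : Integrable z μ := (ha.integrable 1).pos_part
  have hy : Integrable (B.indicator z) μ := hz.indicator₀ hB
  have hz0 : 0 ≤ z := fun ω => le_max_right _ _
  have hbound : ∀ᵐ ω ∂μ, a N ω ≤ ∑ i ∈ Finset.range N, B.indicator z (T^[i] ω) +
      ∑ i ∈ Finset.Ico (N - L) N, z (T^[i] ω) := by
    filter_upwards [ha.ae_subadd_iterate hT] with ω hω
    refine le_sum_add_sum_of_subadditive (x := fun n k => a n (T^[k] ω)) (L := L)
      (y := fun i => B.indicator z (T^[i] ω)) (fun k => ha.zero _) hω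
      (fun i => indicator_nonneg (fun _ _ => hz0 _) _) (fun i => hz0 _) (fun k => le_max_left _ _)
      (fun k => ?_) N
    by_cases hk : T^[k] ω ∈ B
    · exact Or.inl ((le_max_left _ _).trans_eq (indicator_of_mem hk z).symm)
    · exact Or.inr (hgood _ hk)
  have hyi := fun i (_ : i ∈ Finset.range N) => integrable_comp_iterate hT hy i
  have hzi := fun i (_ : i ∈ Finset.Ico (N - L) N) => integrable_comp_iterate hT hz i
  calc ∫ ω, a N ω ∂μ
      ≤ ∫ ω, (∑ i ∈ Finset.range N, B.indicator z (T^[i] ω) +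
          ∑ i ∈ Finset.Ico (N - L) N, z (T^[i] ω)) ∂μ :=
        integral_mono_ae (ha.integrable N)
          ((integrable_finsetSum _ hyi).add (integrable_finsetSum _ hzi)) hbound
    _ = N * ∫ ω in B, z ω ∂μ + (N - (N - L) : ℕ) * ∫ ω, z ω ∂μ := by
        rw [integral_add (integrable_finsetSum _ hyi) (integrable_finsetSum _ hzi),
          integral_finsetSum _ hyi, integral_finsetSum _ hzi]
        simp only [integral_comp_iterate hT hy.1, integral_comp_iterate hT hz.1,
          integral_indicator₀ hB, Finset.sum_const, Finset.card_range, Nat.card_Ico, nsmul_eq_mul]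
    _ ≤ _ := by
        have : ((N - (N - L) : ℕ) : ℝ) ≤ L := by exact_mod_cast Nat.sub_le_of_le_add (by omega)
        have := integral_nonneg (μ := μ) hz0
        gcongr

/-- The points from which no `a n` with `1 ≤ n ≤ L` is nonpositive form a set of measure tending
to `0` as `L → ∞`, so the linear term of the bound in `integral_le_of_bad` is negligible. -/
lemma limit_nonpos (ha : IsSubadditiveProcess T μ a) [IsFiniteMeasure μ]
    (hT : MeasurePreserving T μ μ)
    (hγ : Tendsto (fun n : ℕ => (∫ ω, a n ω ∂μ) / n) atTop (𝓝 γ))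
    (hex : ∀ᵐ ω ∂μ, ∃ n, 1 ≤ n ∧ a n ω ≤ 0) : γ ≤ 0 := by
  set B : ℕ → Set Ω := fun L => {ω | ∀ n, 1 ≤ n → n ≤ L → 0 < a n ω}
  have hBmeas : ∀ L, NullMeasurableSet (B L) μ := fun L => by
    simp only [B, ofPred_forall]
    exact .iInter fun n => .iInter fun _ => .iInter fun _ =>
      nullMeasurableSet_lt aemeasurable_const (ha.integrable n).aemeasurable
  have hBanti : Antitone B := fun L L' h ω hω n h1 hn => hω n h1 (hn.trans h)
  have hBnull : μ (⋂ L, B L) = 0 := by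
    refine measure_mono_null (fun ω hω => ?_) (ae_iff.1 hex)
    rintro ⟨n, hn1, hn⟩
    exact (mem_iInter.1 hω n n hn1 le_rfl).not_ge hn
  have hBlim : Tendsto (fun L => ∫ ω in B L, max (a 1 ω) 0 ∂μ) atTop (𝓝 0) := by
    refine (ha.integrable 1).pos_part.tendsto_setIntegral_nhds_zero ?_
    have := tendsto_measure_iInter_atTop hBmeas hBanti ⟨0, measure_ne_top μ _⟩
    rwa [hBnull] at this
  refine ge_of_tendsto' hBlim fun L => ?_
  set β := ∫ ω in B L, max (a 1 ω) 0 ∂μ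
  set C := ∫ ω, max (a 1 ω) 0 ∂μ
  have hlim : Tendsto (fun n : ℕ => β + L * C / n) atTop (𝓝 β) := by
    simpa using tendsto_const_nhds.add (tendsto_const_div_atTop_nhds_zero_nat (L * C))
  refine le_of_tendsto_of_tendsto hγ hlim ?_
  filter_upwards [eventually_gt_atTop 0] with n hn
  have hn' : (0 : ℝ) < n := Nat.cast_pos.2 hn
  have hgood : ∀ ω ∉ B L, ∃ n, 1 ≤ n ∧ n ≤ L ∧ a n ω ≤ 0 := fun ω hω => by
    simpa [B] using hω
  rw [div_le_iff₀ hn', add_mul, div_mul_cancel₀ _ hn'.ne', mul_comm β]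
  exact ha.integral_le_of_bad hT (hBmeas L) hgood n

/-- By ergodicity, the event `liminf a n / n ≤ c` has measure `0` or full measure. -/
lemma ae_eventually_mul_le (ha : IsSubadditiveProcess T μ a) [IsProbabilityMeasure μ]
    (hT : Ergodic T μ) (hγ : Tendsto (fun n : ℕ => (∫ ω, a n ω ∂μ) / n) atTop (𝓝 γ))
    {c : ℝ} (hc : c < γ) : ∀ᵐ ω ∂μ, ∀ᶠ n : ℕ in atTop, c * n ≤ a n ω := by
  obtain ⟨b, hcb, hbγ⟩ := exists_between hc
  set E : Set Ω := {ω | ∀ d : ℚ, c < d → ∃ᶠ n : ℕ in atTop, a n ω < d * n}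
  have hEmeas : NullMeasurableSet E μ := by
    simp only [E, frequently_atTop, ofPred_forall, ofPred_exists, ofPred_and]
    exact .iInter fun d => .iInter fun _ => .iInter fun N => .iUnion fun n =>
      (NullMeasurableSet.const _).inter
        (nullMeasurableSet_lt (ha.integrable n).aemeasurable aemeasurable_const)
  have hEinv : T ⁻¹' E ≤ᵐ[μ] E := by
    filter_upwards [ha.subadd] with ω hω hTω d hd
    obtain ⟨d', hcd', hd'd⟩ := exists_rat_btwn hd
    have hlarge : ∀ᶠ n : ℕ in atTop, a 1 ω - d ≤ (d - d') * n :=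
      (tendsto_natCast_atTop_atTop.const_mul_atTop (sub_pos.2 hd'd)).eventually_ge_atTop _
    have hfreq : ∃ᶠ n : ℕ in atTop, a (n + 1) ω < d * (n + 1 : ℕ) := by
      refine ((hTω d' hcd').and_eventually hlarge).mono fun n ⟨hn, hn'⟩ => ?_
      have := hω 1 n
      rw [add_comm 1 n, Function.iterate_one] at this
      push_cast
      linarith [hn, hn']
    exact (tendsto_add_atTop_nat 1).frequently hfreq
  rcases hT.ae_empty_or_univ_of_preimage_ae_le hEmeas hEinv with hE | hE
  · filter_upwards [hE.mem_iff] with ω hω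
    obtain ⟨d, hd, hn⟩ := by simpa [E] using hω
    filter_upwards [eventually_atTop.2 hn] with n hn
    exact (mul_le_mul_of_nonneg_right hd.le n.cast_nonneg).trans hn
  · have hlim : Tendsto (fun n : ℕ => (∫ ω, (a n ω - b * n) ∂μ) / n) atTop (𝓝 (γ - b)) := by
      refine (hγ.sub_const b).congr' ?_
      filter_upwards [eventually_gt_atTop 0] with n hn
      have hn' : (n : ℝ) ≠ 0 := Nat.cast_ne_zero.2 hn.ne'
      rw [integral_sub (ha.integrable n) (integrable_const _), integral_const]
      simp only [probReal_univ, one_smul]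
      field_simp
    have hnonpos := (ha.sub_mul b).limit_nonpos hT.toMeasurePreserving hlim (by
      obtain ⟨d, hcd, hdb⟩ := exists_rat_btwn hcb
      filter_upwards [hE.mem_iff] with ω hω
      obtain ⟨n, hn, hn1⟩ := (((hω.2 trivial) d hcd).and_eventually (eventually_ge_atTop 1)).exists
      refine ⟨n, hn1, sub_nonpos.2 (hn.le.trans ?_)⟩
      exact mul_le_mul_of_nonneg_right hdb.le n.cast_nonneg)
    linarith

end IsSubadditiveProcess

lemma isSubadditiveProcess_birkhoffSum (hT : MeasurePreserving T μ μ) {f : Ω → ℝ}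
    (hf : Integrable f μ) : IsSubadditiveProcess T μ (birkhoffSum T f) where
  zero ω := birkhoffSum_zero T f ω
  integrable _ := integrable_finsetSum _ fun k _ => integrable_comp_iterate hT hf k
  subadd := .of_forall fun ω n m => (birkhoffSum_add T f n m ω).le

lemma integral_birkhoffSum (hT : MeasurePreserving T μ μ) {f : Ω → ℝ}
    (hf : Integrable f μ) (n : ℕ) : ∫ ω, birkhoffSum T f n ω ∂μ = n * ∫ ω, f ω ∂μ := by
  simp only [birkhoffSum]
  rw [integral_finsetSum _ fun k _ => integrable_comp_iterate hT hf k]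
  simp [integral_comp_iterate hT hf.1]

lemma ae_eventually_mul_le_birkhoffSum [IsProbabilityMeasure μ] (hT : Ergodic T μ) {f : Ω → ℝ}
    (hf : Integrable f μ) {c : ℝ} (hc : c < ∫ ω, f ω ∂μ) :
    ∀ᵐ ω ∂μ, ∀ᶠ n : ℕ in atTop, c * n ≤ birkhoffSum T f n ω := by
  refine (isSubadditiveProcess_birkhoffSum hT.toMeasurePreserving hf).ae_eventually_mul_le hT
    (tendsto_const_nhds.congr' ?_) hc
  filter_upwards [eventually_ne_atTop 0] with n hn
  rw [integral_birkhoffSum hT.toMeasurePreserving hf,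
    mul_div_cancel_left₀ _ (Nat.cast_ne_zero.2 hn)]

lemma tendsto_add_natCast_div (k : ℕ) :
    Tendsto (fun n : ℕ => ((n + k : ℕ) : ℝ) / n) atTop (𝓝 1) := by
  have := (tendsto_const_div_atTop_nhds_zero_nat (k : ℝ)).const_add 1
  rw [add_zero] at this
  refine this.congr' ?_
  filter_upwards [eventually_ne_atTop 0] with n hn
  rw [Nat.cast_add, add_div, div_self (Nat.cast_ne_zero.2 hn)]

lemma tendsto_div_natCast_of_eventually {u : ℕ → ℝ} {γ : ℝ}
    (hlow : ∀ c : ℚ, c < γ → ∀ᶠ n : ℕ in atTop, c * n ≤ u n)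
    (hupp : ∀ c : ℚ, γ < c → ∀ᶠ n : ℕ in atTop, u n ≤ c * n) :
    Tendsto (fun n => u n / n) atTop (𝓝 γ) := by
  refine tendsto_order.2 ⟨fun b hb => ?_, fun b hb => ?_⟩
  · obtain ⟨c, hbc, hcγ⟩ := exists_rat_btwn hb
    filter_upwards [hlow c hcγ, eventually_gt_atTop 0] with n hn hn0
    exact hbc.trans_le ((le_div_iff₀ (Nat.cast_pos.2 hn0)).2 hn)
  · obtain ⟨c, hγc, hcb⟩ := exists_rat_btwn hb
    filter_upwards [hupp c hγc, eventually_gt_atTop 0] with n hn hn0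
    exact ((div_le_iff₀ (Nat.cast_pos.2 hn0)).2 hn).trans_lt hcb

/-- Birkhoff's theorem: apply the lower bound in Kingman's theorem to the Birkhoff sums of `f` and
of `-f`. -/
lemma ae_tendsto_birkhoffSum_div [IsProbabilityMeasure μ] (hT : Ergodic T μ) {f : Ω → ℝ}
    (hf : Integrable f μ) :
    ∀ᵐ ω ∂μ, Tendsto (fun n : ℕ => birkhoffSum T f n ω / n) atTop (𝓝 (∫ ω, f ω ∂μ)) := by
  have hlow : ∀ᵐ ω ∂μ, ∀ c : ℚ, c < ∫ ω, f ω ∂μ →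
      ∀ᶠ n : ℕ in atTop, c * n ≤ birkhoffSum T f n ω :=
    ae_all_iff.2 fun c => eventually_imp_distrib_left.2 fun hc =>
      ae_eventually_mul_le_birkhoffSum hT hf hc
  have hupp : ∀ᵐ ω ∂μ, ∀ c : ℚ, ∫ ω, f ω ∂μ < c →
      ∀ᶠ n : ℕ in atTop, -c * n ≤ birkhoffSum T (-f) n ω :=
    ae_all_iff.2 fun c => eventually_imp_distrib_left.2 fun hc =>
      ae_eventually_mul_le_birkhoffSum hT hf.neg (by simpa [integral_neg] using hc)
  filter_upwards [hlow, hupp] with ω hlow hupp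
  refine tendsto_div_natCast_of_eventually hlow fun c hc => ?_
  filter_upwards [hupp c hc] with n hn
  have hneg : birkhoffSum T (-f) n ω = -birkhoffSum T f n ω := by simp [birkhoffSum]
  linarith

lemma ae_tendsto_comp_iterate_div [IsProbabilityMeasure μ] (hT : Ergodic T μ) {f : Ω → ℝ}
    (hf : Integrable f μ) : ∀ᵐ ω ∂μ, Tendsto (fun n : ℕ => f (T^[n] ω) / n) atTop (𝓝 0) := by
  filter_upwards [ae_tendsto_birkhoffSum_div hT hf] with ω hω
  have hdiff := ((hω.comp (tendsto_add_atTop_nat 1)).mul (tendsto_add_natCast_div 1)).sub hω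
  rw [mul_one, sub_self] at hdiff
  refine hdiff.congr fun n => ?_
  have hn1 : ((n + 1 : ℕ) : ℝ) ≠ 0 := Nat.cast_ne_zero.2 n.succ_ne_zero
  rw [Function.comp_apply, div_mul_div_cancel₀ hn1, ← sub_div, birkhoffSum_succ,
    add_sub_cancel_left]

namespace IsSubadditiveProcess

variable {a : ℕ → Ω → ℝ} {γ : ℝ} [IsProbabilityMeasure μ]

lemma ae_eventually_le_mul (ha : IsSubadditiveProcess T μ a) (hT : Ergodic T μ) {N : ℕ}
    (hN : 0 < N) {c : ℝ} (hc : (∫ ω, a N ω ∂μ) / N < c) :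
    ∀ᵐ ω ∂μ, ∀ᶠ n : ℕ in atTop, a n ω ≤ c * n := by
  have hincr : ∀ᵐ ω ∂μ, ∀ m, Tendsto (fun n : ℕ => a m (T^[n] ω) / n) atTop (𝓝 0) :=
    ae_all_iff.2 fun m => ae_tendsto_comp_iterate_div hT (ha.integrable m)
  filter_upwards [ha.ae_subadd_iterate hT.toMeasurePreserving, hincr,
    ae_tendsto_birkhoffSum_div hT (ha.integrable N)] with ω hsub hincr hbirk
  have hNpos : (0 : ℝ) < N := Nat.cast_pos.2 hN
  have htail : ∀ r, Tendsto (fun n : ℕ => a (N - r) (T^[n + r] ω) / n) atTop (𝓝 0) := fun r => by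
    have := ((hincr (N - r)).comp (tendsto_add_atTop_nat r)).mul (tendsto_add_natCast_div r)
    rw [zero_mul] at this
    refine this.congr' ?_
    filter_upwards [eventually_gt_atTop 0] with n hn
    have hne : ((n + r : ℕ) : ℝ) ≠ 0 := Nat.cast_ne_zero.2 (Nat.add_pos_left hn r).ne'
    exact div_mul_div_cancel₀ hne
  have hlim : Tendsto (fun n : ℕ => (∑ r ∈ Finset.range N, a r ω + birkhoffSum T (a N) n ω +
      ∑ r ∈ Finset.range N, a (N - r) (T^[n + r] ω)) / n - c * N * (((n + N : ℕ) : ℝ) / n))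
      atTop (𝓝 (∫ ω, a N ω ∂μ - c * N * 1)) := by
    refine Tendsto.sub ?_ ((tendsto_add_natCast_div N).const_mul _)
    have hconst := tendsto_const_div_atTop_nhds_zero_nat (∑ r ∈ Finset.range N, a r ω)
    have := (hconst.add hbirk).add (tendsto_finsetSum (Finset.range N) fun r _ => htail r)
    rw [Finset.sum_const_zero, zero_add, add_zero] at this
    simpa only [← Finset.sum_div, ← add_div] using this
  have hneg : ∫ ω, a N ω ∂μ - c * N * 1 < 0 := by
    rw [div_lt_iff₀ hNpos] at hc
    linarith
  rw [← map_add_atTop_eq_nat N, eventually_map]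
  filter_upwards [hlim.eventually_lt_const hneg, eventually_gt_atTop 0] with n hn hn0
  have hn' : (0 : ℝ) < n := Nat.cast_pos.2 hn0
  have hmul := mul_le_sum_of_subadditive (x := fun n k => a n (T^[k] ω)) hsub N n
  simp only [Function.iterate_zero, id_eq] at hmul
  rw [← mul_div_assoc, ← sub_div, div_lt_iff₀ hn', zero_mul, sub_neg] at hn
  refine le_of_mul_le_mul_left (hmul.trans (hn.le.trans_eq ?_)) hNpos
  ring

theorem ae_tendsto_div (ha : IsSubadditiveProcess T μ a) (hT : Ergodic T μ)
    (hγ : Tendsto (fun n : ℕ => (∫ ω, a n ω ∂μ) / n) atTop (𝓝 γ)) :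
    ∀ᵐ ω ∂μ, Tendsto (fun n : ℕ => a n ω / n) atTop (𝓝 γ) := by
  have hlow : ∀ᵐ ω ∂μ, ∀ c : ℚ, c < γ → ∀ᶠ n : ℕ in atTop, c * n ≤ a n ω :=
    ae_all_iff.2 fun c => eventually_imp_distrib_left.2 fun hc =>
      ha.ae_eventually_mul_le hT hγ hc
  have hupp : ∀ᵐ ω ∂μ, ∀ c : ℚ, γ < c → ∀ᶠ n : ℕ in atTop, a n ω ≤ c * n :=
    ae_all_iff.2 fun c => eventually_imp_distrib_left.2 fun hc => by
      obtain ⟨N, hN, hN0⟩ :=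
        ((hγ.eventually_lt_const hc).and (eventually_gt_atTop 0)).exists
      exact ha.ae_eventually_le_mul hT hN0 hN
  filter_upwards [hlow, hupp] with ω hlow hupp
  exact tendsto_div_natCast_of_eventually hlow hupp

end IsSubadditiveProcess

end Ergodic

section RelativeEntropy

variable {Ω : Type*} [MeasurableSpace Ω] {P : Measure Ω}

lemma mul_neg_log_le {x : ℝ} (hx : 0 ≤ x) (a : ℝ) :
    x * -Real.log x ≤ x * a + Real.exp (-a) := by
  rcases hx.eq_or_lt with rfl | hx
  · simp [Real.exp_nonneg]
  have hlog : Real.log (Real.exp (-a) / x) ≤ Real.exp (-a) / x :=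
    (Real.log_le_sub_one_of_pos (by positivity)).trans (sub_le_self _ zero_le_one)
  rw [Real.log_div (Real.exp_ne_zero _) hx.ne', Real.log_exp, le_div_iff₀ hx] at hlog
  linarith

/-- With `u = exp (-z / 2)`, this follows from `z ≥ 2 * (1 - u)` and the arithmetic-geometric mean
inequality. -/
lemma one_sub_exp_neg_le (z : ℝ) {η : ℝ} (hη : 0 < η) :
    1 - Real.exp (-z) ≤ η + (z + Real.exp (-z) - 1) / η := by
  set u := Real.exp (-z / 2)
  have hsq : Real.exp (-z) = u ^ 2 := by rw [← Real.exp_nat_mul]; congr 1; push_cast; ring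
  have hu : -z / 2 + 1 ≤ u := Real.add_one_le_exp _
  have hquot : (1 - u) ^ 2 / η ≤ (z + Real.exp (-z) - 1) / η := by
    rw [hsq]; gcongr; linarith
  have hamgm : 2 * (1 - u) ≤ η + (1 - u) ^ 2 / η := by
    have : η + (1 - u) ^ 2 / η - 2 * (1 - u) = (η - (1 - u)) ^ 2 / η := by field_simp; ring
    have : 0 ≤ (η - (1 - u)) ^ 2 / η := by positivity
    linarith
  have := sq_nonneg (1 - u)
  linarith

variable {Z : Ω → ℝ}

lemma integrable_exp_neg (hZ : AEStronglyMeasurable Z P)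
    (hexp : ∫⁻ ω, ENNReal.ofReal (Real.exp (-Z ω)) ∂P ≤ 1) :
    Integrable (fun ω => Real.exp (-Z ω)) P := by
  refine ⟨Real.continuous_exp.comp_aestronglyMeasurable hZ.neg, ?_⟩
  rw [hasFiniteIntegral_iff_ofReal (Eventually.of_forall fun ω => Real.exp_nonneg _)]
  exact hexp.trans_lt ENNReal.one_lt_top

lemma integral_exp_neg_le_one (hZ : AEStronglyMeasurable Z P)
    (hexp : ∫⁻ ω, ENNReal.ofReal (Real.exp (-Z ω)) ∂P ≤ 1) :
    ∫ ω, Real.exp (-Z ω) ∂P ≤ 1 := by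
  rw [integral_eq_lintegral_of_nonneg_ae (Eventually.of_forall fun ω => Real.exp_nonneg _)
    (integrable_exp_neg hZ hexp).1]
  exact ENNReal.toReal_mono ENNReal.one_ne_top hexp

lemma setLIntegral_div_measure_fiber_le {β : Type*} [Countable β] [MeasurableSpace β]
    [DiscreteMeasurableSpace β] {V : Ω → β} (hV : Measurable V) (q : β → ℝ≥0∞) (B : Set β) :
    ∫⁻ ω in V ⁻¹' B, q (V ω) / P (V ⁻¹' {V ω}) ∂P ≤ ∑' v, B.indicator q v := by
  rw [← setLIntegral_map (f := fun v => q v / P (V ⁻¹' {v})) MeasurableSet.of_discrete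
    Measurable.of_discrete hV, ← lintegral_indicator MeasurableSet.of_discrete,
    lintegral_countable']
  refine ENNReal.tsum_le_tsum fun v => ?_
  rw [Measure.map_apply hV (measurableSet_singleton v)]
  by_cases hv : v ∈ B
  · simp only [indicator_of_mem hv]
    rw [mul_comm]
    exact ENNReal.mul_div_le
  · simp [indicator_of_notMem hv]

variable [IsProbabilityMeasure P]

lemma integral_nonneg_of_lintegral_exp_neg_le_one (hZ : Integrable Z P)
    (hexp : ∫⁻ ω, ENNReal.ofReal (Real.exp (-Z ω)) ∂P ≤ 1) : 0 ≤ ∫ ω, Z ω ∂P := by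
  have hint := integrable_exp_neg hZ.1 hexp
  calc 0 ≤ 1 - ∫ ω, Real.exp (-Z ω) ∂P := sub_nonneg.2 (integral_exp_neg_le_one hZ.1 hexp)
    _ = ∫ ω, (1 - Real.exp (-Z ω)) ∂P := by
        rw [integral_sub (integrable_const _) hint, integral_const, probReal_univ, one_smul]
    _ ≤ ∫ ω, Z ω ∂P := integral_mono ((integrable_const _).sub hint) hZ fun ω => by
        have := Real.add_one_le_exp (-Z ω)
        linarith

/-- Pinsker's inequality for the likelihood ratio `exp (-Z)`. -/
lemma measureReal_sub_setIntegral_exp_neg_le (hZ : Integrable Z P)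
    (hexp : ∫⁻ ω, ENNReal.ofReal (Real.exp (-Z ω)) ∂P ≤ 1) (S : Set Ω) {η : ℝ} (hη : 0 < η) :
    P.real S - ∫ ω in S, Real.exp (-Z ω) ∂P ≤ η + (∫ ω, Z ω ∂P) / η := by
  have hint := integrable_exp_neg hZ.1 hexp
  have hsum : Integrable (fun ω => Z ω + Real.exp (-Z ω)) P := hZ.add hint
  have hdefect : Integrable (fun ω => Z ω + Real.exp (-Z ω) - 1) P := hsum.sub (integrable_const _)
  have hbound : Integrable (fun ω => η + (Z ω + Real.exp (-Z ω) - 1) / η) P :=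
    (integrable_const _).add (hdefect.div_const _)
  have hbound0 : ∀ ω, 0 ≤ η + (Z ω + Real.exp (-Z ω) - 1) / η := fun ω => by
    have := Real.add_one_le_exp (-Z ω)
    have : 0 ≤ (Z ω + Real.exp (-Z ω) - 1) / η := div_nonneg (by linarith) hη.le
    linarith
  calc P.real S - ∫ ω in S, Real.exp (-Z ω) ∂P = ∫ ω in S, (1 - Real.exp (-Z ω)) ∂P := by
        rw [integral_sub (integrable_const _) hint.integrableOn, setIntegral_const, smul_eq_mul,
          mul_one]
    _ ≤ ∫ ω in S, (η + (Z ω + Real.exp (-Z ω) - 1) / η) ∂P :=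
        integral_mono ((integrable_const _).sub hint).integrableOn hbound.integrableOn
          fun ω => one_sub_exp_neg_le _ hη
    _ ≤ ∫ ω, (η + (Z ω + Real.exp (-Z ω) - 1) / η) ∂P :=
        setIntegral_le_integral hbound (Eventually.of_forall hbound0)
    _ = η + (∫ ω, Z ω ∂P + ∫ ω, Real.exp (-Z ω) ∂P - 1) / η := by
        rw [integral_add (integrable_const _) (hdefect.div_const _), integral_div,
          integral_sub hsum (integrable_const _), integral_add hZ hint]
        simp
    _ ≤ η + (∫ ω, Z ω ∂P) / η := by
        gcongr
        linarith [integral_exp_neg_le_one hZ.1 hexp]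

end RelativeEntropy

section Growth

variable {G : Type*} {f : G → ℝ}

lemma FinExpGrowth.exists_ncard_setOf_le (hg : FinExpGrowth f) :
    ∃ c : ℝ, 0 < c ∧ ∀ r : ℝ, 0 ≤ r → {x : G | f x ≤ r}.Finite ∧
      ({x : G | f x ≤ r}.ncard : ℝ) ≤ c * Real.exp (c * r) := by
  obtain ⟨c, hc, hgrow⟩ := hg
  refine ⟨c * Real.exp c, by positivity, fun r hr => ?_⟩
  obtain ⟨hfin, hcard⟩ := hgrow (r + 1) (by linarith)
  have hsub : {x : G | f x ≤ r} ⊆ {x : G | f x < r + 1} := fun x hx => hx.trans_lt (lt_add_one r)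
  refine ⟨hfin.subset hsub, ?_⟩
  have hexp : c ≤ c * Real.exp c := le_mul_of_one_le_right hc.le (Real.one_le_exp hc.le)
  calc ({x : G | f x ≤ r}.ncard : ℝ) ≤ {x : G | f x < r + 1}.ncard := by
        exact_mod_cast ncard_le_ncard hsub hfin
    _ ≤ c * Real.exp (c * (r + 1)) := hcard
    _ = c * Real.exp c * Real.exp (c * r) := by rw [mul_assoc, ← Real.exp_add]; ring_nf
    _ ≤ c * Real.exp c * Real.exp (c * Real.exp c * r) := by gcongr

/-- Sum over the layers `k ≤ f x < k + 1`. -/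
lemma FinExpGrowth.exists_tsum_exp_ne_top (hg : FinExpGrowth f) (h0 : ∀ x, 0 ≤ f x) :
    ∃ C : ℝ, 0 ≤ C ∧ ∑' x, ENNReal.ofReal (Real.exp (-(C * f x))) ≠ ∞ := by
  obtain ⟨c, hc, hgrow⟩ := hg
  refine ⟨c + 1, by positivity, ?_⟩
  set layer : ℕ → G → ℝ≥0∞ := fun k => {x | f x < k + 1}.indicator
    fun _ => ENNReal.ofReal (Real.exp (-((c + 1) * k)))
  have hle : ∀ x, ENNReal.ofReal (Real.exp (-((c + 1) * f x))) ≤ ∑' k, layer k x := fun x => by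
    refine le_trans ?_ (ENNReal.le_tsum ⌊f x⌋₊)
    simp only [layer, indicator_of_mem (show x ∈ {y | f y < (⌊f x⌋₊ : ℝ) + 1} from
      Nat.lt_floor_add_one (f x))]
    gcongr
    exact Nat.floor_le (h0 x)
  have hlayer : ∀ k, ∑' x, layer k x ≤ ENNReal.ofReal (c * Real.exp c * Real.exp (-1) ^ k) := by
    intro k
    obtain ⟨hfin, hcard⟩ := hgrow (k + 1) (by positivity)
    rw [← tsum_subtype, ENNReal.tsum_set_const, ← hfin.cast_ncard_eq, ENat.toENNReal_coe,
      ← ENNReal.ofReal_natCast, ← ENNReal.ofReal_mul (by positivity)]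
    refine ENNReal.ofReal_le_ofReal ((mul_le_mul_of_nonneg_right hcard (Real.exp_nonneg _)).trans_eq
      ?_)
    rw [← Real.exp_nat_mul, mul_assoc, mul_assoc, ← Real.exp_add, ← Real.exp_add]
    congr 2
    ring
  have hgeom : Summable fun k : ℕ => c * Real.exp c * Real.exp (-1) ^ k :=
    (summable_geometric_of_lt_one (Real.exp_nonneg _)
      (Real.exp_lt_one_iff.2 neg_one_lt_zero)).mul_left _
  refine ne_top_of_le_ne_top hgeom.tsum_ofReal_ne_top ((ENNReal.tsum_le_tsum hle).trans ?_)
  rw [ENNReal.tsum_comm]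
  exact ENNReal.tsum_le_tsum hlayer

lemma FinExpGrowth.prod_max {H : Type*} {fs : H → ℝ} (hg : FinExpGrowth f)
    (hgs : FinExpGrowth fs) : FinExpGrowth fun g : G × H => max (f g.1) (fs g.2) := by
  obtain ⟨c, hc, hgrow⟩ := hg
  obtain ⟨d, hd, hgrows⟩ := hgs
  refine ⟨c * d + c + d, by positivity, fun r hr => ?_⟩
  obtain ⟨hfin, hcard⟩ := hgrow r hr
  obtain ⟨hfins, hcards⟩ := hgrows r hr
  have hprod : {g : G × H | max (f g.1) (fs g.2) < r} = {x | f x < r} ×ˢ {y | fs y < r} := by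
    ext g
    simp
  rw [hprod, ncard_prod, Nat.cast_mul]
  refine ⟨hfin.prod hfins, ?_⟩
  calc ({x | f x < r}.ncard : ℝ) * {y | fs y < r}.ncard
      ≤ c * Real.exp (c * r) * (d * Real.exp (d * r)) := by gcongr
    _ = c * d * Real.exp ((c + d) * r) := by rw [add_mul, Real.exp_add]; ring
    _ ≤ (c * d + c + d) * Real.exp ((c * d + c + d) * r) := by
        have := mul_pos hc hd
        gcongr <;> linarith

end Growth

/-- A length function on a group: nonnegative, subadditive and zero at the identity, such as the
displacement of a base point under a group of isometries. Symmetry is not required. -/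
structure IsLengthFunction {G : Type*} [Group G] (f : G → ℝ) : Prop where
  nonneg : ∀ x, 0 ≤ f x
  one : f 1 = 0
  mul_le : ∀ x y, f (x * y) ≤ f x + f y

/-- The information content `-log π_n(x)` of the `n`-th convolution power; its expectation is
the entropy `H(π_n)`. It takes the junk value `0` where `π_n(x) = 0`. -/
def infoContent {G : Type*} [Group G] (p : G → ℝ≥0∞) (n : ℕ) (x : G) : ℝ :=
  -Real.log (piN p n x).toReal

lemma ofReal_exp_log_sub_log {a b : ℝ≥0∞} (ha0 : a ≠ 0) (ha : a ≠ ∞) (hb0 : b ≠ 0) (hb : b ≠ ∞) :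
    ENNReal.ofReal (Real.exp (Real.log a.toReal - Real.log b.toReal)) = a / b := by
  have hbpos := ENNReal.toReal_pos hb0 hb
  rw [Real.exp_sub, Real.exp_log (ENNReal.toReal_pos ha0 ha), Real.exp_log hbpos,
    ENNReal.ofReal_div_of_pos hbpos, ENNReal.ofReal_toReal ha, ENNReal.ofReal_toReal hb]

namespace IsRWMeasure

variable {G : Type*} [Group G] [Countable G] [MeasurableSpace G] [DiscreteMeasurableSpace G]
  {p : G → ℝ≥0∞} {P : Measure (ℕ → G)} {f : G → ℝ} {h l : ℝ}

lemma integrable_walk (hP : IsRWMeasure p P) (n : ℕ) {F : G → ℝ} (hF : ∀ x, 0 ≤ F x)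
    (hsum : ∑' x, piN p n x * ENNReal.ofReal (F x) ≠ ∞) :
    Integrable (fun ω => F (walk ω n)) P := by
  refine ⟨(Measurable.of_discrete.comp (measurable_walk n)).aestronglyMeasurable, ?_⟩
  rw [hasFiniteIntegral_iff_ofReal (Eventually.of_forall fun ω => hF _),
    hP.lintegral_walk n fun x => ENNReal.ofReal (F x)]
  exact hsum.lt_top

lemma integrable_walk_one (hP : IsRWMeasure p P) {F : G → ℝ} (hF : ∀ x, 0 ≤ F x)
    (hm : FiniteFirstMoment p F) : Integrable (fun ω => F (walk ω 1)) P := by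
  refine hP.integrable_walk 1 hF ?_
  simp only [hP.piN_one]
  exact hm

/-! ### Drift -/

lemma isSubadditiveProcess_length (hP : IsRWMeasure p P) (hf : IsLengthFunction f)
    (hm : FiniteFirstMoment p f) : IsSubadditiveProcess shift P fun n ω => f (walk ω n) :=
  .of_nonneg hP.measurePreserving_shift (fun ω => by rw [walk_zero, hf.one])
    (fun n ω => hf.nonneg _)
    (fun n => (Measurable.of_discrete.comp (measurable_walk n)).aestronglyMeasurable)
    (hP.integrable_walk_one hf.nonneg hm)
    (Eventually.of_forall fun ω n m => by rw [walk_add]; exact hf.mul_le _ _)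

lemma integral_length_walk (hP : IsRWMeasure p P) (hf : IsLengthFunction f)
    (hm : FiniteFirstMoment p f) (n : ℕ) : ∫ ω, f (walk ω n) ∂P = momentSeq p f n :=
  hP.integral_walk n ((hP.isSubadditiveProcess_length hf hm).integrable n)

lemma ae_tendsto_length_div (hP : IsRWMeasure p P) (hf : IsLengthFunction f)
    (hm : FiniteFirstMoment p f) (hl : HasDrift p f l) :
    ∀ᵐ ω ∂P, Tendsto (fun n : ℕ => f (walk ω n) / n) atTop (𝓝 l) := by
  have := hP.1
  refine (hP.isSubadditiveProcess_length hf hm).ae_tendsto_div hP.ergodic_shift ?_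
  simp only [hP.integral_length_walk hf hm]
  exact hl

/-! ### Entropy -/

lemma toReal_piN_le_one (hP : IsRWMeasure p P) (n : ℕ) (x : G) : (piN p n x).toReal ≤ 1 :=
  ENNReal.toReal_mono ENNReal.one_ne_top (hP.piN_le_one n x)

lemma infoContent_nonneg (hP : IsRWMeasure p P) (n : ℕ) (x : G) : 0 ≤ infoContent p n x :=
  neg_nonneg.2 (Real.log_nonpos ENNReal.toReal_nonneg (hP.toReal_piN_le_one n x))

lemma toReal_piN_eq_exp (hP : IsRWMeasure p P) {n : ℕ} {x : G} (hx : piN p n x ≠ 0) :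
    (piN p n x).toReal = Real.exp (-infoContent p n x) := by
  rw [infoContent, neg_neg, Real.exp_log (ENNReal.toReal_pos hx (hP.piN_ne_top n x))]

lemma piN_eq_ofReal_exp (hP : IsRWMeasure p P) {n : ℕ} {x : G} (hx : piN p n x ≠ 0) :
    piN p n x = ENNReal.ofReal (Real.exp (-infoContent p n x)) := by
  rw [← hP.toReal_piN_eq_exp hx, ENNReal.ofReal_toReal (hP.piN_ne_top n x)]

lemma infoContent_mul_le (hP : IsRWMeasure p P) {n m : ℕ} {x y : G} (hx : piN p n x ≠ 0)
    (hy : piN p m y ≠ 0) :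
    infoContent p (n + m) (x * y) ≤ infoContent p n x + infoContent p m y := by
  have hx' := ENNReal.toReal_pos hx (hP.piN_ne_top n x)
  have hy' := ENNReal.toReal_pos hy (hP.piN_ne_top m y)
  have hmul := ENNReal.toReal_mono (hP.piN_ne_top _ _) (hP.piN_mul_le n m x y)
  rw [ENNReal.toReal_mul] at hmul
  have hlog := Real.log_le_log (by positivity) hmul
  rw [Real.log_mul hx'.ne' hy'.ne'] at hlog
  simp only [infoContent]
  linarith

lemma finiteFirstMoment_infoContent (hP : IsRWMeasure p P) (h0 : ∀ x, 0 ≤ f x)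
    (hg : FinExpGrowth f) (hm : FiniteFirstMoment p f) :
    FiniteFirstMoment p (infoContent p 1) := by
  obtain ⟨C, hC, hsum⟩ := hg.exists_tsum_exp_ne_top h0
  have hle : ∀ x, p x * ENNReal.ofReal (infoContent p 1 x) ≤
      ENNReal.ofReal C * (p x * ENNReal.ofReal (f x)) +
        ENNReal.ofReal (Real.exp (-(C * f x))) := fun x => by
    have htop : p x ≠ ∞ := hP.piN_one x ▸ hP.piN_ne_top 1 x
    have hx : 0 ≤ (p x).toReal := ENNReal.toReal_nonneg
    have hlog := mul_neg_log_le hx (C * f x)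
    rw [infoContent, hP.piN_one, ← ENNReal.ofReal_toReal htop, ENNReal.toReal_ofReal hx,
      ← ENNReal.ofReal_mul hx, ← ENNReal.ofReal_mul hx, ← ENNReal.ofReal_mul hC,
      mul_left_comm, ← ENNReal.ofReal_add
        (mul_nonneg hx (mul_nonneg hC (h0 x))) (Real.exp_nonneg _)]
    exact ENNReal.ofReal_le_ofReal hlog
  refine ne_top_of_le_ne_top ?_ (ENNReal.tsum_le_tsum hle)
  rw [ENNReal.tsum_add, ENNReal.tsum_mul_left]
  exact ENNReal.add_ne_top.2 ⟨ENNReal.mul_ne_top ENNReal.ofReal_ne_top hm, hsum⟩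

lemma isSubadditiveProcess_infoContent (hP : IsRWMeasure p P)
    (hent : FiniteFirstMoment p (infoContent p 1)) :
    IsSubadditiveProcess shift P fun n ω => infoContent p n (walk ω n) := by
  refine .of_nonneg hP.measurePreserving_shift (fun ω => by simp [infoContent, piN, walk_zero])
    (fun n ω => hP.infoContent_nonneg n _)
    (fun n => ((Measurable.of_discrete (f := infoContent p n)).comp
      (measurable_walk n)).aestronglyMeasurable)
    (hP.integrable_walk_one (hP.infoContent_nonneg 1) hent) ?_
  filter_upwards [hP.ae_piN_walk_ne_zero] with ω hω n m
  rw [walk_add]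
  exact hP.infoContent_mul_le (hω 0 n) (hω n m)

lemma integrable_infoContent_walk (hP : IsRWMeasure p P)
    (hent : FiniteFirstMoment p (infoContent p 1)) (n : ℕ) :
    Integrable (fun ω => infoContent p n (walk ω n)) P :=
  (hP.isSubadditiveProcess_infoContent hent).integrable n

lemma integral_infoContent_walk (hP : IsRWMeasure p P)
    (hent : FiniteFirstMoment p (infoContent p 1)) (n : ℕ) :
    ∫ ω, infoContent p n (walk ω n) ∂P = entropySeq p n := by
  rw [hP.integral_walk n (hP.integrable_infoContent_walk hent n), entropySeq]
  exact tsum_congr fun x => by rw [infoContent, Real.negMulLog, neg_mul, mul_neg]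

lemma exists_hasEntropy (hP : IsRWMeasure p P) (hent : FiniteFirstMoment p (infoContent p 1)) :
    ∃ h, HasEntropy p h := by
  have := (hP.isSubadditiveProcess_infoContent hent).exists_tendsto_of_nonneg
    hP.measurePreserving_shift fun n ω => hP.infoContent_nonneg n _
  simpa only [HasEntropy, hP.integral_infoContent_walk hent] using this

lemma ae_tendsto_infoContent_div (hP : IsRWMeasure p P)
    (hent : FiniteFirstMoment p (infoContent p 1)) (hh : HasEntropy p h) :
    ∀ᵐ ω ∂P, Tendsto (fun n : ℕ => infoContent p n (walk ω n) / n) atTop (𝓝 h) := by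
  have := hP.1
  refine (hP.isSubadditiveProcess_infoContent hent).ae_tendsto_div hP.ergodic_shift ?_
  simp only [hP.integral_infoContent_walk hent]
  exact hh

lemma entropySeq_le_integral_neg_log (hP : IsRWMeasure p P)
    (hent : FiniteFirstMoment p (infoContent p 1)) {n : ℕ} {q : G → ℝ≥0∞} (hq : ∑' x, q x ≤ 1)
    (hq0 : ∀ᵐ ω ∂P, q (walk ω n) ≠ 0)
    (hint : Integrable (fun ω => -Real.log (q (walk ω n)).toReal) P) :
    entropySeq p n ≤ ∫ ω, -Real.log (q (walk ω n)).toReal ∂P := by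
  have := hP.1
  have hinfo := hP.integrable_infoContent_walk hent n
  have hqtop : ∀ x, q x ≠ ∞ := fun x =>
    ne_top_of_le_ne_top ENNReal.one_ne_top ((ENNReal.le_tsum x).trans hq)
  have hratio : ∀ᵐ ω ∂P, ENNReal.ofReal (Real.exp
      (-(-Real.log (q (walk ω n)).toReal - infoContent p n (walk ω n)))) =
      q (walk ω n) / P ((fun ω => walk ω n) ⁻¹' {walk ω n}) := by
    filter_upwards [hq0, hP.ae_piN_walk_ne_zero] with ω hω hpos
    refine Eq.trans ?_ ((ofReal_exp_log_sub_log hω (hqtop _) (hpos 0 n) (hP.piN_ne_top n _)).trans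
      (by rw [← hP.measure_walk_eq]; rfl))
    rw [infoContent, neg_sub_neg, neg_sub]
    rfl
  have hGibbs := integral_nonneg_of_lintegral_exp_neg_le_one (hint.sub hinfo) <| by
    simp only [Pi.sub_apply]
    rw [lintegral_congr_ae hratio]
    have := setLIntegral_div_measure_fiber_le (P := P) (measurable_walk n) q univ
    rw [preimage_univ, setLIntegral_univ, indicator_univ] at this
    exact this.trans hq
  rw [← hP.integral_infoContent_walk hent, ← sub_nonneg, ← integral_sub hint hinfo]
  exact hGibbs

lemma exists_entropySeq_le_mul_momentSeq_add (hP : IsRWMeasure p P) (hf : IsLengthFunction f)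
    (hg : FinExpGrowth f) (hm : FiniteFirstMoment p f) :
    ∃ C D : ℝ, ∀ n, entropySeq p n ≤ C * momentSeq p f n + D := by
  have := hP.1
  obtain ⟨C, -, hsum⟩ := hg.exists_tsum_exp_ne_top hf.nonneg
  set w : G → ℝ≥0∞ := fun x => ENNReal.ofReal (Real.exp (-(C * f x)))
  set S : ℝ≥0∞ := ∑' x, w x
  have hw0 : ∀ x, w x ≠ 0 := fun x => (ENNReal.ofReal_pos.2 (Real.exp_pos _)).ne'
  have hS0 : S ≠ 0 := fun h0 => hw0 1 (ENNReal.tsum_eq_zero.1 h0 1)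
  have hlog : ∀ x, -Real.log (w x / S).toReal = C * f x + Real.log S.toReal := fun x => by
    rw [ENNReal.toReal_div, ENNReal.toReal_ofReal (Real.exp_nonneg _),
      Real.log_div (Real.exp_ne_zero _) (ENNReal.toReal_pos hS0 hsum).ne', Real.log_exp]
    ring
  refine ⟨C, Real.log S.toReal, fun n => ?_⟩
  have hlen := (hP.isSubadditiveProcess_length hf hm).integrable n
  have hGibbs := hP.entropySeq_le_integral_neg_log
    (hP.finiteFirstMoment_infoContent hf.nonneg hg hm) (n := n) (q := fun x => w x / S)
    (by simp only [div_eq_mul_inv, ENNReal.tsum_mul_right]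
        exact (ENNReal.mul_inv_cancel hS0 hsum).le)
    (Eventually.of_forall fun ω => (ENNReal.div_pos (hw0 _) hsum).ne')
    (by simp only [hlog]; exact (hlen.const_mul C).add (integrable_const _))
  simp only [hlog] at hGibbs
  rwa [integral_add (hlen.const_mul C) (integrable_const _), integral_const_mul,
    hP.integral_length_walk hf hm, integral_const, probReal_univ, one_smul] at hGibbs

lemma entropy_nonpos_of_drift_zero (hP : IsRWMeasure p P) (hf : IsLengthFunction f)
    (hg : FinExpGrowth f) (hm : FiniteFirstMoment p f) (hh : HasEntropy p h)
    (hl : HasDrift p f 0) : h ≤ 0 := by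
  obtain ⟨C, D, hle⟩ := hP.exists_entropySeq_le_mul_momentSeq_add hf hg hm
  have hlim : Tendsto (fun n : ℕ => C * (momentSeq p f n / n) + D / n) atTop (𝓝 (C * 0 + 0)) :=
    (hl.const_mul C).add (tendsto_const_div_atTop_nhds_zero_nat D)
  rw [mul_zero, add_zero] at hlim
  refine le_of_tendsto_of_tendsto' hh hlim fun n => ?_
  rw [← mul_div_assoc, ← add_div]
  gcongr
  exact hle n

end IsRWMeasure

section Image

variable {G C : Type*} [Group G] [MeasurableSpace G] [DiscreteMeasurableSpace G]
  [Group C] [Countable C] [MeasurableSpace C] [DiscreteMeasurableSpace C]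
  {q : C → ℝ≥0∞} {P : Measure (ℕ → G)} {φ : G →* C}

namespace IsRWMeasure

lemma integrable_infoContent_map_walk (hQ : IsRWMeasure q (P.map fun ω i => φ (ω i)))
    (hent : FiniteFirstMoment q (infoContent q 1)) (n : ℕ) :
    Integrable (fun ω => infoContent q n (φ (walk ω n))) P := by
  simpa only [Function.comp_def, walk_map] using
    (hQ.integrable_infoContent_walk hent n).comp_measurable (measurable_map_increments φ)

lemma integral_infoContent_map_walk (hQ : IsRWMeasure q (P.map fun ω i => φ (ω i)))
    (hent : FiniteFirstMoment q (infoContent q 1)) (n : ℕ) :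
    ∫ ω, infoContent q n (φ (walk ω n)) ∂P = entropySeq q n := by
  rw [← hQ.integral_infoContent_walk hent, integral_map
    (measurable_map_increments φ).aemeasurable (hQ.integrable_infoContent_walk hent n).1]
  simp only [walk_map]

lemma ae_piN_map_walk_ne_zero (hQ : IsRWMeasure q (P.map fun ω i => φ (ω i))) (n : ℕ) :
    ∀ᵐ ω ∂P, piN q n (φ (walk ω n)) ≠ 0 := by
  filter_upwards [ae_of_ae_map (measurable_map_increments φ).aemeasurable
    hQ.ae_piN_walk_ne_zero] with ω hω
  exact walk_map φ ω n ▸ hω 0 n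

end IsRWMeasure

end Image

/-! ### Marginals -/

/-- The first marginal `μ` of a distribution `π` on a product. -/
def marginalFst {A B : Type*} (p : A × B → ℝ≥0∞) : A → ℝ≥0∞ := fun x => ∑' y, p (x, y)

/-- The second marginal `μ*` of a distribution `π` on a product. -/
def marginalSnd {A B : Type*} (p : A × B → ℝ≥0∞) : B → ℝ≥0∞ := fun y => ∑' x, p (x, y)

section Marginals

variable {A B : Type*} {p : A × B → ℝ≥0∞} {f : A → ℝ} {fs : B → ℝ}

lemma marginalStar_fst (p : A × B → ℝ≥0∞) : marginalStar p Prod.fst = marginalFst p := by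
  ext x
  rw [marginalStar, ENNReal.tsum_prod', marginalFst, tsum_eq_single x]
  · simp
  · intro x' hx'
    simp [hx']

lemma marginalStar_snd (p : A × B → ℝ≥0∞) : marginalStar p Prod.snd = marginalSnd p := by
  ext y
  rw [marginalStar, ENNReal.tsum_prod', ENNReal.tsum_comm, marginalSnd, tsum_eq_single y]
  · simp
  · intro y' hy'
    simp [hy']

lemma FiniteFirstMoment.marginalFst (hm : FiniteFirstMoment p fun g => max (f g.1) (fs g.2)) :
    FiniteFirstMoment (marginalFst p) f := by
  refine ne_top_of_le_ne_top hm ?_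
  simp only [ENNReal.tsum_prod', HMDim.marginalFst, ← ENNReal.tsum_mul_right]
  gcongr
  exact le_max_left _ _

lemma FiniteFirstMoment.marginalSnd (hm : FiniteFirstMoment p fun g => max (f g.1) (fs g.2)) :
    FiniteFirstMoment (marginalSnd p) fs := by
  refine ne_top_of_le_ne_top hm ?_
  rw [ENNReal.tsum_prod', ENNReal.tsum_comm]
  simp only [HMDim.marginalSnd, ← ENNReal.tsum_mul_right]
  gcongr
  exact le_max_right _ _

variable [Group A] [Group B]

lemma walk_fst (ω : ℕ → A × B) (n : ℕ) : walk (fun i => (ω i).1) n = (walk ω n).1 :=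
  walk_map (MonoidHom.fst A B) ω n

lemma walk_snd (ω : ℕ → A × B) (n : ℕ) : walk (fun i => (ω i).2) n = (walk ω n).2 :=
  walk_map (MonoidHom.snd A B) ω n

namespace IsRWMeasure

variable [Countable A] [MeasurableSpace A] [DiscreteMeasurableSpace A]
  [Countable B] [MeasurableSpace B] [DiscreteMeasurableSpace B] {P : Measure (ℕ → A × B)}

lemma marginalFst (hP : IsRWMeasure p P) :
    IsRWMeasure (marginalFst p) (P.map fun ω i => (ω i).1) :=
  marginalStar_fst p ▸ hP.map (MonoidHom.fst A B)

lemma marginalSnd (hP : IsRWMeasure p P) :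
    IsRWMeasure (marginalSnd p) (P.map fun ω i => (ω i).2) :=
  marginalStar_snd p ▸ hP.map (MonoidHom.snd A B)

lemma entropySeq_le_add_marginal (hP : IsRWMeasure p P)
    (hent : FiniteFirstMoment p (infoContent p 1))
    (hent1 : FiniteFirstMoment (HMDim.marginalFst p) (infoContent (HMDim.marginalFst p) 1))
    (hent2 : FiniteFirstMoment (HMDim.marginalSnd p) (infoContent (HMDim.marginalSnd p) 1))
    (n : ℕ) :
    entropySeq p n ≤
      entropySeq (HMDim.marginalFst p) n + entropySeq (HMDim.marginalSnd p) n := by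
  set μ := HMDim.marginalFst p
  set μs := HMDim.marginalSnd p
  have hP1 : IsRWMeasure μ (P.map fun ω i => MonoidHom.fst A B (ω i)) := hP.marginalFst
  have hP2 : IsRWMeasure μs (P.map fun ω i => MonoidHom.snd A B (ω i)) := hP.marginalSnd
  have hint1 := hP1.integrable_infoContent_map_walk hent1 n
  have hint2 := hP2.integrable_infoContent_map_walk hent2 n
  have hpos : ∀ᵐ ω ∂P, piN μ n (walk ω n).1 ≠ 0 ∧ piN μs n (walk ω n).2 ≠ 0 :=
    (hP1.ae_piN_map_walk_ne_zero n).and (hP2.ae_piN_map_walk_ne_zero n)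
  have hlog : (fun ω => infoContent μ n (walk ω n).1 + infoContent μs n (walk ω n).2) =ᵐ[P]
      fun ω => -Real.log (piN μ n (walk ω n).1 * piN μs n (walk ω n).2).toReal := by
    filter_upwards [hpos] with ω ⟨h1, h2⟩
    rw [ENNReal.toReal_mul, Real.log_mul (ENNReal.toReal_pos h1 (hP1.piN_ne_top _ _)).ne'
      (ENNReal.toReal_pos h2 (hP2.piN_ne_top _ _)).ne', neg_add]
    rfl
  rw [← hP1.integral_infoContent_map_walk hent1, ← hP2.integral_infoContent_map_walk hent2,
    ← integral_add hint1 hint2]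
  refine (hP.entropySeq_le_integral_neg_log hent (q := fun g => piN μ n g.1 * piN μs n g.2) ?_
    (hpos.mono fun ω h => mul_ne_zero h.1 h.2) ((hint1.add hint2).congr hlog)).trans_eq
    (integral_congr_ae hlog).symm
  rw [ENNReal.tsum_prod']
  simp only [ENNReal.tsum_mul_left, hP2.tsum_piN, mul_one, hP1.tsum_piN, le_refl]

lemma exists_hasEntropy_marginalFst (hP : IsRWMeasure p P) {f : A → ℝ} {fs : B → ℝ}
    (h0 : ∀ x, 0 ≤ f x) (h0s : ∀ y, 0 ≤ fs y) (hg : FinExpGrowth f) (hgs : FinExpGrowth fs)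
    (hm : FiniteFirstMoment p fun g => max (f g.1) (fs g.2)) {h hs : ℝ} (hh : HasEntropy p h)
    (hhs : HasEntropy (HMDim.marginalSnd p) hs) :
    ∃ hμ, HasEntropy (HMDim.marginalFst p) hμ ∧ h ≤ hμ + hs := by
  have hent := hP.finiteFirstMoment_infoContent (fun g => (h0 g.1).trans (le_max_left _ _))
    (hg.prod_max hgs) hm
  have hent1 := hP.marginalFst.finiteFirstMoment_infoContent h0 hg hm.marginalFst
  have hent2 := hP.marginalSnd.finiteFirstMoment_infoContent h0s hgs hm.marginalSnd
  obtain ⟨hμ, hhμ⟩ := hP.marginalFst.exists_hasEntropy hent1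
  refine ⟨hμ, hhμ, le_of_tendsto_of_tendsto' hh (hhμ.add hhs) fun n => ?_⟩
  rw [← add_div]
  gcongr
  exact hP.entropySeq_le_add_marginal hent hent1 hent2 n

end IsRWMeasure

end Marginals

section AsymptoticInvariance

variable {G : Type*} [Group G] [MeasurableSpace G]

/-- The elements whose left translation asymptotically preserves the masses `m N A` of all sets,
as for the averages of a Følner sequence. -/
def asymptoticStabilizer (m : ℕ → Measure G) : Subgroup G where
  carrier := {g | ∀ A : Set G,
    Tendsto (fun N => (m N).real {x | g * x ∈ A} - (m N).real A) atTop (𝓝 0)}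
  one_mem' A := by simp
  mul_mem' {g h} hg hh A := by
    have hsum := (hh {x | g * x ∈ A}).add (hg A)
    rw [add_zero] at hsum
    refine hsum.congr fun N => ?_
    simp only [mem_ofPred_eq, mul_assoc, sub_add_sub_cancel]
  inv_mem' {g} hg A := by
    have hneg := (hg {x | g⁻¹ * x ∈ A}).neg
    rw [neg_zero] at hneg
    refine hneg.congr fun N => ?_
    simp only [mem_ofPred_eq, inv_mul_cancel_left, ofPred_mem_eq, neg_sub]

lemma mem_asymptoticStabilizer_of_eventually_le [DiscreteMeasurableSpace G] {m : ℕ → Measure G}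
    [∀ N, IsProbabilityMeasure (m N)] {g : G}
    (h : ∀ A : Set G, ∀ ε > 0, ∀ᶠ N in atTop, (m N).real {x | g * x ∈ A} ≤ (m N).real A + ε) :
    g ∈ asymptoticStabilizer m := by
  refine fun A => Metric.tendsto_nhds.2 fun ε hε => ?_
  filter_upwards [h A _ (half_pos hε), h Aᶜ _ (half_pos hε)] with N hle hge
  have hcompl : {x | g * x ∈ Aᶜ} = {x | g * x ∈ A}ᶜ := rfl
  rw [hcompl, probReal_compl_eq_one_sub .of_discrete, probReal_compl_eq_one_sub .of_discrete] at hge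
  rw [Real.dist_eq, sub_zero, abs_lt]
  constructor <;> linarith

lemma exists_map_mul_left {F G : Type*} [Group F] [Group G] {φ : F →* G}
    (hφ : Function.Injective φ) : ∃ u : G → F, ∀ v x, u (φ v * x) = v * u x := by
  obtain ⟨T, hT, -⟩ := φ.range.exists_isComplement_right 1
  refine ⟨fun x => (MonoidHom.ofInjective hφ).symm (hT.equiv x).1, fun v x => ?_⟩
  have hmul := hT.equiv_mul_left (MonoidHom.ofInjective hφ v) x
  rw [MonoidHom.ofInjective_apply] at hmul
  simp only [hmul, map_mul, MulEquiv.symm_apply_apply]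

lemma startsWith_union_preimage_mul {α : Type*} [DecidableEq α] (i : α) (v : FreeGroup α) :
    v ∈ FreeGroup.startsWith (i, true) ∨
      FreeGroup.mk [(i, false)] * v ∈ FreeGroup.startsWith (i, false) :=
  or_iff_not_imp_left.2 (FreeGroup.startsWith_mk_mul (w := (i, false)) v)

/-- The paradoxical decomposition of a free group rules out asymptotically invariant means. -/
lemma not_isNonElementarySubgroup_asymptoticStabilizer [DiscreteMeasurableSpace G]
    (m : ℕ → Measure G) [∀ N, IsProbabilityMeasure (m N)] :
    ¬ IsNonElementarySubgroup (asymptoticStabilizer m) := by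
  rintro ⟨φ, hφ, hrange⟩
  obtain ⟨u, hu⟩ := exists_map_mul_left hφ
  let W : Fin 2 → Set G := fun i =>
    u ⁻¹' FreeGroup.startsWith (i, true) ∪ u ⁻¹' FreeGroup.startsWith (i, false)
  have hdisj : ∀ {a b : Fin 2 × Bool}, a ≠ b →
      Disjoint (u ⁻¹' FreeGroup.startsWith a) (u ⁻¹' FreeGroup.startsWith b) := fun hab =>
    (FreeGroup.startsWith.disjoint_iff_ne.2 hab).preimage u
  have hmass : ∀ i, ∀ᶠ N in atTop, 3 / 4 ≤ (m N).real (W i) := fun i => by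
    set g := φ (FreeGroup.mk [(i, false)])
    set B := u ⁻¹' FreeGroup.startsWith (i, false)
    have hcover : u ⁻¹' FreeGroup.startsWith (i, true) ∪ {x | g * x ∈ B} = univ :=
      eq_univ_of_forall fun x => (startsWith_union_preimage_mul i (u x)).imp id fun h => by
        simpa only [mem_ofPred_eq, mem_preimage, B, g, hu] using h
    have hquarter : (0 : ℝ) < 1 / 4 := by norm_num
    have hinv := hrange (mem_range_self (FreeGroup.mk [(i, false)])) B
    filter_upwards [hinv.eventually_lt_const hquarter] with N hN
    have hone := measureReal_union_le (μ := m N) (u ⁻¹' FreeGroup.startsWith (i, true))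
      {x | g * x ∈ B}
    rw [hcover, probReal_univ] at hone
    rw [measureReal_union (hdisj (by simp)) .of_discrete]
    linarith
  obtain ⟨N, h0, h1⟩ := ((hmass 0).and (hmass 1)).exists
  have hunion := measureReal_union (μ := m N) (s₁ := W 0) (s₂ := W 1)
    (by simp only [W, disjoint_union_left, disjoint_union_right]
        exact ⟨⟨hdisj (by simp), hdisj (by simp)⟩, hdisj (by simp), hdisj (by simp)⟩) .of_discrete
  have hle := measureReal_le_one (μ := m N) (s := W 0 ∪ W 1)
  linarith

end AsymptoticInvariance

section WalkAverage

variable {G : Type*} [Group G] [Countable G] [MeasurableSpace G] [DiscreteMeasurableSpace G]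

/-- The Cesàro average of the laws of the walk at the times `0, …, N`. -/
def walkAverage (P : Measure (ℕ → G)) (N : ℕ) : Measure G :=
  (N + 1 : ℝ≥0∞)⁻¹ • ∑ m ∈ Finset.range (N + 1), P.map fun ω => walk ω m

lemma walkAverage_real_apply (P : Measure (ℕ → G)) [IsFiniteMeasure P] (N : ℕ) (A : Set G) :
    (walkAverage P N).real A =
      (∑ m ∈ Finset.range (N + 1), P.real {ω | walk ω m ∈ A}) / (N + 1) := by
  have hmap : ∀ m, (P.map fun ω => walk ω m) A = P {ω | walk ω m ∈ A} := fun m =>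
    Measure.map_apply (measurable_walk m) .of_discrete
  simp only [walkAverage, measureReal_def, Measure.smul_apply, Measure.coe_finsetSum,
    Finset.sum_apply, hmap, smul_eq_mul, ENNReal.toReal_mul, ENNReal.toReal_inv]
  rw [ENNReal.toReal_sum fun m _ => measure_ne_top _ _, ENNReal.toReal_add (by simp) (by simp),
    ENNReal.toReal_natCast, ENNReal.toReal_one, inv_mul_eq_div]

instance (P : Measure (ℕ → G)) [IsProbabilityMeasure P] (N : ℕ) :
    IsProbabilityMeasure (walkAverage P N) := by
  refine ⟨?_⟩
  have hmap : ∀ m, (P.map fun ω => walk ω m) univ = 1 := fun m => by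
    rw [Measure.map_apply (measurable_walk m) .univ, preimage_univ, measure_univ]
  simp only [walkAverage, Measure.smul_apply, Measure.coe_finsetSum, Finset.sum_apply, hmap,
    Finset.sum_const, Finset.card_range, nsmul_eq_mul, mul_one, smul_eq_mul, Nat.cast_add,
    Nat.cast_one]
  exact ENNReal.inv_mul_cancel (by simp) (by simp)

end WalkAverage

lemma entropySeq_zero {G : Type*} [Group G] (p : G → ℝ≥0∞) : entropySeq p 0 = 0 := by
  refine (tsum_congr fun x => ?_).trans tsum_zero
  simp only [piN]
  split_ifs <;> simp

/-- The information of the walk at time `m + 1` minus that of the walk at time `m` restarted after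
the first step. -/
def infoIncrement {G : Type*} [Group G] (p : G → ℝ≥0∞) (m : ℕ) (ω : ℕ → G) : ℝ :=
  infoContent p (m + 1) (walk ω (m + 1)) - infoContent p m (walk (shift ω) m)

namespace IsRWMeasure

variable {G : Type*} [Group G] [Countable G] [MeasurableSpace G] [DiscreteMeasurableSpace G]
  {p : G → ℝ≥0∞} {P : Measure (ℕ → G)} {f : G → ℝ}

lemma measure_walk_one_eq_inter_walk_succ_mem (hP : IsRWMeasure p P) (m : ℕ) (g : G) (A : Set G) :
    P ({ω | walk ω 1 = g} ∩ {ω | walk ω (m + 1) ∈ A}) = p g * P {ω | g * walk ω m ∈ A} := by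
  have hset : {ω | walk ω 1 = g} ∩ {ω | walk ω (m + 1) ∈ A} =
      {ω | walk ω 1 = g} ∩ shift^[1] ⁻¹' {ω | g * walk ω m ∈ A} := by
    ext ω
    simp only [mem_inter_iff, mem_ofPred_eq, mem_preimage, add_comm m 1, walk_add]
    exact and_congr_right fun h => by rw [h]
  have hmeas : MeasurableSet {ω : ℕ → G | g * walk ω m ∈ A} :=
    measurable_walk m (MeasurableSet.of_discrete (s := {x | g * x ∈ A}))
  rw [hset, hP.measure_walk_inter_shift 1 g hmeas, hP.measure_walk_eq, hP.piN_one]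

lemma measure_walk_mem (hP : IsRWMeasure p P) (n : ℕ) (A : Set G) :
    P {ω | walk ω n ∈ A} = ∑' x, A.indicator (piN p n) x := by
  have hmap : ∀ B, (P.map fun ω => walk ω n) B = P {ω | walk ω n ∈ B} := fun B =>
    Measure.map_apply (measurable_walk n) .of_discrete
  rw [← hmap, ← Measure.tsum_indicator_apply_singleton _ A .of_discrete]
  simp only [hmap, mem_singleton_iff, hP.measure_walk_eq]

lemma integrable_infoIncrement (hP : IsRWMeasure p P)
    (hent : FiniteFirstMoment p (infoContent p 1)) (m : ℕ) : Integrable (infoIncrement p m) P :=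
  (hP.integrable_infoContent_walk hent (m + 1)).sub
    (integrable_comp_iterate hP.measurePreserving_shift (hP.integrable_infoContent_walk hent m) 1)

lemma integral_infoIncrement (hP : IsRWMeasure p P)
    (hent : FiniteFirstMoment p (infoContent p 1)) (m : ℕ) :
    ∫ ω, infoIncrement p m ω ∂P = entropySeq p (m + 1) - entropySeq p m := by
  have hinfo := hP.integrable_infoContent_walk hent m
  rw [← hP.integral_infoContent_walk hent, ← hP.integral_infoContent_walk hent m,
    ← integral_comp_iterate hP.measurePreserving_shift hinfo.1 1]
  exact integral_sub (hP.integrable_infoContent_walk hent (m + 1))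
    (integrable_comp_iterate hP.measurePreserving_shift hinfo 1)

lemma ofReal_exp_neg_infoIncrement (hP : IsRWMeasure p P) (m : ℕ) : ∀ᵐ ω ∂P,
    ENNReal.ofReal (Real.exp (-infoIncrement p m ω)) =
    p (walk ω 1) * piN p (m + 1) (walk ω (m + 1)) /
      P ((fun ω => (walk ω 1, walk ω (m + 1))) ⁻¹' {(walk ω 1, walk ω (m + 1))}) := by
  filter_upwards [hP.ae_piN_walk_ne_zero] with ω hω
  have hfiber : P ((fun ω => (walk ω 1, walk ω (m + 1))) ⁻¹' {(walk ω 1, walk ω (m + 1))}) =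
      p (walk ω 1) * piN p m (walk (shift ω) m) := by
    have hset : (fun ω => (walk ω 1, walk ω (m + 1))) ⁻¹' {(walk ω 1, walk ω (m + 1))} =
        {ω' | walk ω' 1 = walk ω 1} ∩ {ω' | walk ω' (m + 1) ∈ ({walk ω (m + 1)} : Set G)} := by
      ext ω'
      simp
    have hwalk : walk ω (m + 1) = walk ω 1 * walk (shift ω) m := by
      rw [add_comm, walk_add, Function.iterate_one]
    rw [hset, hP.measure_walk_one_eq_inter_walk_succ_mem, ← hP.measure_walk_eq m]
    simp only [hwalk, mem_singleton_iff, mul_right_inj]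
  have hfirst : p (walk ω 1) ≠ 0 := hP.piN_one (walk ω 1) ▸ hω 0 1
  have hcurrent : piN p (m + 1) (walk ω (m + 1)) ≠ 0 := hω 0 (m + 1)
  have htail : piN p m (walk (shift ω) m) ≠ 0 := hω 1 m
  rw [hfiber, ENNReal.mul_div_mul_left _ _ hfirst (hP.piN_one (walk ω 1) ▸ hP.piN_ne_top 1 _),
    ← ofReal_exp_log_sub_log hcurrent (hP.piN_ne_top _ _) htail (hP.piN_ne_top _ _)]
  simp only [infoIncrement, infoContent, neg_sub_neg, neg_sub]

lemma setLIntegral_exp_neg_infoIncrement_le (hP : IsRWMeasure p P) (m : ℕ) (B : Set (G × G)) :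
    ∫⁻ ω in (fun ω => (walk ω 1, walk ω (m + 1))) ⁻¹' B,
      ENNReal.ofReal (Real.exp (-infoIncrement p m ω)) ∂P ≤
    ∑' v, B.indicator (fun v => p v.1 * piN p (m + 1) v.2) v := by
  have := hP.1
  rw [lintegral_congr_ae (ae_restrict_of_ae (hP.ofReal_exp_neg_infoIncrement m))]
  exact setLIntegral_div_measure_fiber_le ((measurable_walk 1).prodMk (measurable_walk (m + 1)))
    (fun v : G × G => p v.1 * piN p (m + 1) v.2) B

lemma lintegral_exp_neg_infoIncrement_le_one (hP : IsRWMeasure p P) (m : ℕ) :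
    ∫⁻ ω, ENNReal.ofReal (Real.exp (-infoIncrement p m ω)) ∂P ≤ 1 := by
  have hle := hP.setLIntegral_exp_neg_infoIncrement_le m univ
  rw [preimage_univ, setLIntegral_univ, indicator_univ, ENNReal.tsum_prod'] at hle
  simp only [ENNReal.tsum_mul_left, hP.tsum_piN, mul_one] at hle
  exact hle.trans_eq hP.isProb

/-- Conditioning on the first step costs `h(p^(m+1)) - h(p^m)` of information, which by Pinsker's
inequality bounds how far the first step moves the law of the walk. -/
lemma mul_measureReal_sub_le_entropySeq_sub (hP : IsRWMeasure p P)
    (hent : FiniteFirstMoment p (infoContent p 1)) (g : G) (A : Set G) (m : ℕ) {η : ℝ}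
    (hη : 0 < η) :
    (p g).toReal * (P.real {ω | g * walk ω m ∈ A} - P.real {ω | walk ω (m + 1) ∈ A}) ≤
      η + (entropySeq p (m + 1) - entropySeq p m) / η := by
  have := hP.1
  set S : Set (ℕ → G) := (fun ω => (walk ω 1, walk ω (m + 1))) ⁻¹' ({g} ×ˢ A)
  have hexp := hP.lintegral_exp_neg_infoIncrement_le_one m
  have hint := hP.integrable_infoIncrement hent m
  have hS : P.real S = (p g).toReal * P.real {ω | g * walk ω m ∈ A} := by
    simp only [measureReal_def, ← ENNReal.toReal_mul,
      ← hP.measure_walk_one_eq_inter_walk_succ_mem]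
    rfl
  have hSexp : ∫ ω in S, Real.exp (-infoIncrement p m ω) ∂P ≤
      (p g).toReal * P.real {ω | walk ω (m + 1) ∈ A} := by
    rw [integral_eq_lintegral_of_nonneg_ae (Eventually.of_forall fun ω => (Real.exp_pos _).le)
      (integrable_exp_neg hint.1 hexp).1.restrict, measureReal_def, ← ENNReal.toReal_mul]
    refine ENNReal.toReal_mono (ENNReal.mul_ne_top (hP.piN_one g ▸ hP.piN_ne_top 1 g)
      (measure_ne_top _ _)) ((hP.setLIntegral_exp_neg_infoIncrement_le m _).trans_eq ?_)
    rw [ENNReal.tsum_prod', tsum_eq_single g fun h hh => by simp [hh], hP.measure_walk_mem,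
      ← ENNReal.tsum_mul_left]
    exact tsum_congr fun y => by by_cases hy : y ∈ A <;> simp [hy]
  have hbound := measureReal_sub_setIntegral_exp_neg_le hint hexp S hη
  rw [hS, hP.integral_infoIncrement hent] at hbound
  linarith

/-- Summing the one-step bounds over `m < n`, the entropy increments telescope. -/
lemma mul_sum_sub_le_entropySeq (hP : IsRWMeasure p P)
    (hent : FiniteFirstMoment p (infoContent p 1)) (g : G) (A : Set G) (n : ℕ) {η : ℝ}
    (hη : 0 < η) :
    (p g).toReal * (∑ m ∈ Finset.range n, P.real {ω | g * walk ω m ∈ A} -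
      ∑ m ∈ Finset.range n, P.real {ω | walk ω m ∈ A} - 1) ≤ n * η + entropySeq p n / η := by
  have := hP.1
  have hsum := Finset.sum_le_sum fun m (_ : m ∈ Finset.range n) =>
    hP.mul_measureReal_sub_le_entropySeq_sub hent g A m hη
  rw [← Finset.mul_sum, Finset.sum_sub_distrib, Finset.sum_add_distrib, ← Finset.sum_div,
    Finset.sum_range_sub, entropySeq_zero, sub_zero, Finset.sum_const, Finset.card_range,
    nsmul_eq_mul] at hsum
  refine (mul_le_mul_of_nonneg_left ?_ ENNReal.toReal_nonneg).trans hsum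
  have hfirst := Finset.sum_range_succ' (fun m => P.real {ω | walk ω m ∈ A}) n
  have hlast := Finset.sum_range_succ (fun m => P.real {ω | walk ω m ∈ A}) n
  have hle : P.real {ω | walk ω n ∈ A} ≤ 1 := measureReal_le_one
  have hge : 0 ≤ P.real {ω | walk ω 0 ∈ A} := measureReal_nonneg
  linarith

lemma mem_asymptoticStabilizer_walkAverage (hP : IsRWMeasure p P)
    (hent : FiniteFirstMoment p (infoContent p 1)) (hh : HasEntropy p 0) {g : G} (hg : p g ≠ 0) :
    g ∈ asymptoticStabilizer (walkAverage P) := by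
  have := hP.1
  have hpos : 0 < (p g).toReal := ENNReal.toReal_pos hg (hP.piN_one g ▸ hP.piN_ne_top 1 g)
  refine mem_asymptoticStabilizer_of_eventually_le fun A ε hε => ?_
  set η := (p g).toReal * ε / 2 with hη
  have hη0 : 0 < η := by positivity
  have herr : Tendsto (fun n : ℕ => η + entropySeq p n / n / η + (p g).toReal / n) atTop
      (𝓝 (η + 0 / η + 0)) :=
    (tendsto_const_nhds.add (Tendsto.div_const hh η)).add (tendsto_const_div_atTop_nhds_zero_nat _)
  have hsmall : ∀ᶠ n : ℕ in atTop,
      η + entropySeq p n / n / η + (p g).toReal / n < (p g).toReal * ε :=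
    herr.eventually_lt_const (by rw [zero_div, add_zero, add_zero]; linarith)
  filter_upwards [(tendsto_add_atTop_nat 1).eventually hsmall] with N hN
  have hsum := hP.mul_sum_sub_le_entropySeq hent g A (N + 1) hη0
  rw [walkAverage_real_apply, walkAverage_real_apply]
  simp only [mem_ofPred_eq]
  set S := ∑ m ∈ Finset.range (N + 1), P.real {ω | g * walk ω m ∈ A}
  set T := ∑ m ∈ Finset.range (N + 1), P.real {ω | walk ω m ∈ A}
  have : (0 : ℝ) < N + 1 := by positivity
  push_cast at hN hsum
  have hmul : (p g).toReal * ((S - T) / (N + 1)) ≤ (p g).toReal * ε := by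
    calc (p g).toReal * ((S - T) / (N + 1))
        = ((p g).toReal * (S - T - 1)) / (N + 1) + (p g).toReal / (N + 1) := by ring
      _ ≤ ((N + 1) * η + entropySeq p (N + 1) / η) / (N + 1) + (p g).toReal / (N + 1) := by gcongr
      _ = η + entropySeq p (N + 1) / (N + 1) / η + (p g).toReal / (N + 1) := by field_simp
      _ ≤ (p g).toReal * ε := hN.le
  have := le_of_mul_le_mul_left hmul hpos
  rw [sub_div] at this
  linarith

lemma not_hasEntropy_zero (hP : IsRWMeasure p P) (hent : FiniteFirstMoment p (infoContent p 1))
    (hne : IsNonElemMeasure p) : ¬ HasEntropy p 0 := fun hh => by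
  have := hP.1
  obtain ⟨φ, hφ, hrange⟩ := hne
  refine not_isNonElementarySubgroup_asymptoticStabilizer (walkAverage P) ⟨φ, hφ, hrange.trans ?_⟩
  exact (Subgroup.closure_le _).2 fun g hg => hP.mem_asymptoticStabilizer_walkAverage hent hh hg

lemma drift_pos (hP : IsRWMeasure p P) (hf : IsLengthFunction f) (hg : FinExpGrowth f)
    (hm : FiniteFirstMoment p f) (hne : IsNonElemMeasure p) {l : ℝ} (hl : HasDrift p f l) :
    0 < l := by
  have hl0 : 0 ≤ l := ge_of_tendsto' hl fun n => div_nonneg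
    (tsum_nonneg fun x => mul_nonneg ENNReal.toReal_nonneg (hf.nonneg x)) n.cast_nonneg
  have hent := hP.finiteFirstMoment_infoContent hf.nonneg hg hm
  obtain ⟨h, hh⟩ := hP.exists_hasEntropy hent
  have hh0 : 0 ≤ h := ge_of_tendsto' hh fun n => div_nonneg
    (tsum_nonneg fun x => Real.negMulLog_nonneg ENNReal.toReal_nonneg
      (hP.toReal_piN_le_one n x)) n.cast_nonneg
  refine hl0.lt_of_ne' ?_
  rintro rfl
  obtain rfl := (hP.entropy_nonpos_of_drift_zero hf hg hm hh hl).antisymm hh0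
  exact hP.not_hasEntropy_zero hent hne hh

end IsRWMeasure

/-! ### Gromov products and the boundary quasi-metric -/

section GromovProduct
variable {X : Type*} [MetricSpace X] {o : X} {δ : ℝ}

lemma gp_comm (x y : X) : gp o x y = gp o y x := by
  simp only [gp, dist_comm x o, dist_comm o y, dist_comm x y]
  ring

lemma gp_nonneg (x y : X) : 0 ≤ gp o x y := by
  have := dist_triangle x o y
  simp only [gp]
  linarith

lemma dist_sub_dist_le_gp (x y : X) : dist o x - dist x y ≤ gp o x y := by
  have := dist_triangle o y x
  simp only [gp, dist_comm x o, dist_comm x y] at *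
  linarith

lemma dist_eq_sub_gp (o x y : X) : dist x y = dist o x + dist o y - 2 * gp o x y := by
  simp only [gp, dist_comm x o]
  ring

lemma IsHyperbolicWith.nonneg (hδ : IsHyperbolicWith X δ) (o : X) : 0 ≤ δ := by
  simpa [gp] using hδ o o o o

lemma eventually_le_gp_symm {u v : ℕ → X} {a : ℝ}
    (h : ∀ᶠ n : ℕ × ℕ in atTop, a ≤ gp o (u n.1) (v n.2)) :
    ∀ᶠ n : ℕ × ℕ in atTop, a ≤ gp o (v n.1) (u n.2) := by
  rw [← prod_atTop_atTop_eq] at h ⊢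
  filter_upwards [tendsto_prod_swap.eventually h] with n hn
  rwa [gp_comm]

lemma IsHyperbolicWith.eventually_le_gp_trans (hδ : IsHyperbolicWith X δ) {u v w : ℕ → X} {a : ℝ}
    (huv : ∀ᶠ n : ℕ × ℕ in atTop, a ≤ gp o (u n.1) (v n.2))
    (hvw : ∀ᶠ n : ℕ × ℕ in atTop, a ≤ gp o (v n.1) (w n.2)) :
    ∀ᶠ n : ℕ × ℕ in atTop, a - δ ≤ gp o (u n.1) (w n.2) := by
  obtain ⟨N, hN⟩ := eventually_atTop_prod_self'.1 (huv.and hvw)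
  refine eventually_atTop_prod_self'.2 ⟨N, fun i hi j hj => ?_⟩
  have := hδ (u i) (w j) (v N) o
  have := le_min (hN i hi N le_rfl).1 (hN N le_rfl j hj).2
  linarith

section Progress
variable {z : ℕ → X}

/-- Chaining the hyperbolicity inequality through steps of length `K` costs `δ` per step, which
the growth of `a` over such a step absorbs. -/
lemma IsHyperbolicWith.sub_le_gp_of_forall_le (hδ : IsHyperbolicWith X δ) {a : ℕ → ℝ} {K N : ℕ}
    (hK : 0 < K) (hnear : ∀ i ≥ N, ∀ m ≤ K, a i ≤ gp o (z i) (z (i + m)))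
    (hgrow : ∀ i ≥ N, a i ≤ a (i + K) - δ) (n : ℕ) :
    ∀ i ≥ N, a i - δ ≤ gp o (z i) (z (i + n)) := by
  induction n using Nat.strong_induction_on with
  | _ n ih =>
    intro i hi
    rcases le_or_gt n K with hn | hn
    · linarith [hnear i hi n hn, hδ.nonneg o]
    · have hfar := ih (n - K) (by omega) (i + K) (by omega)
      rw [show i + K + (n - K) = i + n by omega] at hfar
      have hmin : a i ≤ min (gp o (z i) (z (i + K))) (gp o (z (i + K)) (z (i + n))) :=
        le_min (hnear i hi K le_rfl) ((hgrow i hi).trans hfar)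
      linarith [hδ (z i) (z (i + n)) (z (i + K)) o]

lemma dist_add_le_of_dist_succ_le {e : ℝ} (he : 0 ≤ e) {i m K : ℕ} (hm : m ≤ K)
    (hstep : ∀ n ≥ i, dist (z n) (z (n + 1)) ≤ e * n) :
    dist (z i) (z (i + m)) ≤ e * K * (i + K) := by
  have hsum : dist (z i) (z (i + m)) ≤ ∑ _n ∈ Finset.Ico i (i + m), e * (i + K) :=
    dist_le_Ico_sum_of_dist_le (Nat.le_add_right i m) fun {n} hin hnm => by
      have : (n : ℝ) ≤ i + K := by exact_mod_cast (by omega : n ≤ i + K)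
      exact (hstep n hin).trans (by gcongr)
  rw [Finset.sum_const, Nat.card_Ico, Nat.add_sub_cancel_left, nsmul_eq_mul] at hsum
  have hmK : (m : ℝ) ≤ K := by exact_mod_cast hm
  calc dist (z i) (z (i + m)) ≤ m * (e * (i + K)) := hsum
    _ ≤ K * (e * (i + K)) := by gcongr
    _ = e * K * (i + K) := by ring

lemma IsHyperbolicWith.eventually_forall_ge_mul_le_gp (hδ : IsHyperbolicWith X δ) {l : ℝ}
    (hl : 0 < l) (hdist : ∀ ε > 0, ∀ᶠ n : ℕ in atTop, |dist o (z n) - l * n| ≤ ε * n)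
    (hstep : ∀ ε > 0, ∀ᶠ n : ℕ in atTop, dist (z n) (z (n + 1)) ≤ ε * n) {ε : ℝ} (hε : 0 < ε) :
    ∀ᶠ i : ℕ in atTop, ∀ j ≥ i, (l - ε) * i ≤ gp o (z i) (z j) := by
  obtain ⟨K, hK⟩ := exists_nat_gt (2 * δ / l)
  have hδ0 := hδ.nonneg o
  have hK0 : (0 : ℝ) < K := lt_of_le_of_lt (by positivity) hK
  rw [div_lt_iff₀ hl] at hK
  obtain ⟨e, he, hel, heε⟩ : ∃ e : ℝ, 0 < e ∧ e * (1 + K) ≤ l / 2 ∧ e * (1 + K) ≤ ε / 2 := by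
    refine ⟨min l ε / 2 / (1 + K), by positivity, ?_, ?_⟩ <;>
      rw [div_mul_cancel₀ _ (by positivity)]
    exacts [by linarith [min_le_left l ε], by linarith [min_le_right l ε]]
  obtain ⟨N, hN⟩ := eventually_atTop.1 ((hdist e he).and (hstep e he))
  let a : ℕ → ℝ := fun i => (l - e) * i - e * K * (i + K)
  have hnear : ∀ i ≥ N, ∀ m ≤ K, a i ≤ gp o (z i) (z (i + m)) := fun i hi m hm => by
    have := dist_add_le_of_dist_succ_le he.le hm fun n hn => (hN n (hi.trans hn)).2
    have := (abs_le.1 (hN i hi).1).1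
    have := dist_sub_dist_le_gp (o := o) (z i) (z (i + m))
    simp only [a]
    linarith
  have hgrow : ∀ i ≥ N, a i ≤ a (i + K) - δ := fun i _ => by
    simp only [a]
    push_cast
    nlinarith
  have hfar := hδ.sub_le_gp_of_forall_le (by exact_mod_cast hK0) hnear hgrow
  obtain ⟨M, hM⟩ := exists_nat_gt ((e * K * K + δ) * 2 / ε)
  rw [div_lt_iff₀ hε] at hM
  filter_upwards [eventually_ge_atTop N, eventually_ge_atTop M] with i hiN hiM j hij
  have hij' := hfar (j - i) i hiN
  rw [Nat.add_sub_cancel' hij] at hij'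
  refine le_trans ?_ hij'
  have : (M : ℝ) ≤ i := by exact_mod_cast hiM
  simp only [a]
  nlinarith

end Progress

lemma bndRel_iff_forall_eventually_le {u v : DivSeq X o} :
    bndRel o u v ↔ ∀ a, ∀ᶠ n : ℕ × ℕ in atTop, a ≤ gp o (u.1 n.1) (v.1 n.2) :=
  tendsto_atTop

lemma IsHyperbolicWith.equivalence_bndRel (hδ : IsHyperbolicWith X δ) :
    Equivalence (bndRel o : DivSeq X o → DivSeq X o → Prop) where
  refl u := u.2
  symm h := bndRel_iff_forall_eventually_le.2 fun a =>
    eventually_le_gp_symm (bndRel_iff_forall_eventually_le.1 h a)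
  trans h h' := bndRel_iff_forall_eventually_le.2 fun a => by
    have := hδ.eventually_le_gp_trans (bndRel_iff_forall_eventually_le.1 h (a + δ))
      (bndRel_iff_forall_eventually_le.1 h' (a + δ))
    simpa using this

lemma IsHyperbolicWith.mkB_eq_mkB_iff (hδ : IsHyperbolicWith X δ) {u v : DivSeq X o} :
    mkB o u = mkB o v ↔ bndRel o u v :=
  ⟨fun h => hδ.equivalence_bndRel.eqvGen_iff.1 (Quot.eqvGen_exact h), fun h => Quot.sound h⟩

/-- The sequence `u` is divergent and represents the boundary point `ξ`. -/
def ConvergesTo (o : X) (u : ℕ → X) (ξ : Boundary X o) : Prop :=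
  ∃ h : IsDivergent o u, mkB o ⟨u, h⟩ = ξ

lemma exists_convergesTo (ξ : Boundary X o) : ∃ u, ConvergesTo o u ξ := by
  obtain ⟨u, rfl⟩ := Quot.exists_rep ξ
  exact ⟨u.1, u.2, rfl⟩

lemma liminf_gp_nonneg (u v : ℕ → X) :
    0 ≤ liminf (fun n : ℕ × ℕ => gp o (u n.1) (v n.2)) atTop := by
  rw [liminf_eq]
  by_cases hb : BddAbove {a | ∀ᶠ n : ℕ × ℕ in atTop, a ≤ gp o (u n.1) (v n.2)}
  · exact le_csSup hb (.of_forall fun _ => gp_nonneg _ _)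
  · rw [Real.sSup_of_not_bddAbove hb]

namespace ConvergesTo
variable {u v : ℕ → X} {ξ η : Boundary X o} {a : ℝ}

lemma eventually_le_gp (hu : ConvergesTo o u ξ) (hv : ConvergesTo o v ξ)
    (hδ : IsHyperbolicWith X δ) (a : ℝ) : ∀ᶠ n : ℕ × ℕ in atTop, a ≤ gp o (u n.1) (v n.2) := by
  obtain ⟨⟨hu, rfl⟩, ⟨hv, heq⟩⟩ := hu, hv
  exact bndRel_iff_forall_eventually_le.1 (hδ.mkB_eq_mkB_iff.1 heq.symm) a

lemma isCoboundedUnder_gp (hu : ConvergesTo o u ξ) (hv : ConvergesTo o v η) (hne : ξ ≠ η) :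
    IsCoboundedUnder (· ≥ ·) atTop fun n : ℕ × ℕ => gp o (u n.1) (v n.2) := by
  obtain ⟨⟨hu, rfl⟩, ⟨hv, rfl⟩⟩ := hu, hv
  obtain ⟨a, ha⟩ : ∃ a, ¬ ∀ᶠ n : ℕ × ℕ in atTop, a ≤ gp o (u n.1) (v n.2) := by
    by_contra! h
    exact hne (Quot.sound (bndRel_iff_forall_eventually_le.2 h))
  exact .of_frequently_le ((not_eventually.1 ha).mono fun _ h => (not_le.1 h).le)

lemma eventually_le_gp_of_qB_lt (hu : ConvergesTo o u ξ) (hv : ConvergesTo o v η)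
    (hδ : IsHyperbolicWith X δ) (h : qB o ξ η < Real.exp (-a)) :
    ∀ᶠ n : ℕ × ℕ in atTop, a ≤ gp o (u n.1) (v n.2) := by
  by_cases hne : ξ = η
  · exact hu.eventually_le_gp (hne ▸ hv) hδ a
  · rw [qB, if_neg hne, Real.exp_lt_exp, neg_lt_neg_iff] at h
    have hgpB : gpB o ξ η ≤ liminf (fun n : ℕ × ℕ => gp o (u n.1) (v n.2)) atTop := by
      refine csInf_le ⟨0, ?_⟩ ⟨⟨u, hu.1⟩, ⟨v, hv.1⟩, hu.2, hv.2, rfl⟩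
      rintro _ ⟨u', v', -, -, rfl⟩
      exact liminf_gp_nonneg _ _
    exact (eventually_lt_of_lt_liminf (h.trans_le hgpB)
      ⟨0, eventually_map.2 (.of_forall fun _ => gp_nonneg _ _)⟩).mono fun _ h => h.le

lemma qB_le_exp_of_eventually_le_gp (hu : ConvergesTo o u ξ) (hv : ConvergesTo o v η)
    (hδ : IsHyperbolicWith X δ) (h : ∀ᶠ n : ℕ × ℕ in atTop, a ≤ gp o (u n.1) (v n.2)) :
    qB o ξ η ≤ Real.exp (-(a - 2 * δ)) := by
  by_cases hne : ξ = η
  · rw [qB, if_pos hne]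
    positivity
  rw [qB, if_neg hne, Real.exp_le_exp, neg_le_neg_iff]
  refine le_csInf ⟨_, ⟨u, hu.1⟩, ⟨v, hv.1⟩, hu.2, hv.2, rfl⟩ ?_
  rintro _ ⟨u', v', hu', hv', rfl⟩
  have hcu : ConvergesTo o u'.1 ξ := ⟨u'.2, hu'⟩
  have hcv : ConvergesTo o v'.1 η := ⟨v'.2, hv'⟩
  have huv := hδ.eventually_le_gp_trans (hcu.eventually_le_gp hu hδ a) h
  have huv' := hδ.eventually_le_gp_trans huv (hv.eventually_le_gp hcv hδ (a - δ))
  refine le_liminf_of_le (hcu.isCoboundedUnder_gp hcv hne) (huv'.mono fun _ h => ?_)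
  linarith

end ConvergesTo

/-- `q` is a quasi-ultrametric with constant `exp κ`, except that separation of points is not
required. Logarithmic scales `exp (-k)` are used throughout, so `κ` is the loss in `k`. -/
structure IsQuasiUltrametric {A : Type*} (κ : ℝ) (q : A → A → ℝ) : Prop where
  self : ∀ ξ, q ξ ξ = 0
  comm : ∀ ξ η, q ξ η = q η ξ
  le_max : ∀ ξ η ζ, q ξ ζ ≤ Real.exp κ * max (q ξ η) (q η ζ)

namespace IsQuasiUltrametric
variable {A B : Type*} {κ κ' a : ℝ} {q : A → A → ℝ} {q' : B → B → ℝ}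

lemma lt_exp (hq : IsQuasiUltrametric κ q) {ξ η ζ : A} (h : q ξ η < Real.exp (-a))
    (h' : q η ζ < Real.exp (-a)) : q ξ ζ < Real.exp (-(a - κ)) := by
  have := mul_lt_mul_of_pos_left (max_lt h h') (Real.exp_pos κ)
  rw [← Real.exp_add] at this
  refine (hq.le_max ξ η ζ).trans_lt ?_
  convert this using 2
  ring

lemma nonneg (hq : IsQuasiUltrametric κ q) (ξ η : A) : 0 ≤ q ξ η := by
  have := hq.le_max ξ η ξ
  rw [hq.self, hq.comm η, max_self] at this
  exact nonneg_of_mul_nonneg_right this (Real.exp_pos κ)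

lemma prod_max (hq : IsQuasiUltrametric κ q) (hq' : IsQuasiUltrametric κ' q') :
    IsQuasiUltrametric (max κ κ') fun ξ η : A × B => max (q ξ.1 η.1) (q' ξ.2 η.2) where
  self ξ := by simp only [hq.self, hq'.self, max_self]
  comm ξ η := by rw [hq.comm, hq'.comm]
  le_max ξ η ζ := by
    have hnonneg := (hq.nonneg ξ.1 η.1).trans (le_max_left _ (q η.1 ζ.1))
    have hnonneg' := (hq'.nonneg ξ.2 η.2).trans (le_max_left _ (q' η.2 ζ.2))
    refine max_le ((hq.le_max ξ.1 η.1 ζ.1).trans ?_) ((hq'.le_max ξ.2 η.2 ζ.2).trans ?_)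
    · exact mul_le_mul (Real.exp_le_exp.2 (le_max_left _ _))
        (max_le_max (le_max_left _ _) (le_max_left _ _)) hnonneg (Real.exp_pos _).le
    · exact mul_le_mul (Real.exp_le_exp.2 (le_max_right _ _))
        (max_le_max (le_max_right _ _) (le_max_right _ _)) hnonneg' (Real.exp_pos _).le

end IsQuasiUltrametric

lemma qB_self (ξ : Boundary X o) : qB o ξ ξ = 0 := if_pos rfl

lemma gpB_comm (ξ η : Boundary X o) : gpB o ξ η = gpB o η ξ := by
  have hliminf : ∀ u v : ℕ → X, liminf (fun n : ℕ × ℕ => gp o (u n.1) (v n.2)) atTop =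
      liminf (fun n : ℕ × ℕ => gp o (v n.1) (u n.2)) atTop := fun u v => by
    simp only [liminf_eq]
    congr 1
    ext a
    exact ⟨eventually_le_gp_symm, eventually_le_gp_symm⟩
  simp only [gpB]
  congr 1
  ext t
  constructor <;>
  · rintro ⟨u, v, hu, hv, rfl⟩
    exact ⟨v, u, hv, hu, hliminf _ _⟩

lemma qB_comm (ξ η : Boundary X o) : qB o ξ η = qB o η ξ := by
  simp only [qB, gpB_comm ξ η, eq_comm]

lemma qB_nonneg (ξ η : Boundary X o) : 0 ≤ qB o ξ η := by
  unfold qB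
  split_ifs <;> positivity

lemma qB_le_exp_of_lt (hδ : IsHyperbolicWith X δ) {ξ η ζ : Boundary X o} {a : ℝ}
    (h : qB o ξ η < Real.exp (-a)) (h' : qB o η ζ < Real.exp (-a)) :
    qB o ξ ζ ≤ Real.exp (-(a - 3 * δ)) := by
  obtain ⟨u, hu⟩ := exists_convergesTo ξ
  obtain ⟨v, hv⟩ := exists_convergesTo η
  obtain ⟨w, hw⟩ := exists_convergesTo ζ
  refine (hu.qB_le_exp_of_eventually_le_gp hw hδ (hδ.eventually_le_gp_trans
    (hu.eventually_le_gp_of_qB_lt hv hδ h) (hv.eventually_le_gp_of_qB_lt hw hδ h'))).trans_eq ?_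
  ring_nf

lemma IsHyperbolicWith.isQuasiUltrametric_qB (hδ : IsHyperbolicWith X δ) (o : X) :
    IsQuasiUltrametric (3 * δ) (qB o) where
  self := qB_self
  comm := qB_comm
  le_max ξ η ζ := by
    rw [← div_le_iff₀' (Real.exp_pos _)]
    refine le_of_forall_gt_imp_ge_of_dense fun r hr => ?_
    have hr0 : 0 < r := (qB_nonneg ξ η).trans_lt ((le_max_left _ _).trans_lt hr)
    have hexp : Real.exp (-(-Real.log r)) = r := by rw [neg_neg, Real.exp_log hr0]
    have := qB_le_exp_of_lt hδ (a := -Real.log r)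
      (by rw [hexp]; exact (le_max_left _ _).trans_lt hr)
      (by rw [hexp]; exact (le_max_right _ _).trans_lt hr)
    rw [div_le_iff₀' (Real.exp_pos _)]
    refine this.trans_eq ?_
    rw [neg_sub, sub_neg_eq_add, Real.exp_add, Real.exp_log hr0]

lemma measurableSet_qball (ξ : Boundary X o) (r : ℝ) : MeasurableSet (qball (qB o) ξ r) :=
  MeasurableSpace.measurableSet_generateFrom ⟨ξ, r, rfl⟩

lemma measurableSet_qball_qbb {Xs : Type*} [MetricSpace Xs] {os : Xs}
    (ξ : Boundary X o × Boundary Xs os) (r : ℝ) : MeasurableSet (qball (qbb o os) ξ r) := by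
  have hprod : qball (qbb o os) ξ r = qball (qB o) ξ.1 r ×ˢ qball (qB os) ξ.2 r := by
    ext η
    simp only [qball, qbb, mem_ofPred_eq, max_lt_iff, Set.mem_prod]
  rw [hprod]
  exact (measurableSet_qball _ _).prod (measurableSet_qball _ _)

/-- The sequence `z` progresses regularly at time `i`: it escapes from `o` at rate about `l`, and
its later positions lie behind `z i` up to a linear error `ε i`. -/
structure IsRegularAt (o : X) (l ε : ℝ) (z : ℕ → X) (i : ℕ) : Prop where
  dist_le : dist o (z i) ≤ (l + ε) * i
  le_gp : ∀ j ≥ i, (l - ε) * i ≤ gp o (z i) (z j)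

namespace IsRegularAt
variable {l ε : ℝ} {u v : ℕ → X} {ξ η : Boundary X o} {i : ℕ}

lemma dist_le_of_qB_lt (hu : IsRegularAt o l ε u i) (hv : IsRegularAt o l ε v i)
    (hδ : IsHyperbolicWith X δ) (hξ : ConvergesTo o u ξ) (hη : ConvergesTo o v η) {a κ : ℝ}
    (hκ : 0 ≤ κ) (ha : (l - ε) * i - κ ≤ a) (h : qB o ξ η < Real.exp (-a)) :
    dist (u i) (v i) ≤ 4 * ε * i + 2 * κ + 4 * δ := by
  obtain ⟨N, hN⟩ := eventually_atTop_prod_self'.1 (hξ.eventually_le_gp_of_qB_lt hη hδ h)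
  let M := max N i
  have huM := hu.le_gp M (le_max_right _ _)
  have huv : a ≤ gp o (u M) (v M) := hN M (le_max_left _ _) M (le_max_left _ _)
  have hvM := hv.le_gp M (le_max_right _ _)
  rw [gp_comm] at hvM
  have hδ0 := hδ.nonneg o
  have huvM : (l - ε) * i - κ - δ ≤ gp o (u i) (v M) := by
    have : (l - ε) * i - κ ≤ min (gp o (u i) (u M)) (gp o (u M) (v M)) :=
      le_min (by linarith) (by linarith)
    linarith [hδ (u i) (v M) (u M) o]
  have huvi : (l - ε) * i - κ - 2 * δ ≤ gp o (u i) (v i) := by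
    have : (l - ε) * i - κ - δ ≤ min (gp o (u i) (v M)) (gp o (v M) (v i)) :=
      le_min huvM (by linarith)
    linarith [hδ (u i) (v i) (v M) o]
  linarith [dist_eq_sub_gp o (u i) (v i), hu.dist_le, hv.dist_le]

lemma qB_le_exp (hu : IsRegularAt o l ε u i) (hv : IsRegularAt o l ε v i)
    (hδ : IsHyperbolicWith X δ) (hξ : ConvergesTo o u ξ) (hη : ConvergesTo o v η)
    (huv : u i = v i) : qB o ξ η ≤ Real.exp (-((l - ε) * i - 3 * δ)) := by
  refine (hξ.qB_le_exp_of_eventually_le_gp (a := (l - ε) * i - δ) hη hδ ?_).trans_eq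
    (by ring_nf)
  refine eventually_atTop_prod_self'.2 ⟨i, fun j hj k hk => ?_⟩
  have hju := hu.le_gp j hj
  have hkv := hv.le_gp k hk
  rw [gp_comm] at hju
  rw [← huv] at hkv
  have := le_min hju hkv
  linarith [hδ (u j) (v k) (u i) o]

end IsRegularAt
end GromovProduct

section Orbit
variable {X : Type*} [MetricSpace X] {o : X} {Γ : Subgroup (X ≃ᵢ X)}

lemma dist_orbit (o : X) (x y : Γ) :
    dist ((x : X ≃ᵢ X) o) ((y : X ≃ᵢ X) o) = dist o (((x⁻¹ * y : Γ) : X ≃ᵢ X) o) := by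
  rw [← (x : X ≃ᵢ X).dist_eq o, ← IsometryEquiv.mul_apply, ← Subgroup.coe_mul,
    mul_inv_cancel_left]

lemma isLengthFunction_dist (o : X) (Γ : Subgroup (X ≃ᵢ X)) :
    IsLengthFunction fun x : Γ => dist o ((x : X ≃ᵢ X) o) where
  nonneg _ := dist_nonneg
  one := dist_self o
  mul_le x y := by
    refine (dist_triangle o ((x : X ≃ᵢ X) o) _).trans_eq ?_
    rw [dist_orbit, inv_mul_cancel_left]

lemma FinExpGrowth.exists_card_le_of_dist_le
    (hg : FinExpGrowth fun x : Γ => dist o ((x : X ≃ᵢ X) o)) :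
    ∃ c > 0, ∀ R ≥ 0, ∀ T : Set Γ,
      (∀ x ∈ T, ∀ y ∈ T, dist ((x : X ≃ᵢ X) o) ((y : X ≃ᵢ X) o) ≤ R) →
      ∃ S : Finset Γ, T ⊆ S ∧ (S.card : ℝ) ≤ c * Real.exp (c * R) := by
  obtain ⟨c, hc, hball⟩ := hg.exists_ncard_setOf_le
  refine ⟨c, hc, fun R hR T hT => ?_⟩
  rcases T.eq_empty_or_nonempty with rfl | ⟨x, hx⟩
  · exact ⟨∅, empty_subset _, by simpa using by positivity⟩
  obtain ⟨hfin, hcard⟩ := hball R hR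
  refine ⟨hfin.toFinset.image (x * ·), fun y hy => ?_, ?_⟩
  · rw [Finset.mem_coe, Finset.mem_image]
    refine ⟨x⁻¹ * y, ?_, mul_inv_cancel_left x y⟩
    rw [Set.Finite.mem_toFinset, mem_ofPred_eq, ← dist_orbit]
    exact hT x hx y hy
  · rw [Set.ncard_eq_toFinset_card _ hfin] at hcard
    exact (Nat.cast_le.2 Finset.card_image_le).trans hcard

lemma IsHyperbolicWith.exists_card_regular_orbit_le {δ : ℝ} (hδ : IsHyperbolicWith X δ)
    (hg : FinExpGrowth fun x : Γ => dist o ((x : X ≃ᵢ X) o)) (l : ℝ) {κ : ℝ} (hκ : 0 ≤ κ) :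
    ∃ c > 0, ∀ (ξ : Boundary X o) (a ε : ℝ) (i : ℕ), 0 ≤ ε → l * i - κ ≤ a →
      ∃ S : Finset Γ, (S.card : ℝ) ≤ Real.exp (c * (ε * i + 1)) ∧
        ∀ (w : ℕ → Γ) (η : Boundary X o), IsRegularAt o l ε (fun n => (w n : X ≃ᵢ X) o) i →
          ConvergesTo o (fun n => (w n : X ≃ᵢ X) o) η → qB o ξ η < Real.exp (-a) → w i ∈ S := by
  obtain ⟨c, hc, hcount⟩ := hg.exists_card_le_of_dist_le
  have hδ0 := hδ.nonneg o
  let κ' := κ + 3 * δ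
  refine ⟨c * (2 * κ' + 4 * δ + 4) + c, by positivity, fun ξ a ε i hε hi => ?_⟩
  let T : Set Γ := {g | ∃ (w : ℕ → Γ) (η : Boundary X o),
    IsRegularAt o l ε (fun n => (w n : X ≃ᵢ X) o) i ∧
    ConvergesTo o (fun n => (w n : X ≃ᵢ X) o) η ∧ qB o ξ η < Real.exp (-a) ∧ w i = g}
  have hεi : 0 ≤ ε * i := by positivity
  have hR : 0 ≤ 4 * ε * i + 2 * κ' + 4 * δ := by positivity
  have hT : ∀ x ∈ T, ∀ y ∈ T,
      dist ((x : X ≃ᵢ X) o) ((y : X ≃ᵢ X) o) ≤ 4 * ε * i + 2 * κ' + 4 * δ := by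
    rintro _ ⟨w, η, hw, hη, hq, rfl⟩ _ ⟨w', η', hw', hη', hq', rfl⟩
    rw [qB_comm] at hq
    exact hw.dist_le_of_qB_lt hw' hδ hη hη' (by positivity) (by simp only [κ']; linarith)
      ((hδ.isQuasiUltrametric_qB o).lt_exp hq hq')
  obtain ⟨S, hTS, hS⟩ := hcount _ hR T hT
  refine ⟨S, hS.trans ?_, fun w η hw hη hq => hTS ⟨w, η, hw, hη, hq, rfl⟩⟩
  have hcexp : c ≤ Real.exp c := by linarith [Real.add_one_le_exp c]
  refine (mul_le_mul_of_nonneg_right hcexp (Real.exp_nonneg _)).trans ?_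
  rw [← Real.exp_add, Real.exp_le_exp]
  have : 0 ≤ c * (2 * κ' + 4 * δ) * (ε * i) := by positivity
  have : 0 ≤ c * (ε * i) := by positivity
  nlinarith

end Orbit

/-! ### Counting typical trajectories -/

lemma eventually_abs_sub_le_of_tendsto_div {u : ℕ → ℝ} {γ ε : ℝ}
    (h : Tendsto (fun n : ℕ => u n / n) atTop (𝓝 γ)) (hε : 0 < ε) :
    ∀ᶠ n : ℕ in atTop, |u n - γ * n| ≤ ε * n := by
  filter_upwards [(Metric.tendsto_nhds.1 h) ε hε, eventually_gt_atTop 0] with n hn hn0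
  have hn0' : (0 : ℝ) < n := Nat.cast_pos.2 hn0
  rw [Real.dist_eq] at hn
  calc |u n - γ * n| = |u n / n - γ| * n := by
        rw [← abs_of_pos hn0', ← abs_mul, abs_of_pos hn0', sub_mul, div_mul_cancel₀ _ hn0'.ne']
    _ ≤ ε * n := by gcongr

/-- The point `x` has, up to the error `ε i`, the typical information content `h i` for the
`i`-th convolution power of `p`. -/
structure IsTypicalAt {G : Type*} [Group G] (p : G → ℝ≥0∞) (h ε : ℝ) (i : ℕ) (x : G) : Prop where
  piN_ne_zero : piN p i x ≠ 0
  abs_sub_le : |infoContent p i x - h * i| ≤ ε * i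

lemma mul_sub_abs_le_mul_floor (h : ℝ) {x : ℝ} (hx : 0 ≤ x) : h * x - |h| ≤ h * ⌊x⌋₊ := by
  have hfloor := Nat.floor_le hx
  have hlt := (Nat.lt_floor_add_one x).le
  rcases abs_cases h with ⟨habs, h0⟩ | ⟨habs, h0⟩ <;> rw [habs] <;> nlinarith

lemma add_div_mul_sub_le_floor (h h' : ℝ) {l l' k : ℝ} (hl : 0 ≤ l) (hl' : 0 ≤ l') (hk : 0 ≤ k) :
    (h / l + h' / l') * k - (|h| + |h'|) ≤ h * ⌊k / l⌋₊ + h' * ⌊k / l'⌋₊ := by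
  have hfloor := mul_sub_abs_le_mul_floor h (div_nonneg hk hl)
  have hfloor' := mul_sub_abs_le_mul_floor h' (div_nonneg hk hl')
  have : (h / l + h' / l') * k = h * (k / l) + h' * (k / l') := by ring
  linarith

lemma mul_floor_div_le_and_floor_div_le {l l' k : ℝ} (hl : 0 < l) (hl' : 0 ≤ l') (hk : 0 ≤ k) :
    l * ⌊k / l⌋₊ ≤ k ∧ (⌊k / l⌋₊ : ℝ) ≤ (1 / l + 1 / l') * k := by
  have hfloor : (⌊k / l⌋₊ : ℝ) ≤ k / l := Nat.floor_le (by positivity)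
  refine ⟨(le_div_iff₀' hl).1 hfloor, hfloor.trans ?_⟩
  rw [add_mul, one_div_mul_eq_div]
  exact le_add_of_nonneg_right (by positivity)

lemma mul_mul_exp_le_exp {s t k ε L c N₁ N₂ A B H : ℝ} (hε : 0 ≤ ε) (hk : 0 ≤ k)
    (hst : s ≤ t) (ht : t ≤ L * k) (hL : 0 ≤ L) (hc : 0 ≤ c) (hB : 0 ≤ B) (hN₁ : 0 ≤ N₁)
    (h₁ : N₁ ≤ Real.exp (2 * c * (ε * s + 1))) (h₂ : N₂ ≤ Real.exp (c * (ε * t + 1)))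
    (hH : A - B ≤ H) :
    N₁ * N₂ * Real.exp (-(H - ε * (2 * s + t))) ≤
      Real.exp (-A + (B + 3 * L + 3 * c * (L + 1)) * (ε * k + 1)) := by
  have hN : N₁ * N₂ ≤ Real.exp (2 * c * (ε * s + 1)) * Real.exp (c * (ε * t + 1)) :=
    mul_le_mul_of_nonneg h₁ h₂ hN₁ (Real.exp_nonneg _)
  refine (mul_le_mul_of_nonneg_right hN (Real.exp_nonneg _)).trans ?_
  rw [← Real.exp_add, ← Real.exp_add, Real.exp_le_exp]
  have : 0 ≤ ε * k := by positivity
  have hεt : ε * t ≤ L * (ε * k) := by nlinarith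
  have hεs : ε * s ≤ L * (ε * k) := by nlinarith
  have hbound₁ : 2 * c * (ε * s + 1) ≤ 2 * c * (L * (ε * k) + 1) := by gcongr
  have hbound₂ : c * (ε * t + 1) ≤ c * (L * (ε * k) + 1) := by gcongr
  have hBεk : 0 ≤ B * (ε * k) := by positivity
  have hcεk : 0 ≤ c * (ε * k) := by positivity
  have hcL : 0 ≤ c * L := by positivity
  linarith

namespace IsRWMeasure
variable {G C : Type*} [Group G] [Countable G] [MeasurableSpace G] [DiscreteMeasurableSpace G]
  [Group C] [Countable C] [MeasurableSpace C] [DiscreteMeasurableSpace C]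
  {p : G → ℝ≥0∞} {P : Measure (ℕ → G)} {q : C → ℝ≥0∞} {h h' ε : ℝ} {i s t : ℕ} {x : G}

lemma piN_le_of_isTypicalAt (hP : IsRWMeasure p P) (hx : IsTypicalAt p h ε i x) :
    piN p i x ≤ ENNReal.ofReal (Real.exp (-((h - ε) * i))) := by
  rw [hP.piN_eq_ofReal_exp hx.piN_ne_zero]
  have := (abs_le.1 hx.abs_sub_le).1
  exact ENNReal.ofReal_le_ofReal (Real.exp_le_exp.2 (by linarith))

lemma le_piN_of_isTypicalAt (hP : IsRWMeasure p P) (hx : IsTypicalAt p h ε i x) :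
    ENNReal.ofReal (Real.exp (-((h + ε) * i))) ≤ piN p i x := by
  rw [hP.piN_eq_ofReal_exp hx.piN_ne_zero]
  have := (abs_le.1 hx.abs_sub_le).2
  exact ENNReal.ofReal_le_ofReal (Real.exp_le_exp.2 (by linarith))

lemma ae_eventually_isTypicalAt (hP : IsRWMeasure p P)
    (hent : FiniteFirstMoment p (infoContent p 1)) (hh : HasEntropy p h) :
    ∀ᵐ ω ∂P, ∀ ε > 0, ∀ᶠ i in atTop, IsTypicalAt p h ε i (walk ω i) := by
  filter_upwards [hP.ae_tendsto_infoContent_div hent hh, hP.ae_piN_walk_ne_zero]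
    with ω hlim hne ε hε
  filter_upwards [eventually_abs_sub_le_of_tendsto_div hlim hε] with i hi
  exact ⟨hne 0 i, hi⟩

lemma measure_walk_eq_and_map_eq (hP : IsRWMeasure p P) (φ : G →* C)
    (hQ : IsRWMeasure q (P.map fun ω i => φ (ω i))) (hst : s ≤ t) (x : G) (y : C) :
    P {ω | walk ω s = x ∧ φ (walk ω t) = y} = piN p s x * piN q (t - s) ((φ x)⁻¹ * y) := by
  have hmeas : MeasurableSet {ω : ℕ → G | φ (walk ω (t - s)) = (φ x)⁻¹ * y} :=
    (Measurable.of_discrete.comp (measurable_walk _)) (measurableSet_singleton _)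
  have hsplit : {ω : ℕ → G | walk ω s = x ∧ φ (walk ω t) = y} =
      {ω | walk ω s = x} ∩ shift^[s] ⁻¹' {ω | φ (walk ω (t - s)) = (φ x)⁻¹ * y} := by
    ext ω
    have hwalk := walk_add ω s (t - s)
    rw [Nat.add_sub_cancel' hst] at hwalk
    simp only [mem_inter_iff, mem_ofPred_eq, mem_preimage, hwalk, map_mul]
    refine and_congr_right fun hx => ?_
    rw [hx, eq_inv_mul_iff_mul_eq]
  have hmap : P {ω | φ (walk ω (t - s)) = (φ x)⁻¹ * y} = piN q (t - s) ((φ x)⁻¹ * y) := by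
    rw [← hQ.measure_walk_eq, Measure.map_apply]
    · simp only [walk_map, preimage_ofPred_eq]
    · exact measurable_map_increments φ
    · exact measurable_walk _ (measurableSet_singleton _)
  rw [hsplit, hP.measure_walk_inter_shift s x hmeas,
    hP.measure_walk_eq, hmap]

/-- The chain rule: the pair (`walk ω s`, `φ (walk ω t)`) carries the information of the walk at
time `s` and of its image between the times `s` and `t`. -/
lemma measure_walk_eq_and_map_eq_le (hP : IsRWMeasure p P) (φ : G →* C)
    (hQ : IsRWMeasure q (P.map fun ω i => φ (ω i))) (hst : s ≤ t) {y : C}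
    (hx : IsTypicalAt p h ε s x) (hφx : IsTypicalAt q h' ε s (φ x)) (hy : IsTypicalAt q h' ε t y) :
    P {ω | walk ω s = x ∧ φ (walk ω t) = y} ≤
      ENNReal.ofReal (Real.exp (-(h * s + h' * (t - s) - ε * (2 * s + t)))) := by
  have hconv := hQ.piN_mul_le s (t - s) (φ x) ((φ x)⁻¹ * y)
  rw [Nat.add_sub_cancel' hst, mul_inv_cancel_left] at hconv
  have hmul : P {ω | walk ω s = x ∧ φ (walk ω t) = y} *
      ENNReal.ofReal (Real.exp (-((h' + ε) * s))) ≤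
      ENNReal.ofReal (Real.exp (-((h - ε) * s))) * ENNReal.ofReal (Real.exp (-((h' - ε) * t))) :=
    calc _ ≤ P {ω | walk ω s = x ∧ φ (walk ω t) = y} * piN q s (φ x) := by
          gcongr; exact hQ.le_piN_of_isTypicalAt hφx
      _ = piN p s x * (piN q s (φ x) * piN q (t - s) ((φ x)⁻¹ * y)) := by
          rw [hP.measure_walk_eq_and_map_eq φ hQ hst]; ring
      _ ≤ piN p s x * piN q t y := by gcongr
      _ ≤ _ := mul_le_mul' (hP.piN_le_of_isTypicalAt hx) (hQ.piN_le_of_isTypicalAt hy)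
  rw [← ENNReal.ofReal_mul (Real.exp_nonneg _), ← Real.exp_add] at hmul
  have hdiv : Real.exp (-(h * s + h' * (t - s) - ε * (2 * s + t))) =
      Real.exp (-((h - ε) * s) + -((h' - ε) * t)) / Real.exp (-((h' + ε) * s)) := by
    rw [← Real.exp_sub]
    ring_nf
  rw [hdiv, ENNReal.ofReal_div_of_pos (Real.exp_pos _)]
  exact (ENNReal.le_div_iff_mul_le (.inl (by simp [Real.exp_pos])) (.inl ENNReal.ofReal_ne_top)).2
    hmul

lemma measure_le_card_mul_exp (hP : IsRWMeasure p P) (φ : G →* C)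
    (hQ : IsRWMeasure q (P.map fun ω i => φ (ω i))) (hst : s ≤ t) {E : Set (ℕ → G)}
    (S : Finset G) (T : Finset C)
    (hE : ∀ ω ∈ E, (walk ω s ∈ S ∧ φ (walk ω t) ∈ T) ∧ IsTypicalAt p h ε s (walk ω s) ∧
      IsTypicalAt q h' ε s (φ (walk ω s)) ∧ IsTypicalAt q h' ε t (φ (walk ω t))) :
    P E ≤ ENNReal.ofReal
      (S.card * T.card * Real.exp (-(h * s + h' * (t - s) - ε * (2 * s + t)))) := by
  have hcover : E ⊆ ⋃ x ∈ S ×ˢ T, {ω | walk ω s = x.1 ∧ φ (walk ω t) = x.2} ∩ E := fun ω hω =>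
    mem_iUnion₂.2 ⟨(walk ω s, φ (walk ω t)), Finset.mem_product.2 (hE ω hω).1, ⟨rfl, rfl⟩, hω⟩
  have hpiece : ∀ x ∈ S ×ˢ T, P ({ω | walk ω s = x.1 ∧ φ (walk ω t) = x.2} ∩ E) ≤
      ENNReal.ofReal (Real.exp (-(h * s + h' * (t - s) - ε * (2 * s + t)))) := by
    rintro ⟨x, y⟩ _
    rcases ({ω | walk ω s = x ∧ φ (walk ω t) = y} ∩ E).eq_empty_or_nonempty
      with hempty | ⟨ω, ⟨rfl, rfl⟩, hωE⟩
    · simp only [hempty, measure_empty, zero_le]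
    · obtain ⟨-, hs, hφs, ht⟩ := hE ω hωE
      exact (measure_mono inter_subset_left).trans
        (hP.measure_walk_eq_and_map_eq_le φ hQ hst hs hφs ht)
  refine (measure_mono hcover).trans ((measure_biUnion_finset_le _ _).trans
    ((Finset.sum_le_sum hpiece).trans_eq ?_))
  rw [Finset.sum_const, nsmul_eq_mul, Finset.card_product, ENNReal.ofReal_mul (by positivity),
    ← Nat.cast_mul, ENNReal.ofReal_natCast]

lemma measure_le_exp_of_card_le (hP : IsRWMeasure p P) (φ : G →* C)
    (hQ : IsRWMeasure q (P.map fun ω i => φ (ω i))) (hst : s ≤ t) {E : Set (ℕ → G)}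
    (S : Finset G) (T : Finset C) {c L k A B : ℝ} (hε : 0 ≤ ε) (hk : 0 ≤ k) (ht : t ≤ L * k)
    (hL : 0 ≤ L) (hc : 0 ≤ c) (hB : 0 ≤ B)
    (hS : (S.card : ℝ) ≤ Real.exp (2 * c * (ε * s + 1)))
    (hT : (T.card : ℝ) ≤ Real.exp (c * (ε * t + 1))) (hH : A - B ≤ h * s + h' * (t - s))
    (hE : ∀ ω ∈ E, (walk ω s ∈ S ∧ φ (walk ω t) ∈ T) ∧ IsTypicalAt p h ε s (walk ω s) ∧
      IsTypicalAt q h' ε s (φ (walk ω s)) ∧ IsTypicalAt q h' ε t (φ (walk ω t))) :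
    P E ≤ ENNReal.ofReal (Real.exp (-A + (B + 3 * L + 3 * c * (L + 1)) * (ε * k + 1))) :=
  (hP.measure_le_card_mul_exp φ hQ hst S T hE).trans <| ENNReal.ofReal_le_ofReal <|
    mul_mul_exp_le_exp hε hk (Nat.cast_le.2 hst) ht hL hc hB (Nat.cast_nonneg _) hS hT hH

lemma ae_eventually_isRegularAt {X : Type*} [MetricSpace X] {o : X} {δ : ℝ}
    {Γ : Subgroup (X ≃ᵢ X)} [Countable Γ] [MeasurableSpace Γ] [DiscreteMeasurableSpace Γ]
    {p : Γ → ℝ≥0∞} {P : Measure (ℕ → Γ)} (hP : IsRWMeasure p P) (hδ : IsHyperbolicWith X δ)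
    (hm : FiniteFirstMoment p fun x : Γ => dist o ((x : X ≃ᵢ X) o)) {l : ℝ} (hl0 : 0 < l)
    (hl : HasDrift p (fun x : Γ => dist o ((x : X ≃ᵢ X) o)) l) :
    ∀ᵐ ω ∂P, ∀ ε > 0, ∀ᶠ i in atTop,
      IsRegularAt o l ε (fun n => ((walk ω n : Γ) : X ≃ᵢ X) o) i := by
  have := hP.1
  have hlen := isLengthFunction_dist o Γ
  filter_upwards [hP.ae_tendsto_length_div hlen hm hl, ae_tendsto_comp_iterate_div
    hP.ergodic_shift ((hP.isSubadditiveProcess_length hlen hm).integrable 1)]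
    with ω hspeed hincr ε hε
  have hdist : ∀ ε > 0, ∀ᶠ i : ℕ in atTop,
      |dist o (((walk ω i : Γ) : X ≃ᵢ X) o) - l * i| ≤ ε * i := fun ε hε =>
    eventually_abs_sub_le_of_tendsto_div hspeed hε
  have hstep : ∀ ε > 0, ∀ᶠ i : ℕ in atTop,
      dist (((walk ω i : Γ) : X ≃ᵢ X) o) (((walk ω (i + 1) : Γ) : X ≃ᵢ X) o) ≤ ε * i := by
    intro ε hε
    filter_upwards [eventually_abs_sub_le_of_tendsto_div hincr hε] with i hi
    rw [zero_mul, sub_zero] at hi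
    rw [dist_orbit, walk_add, inv_mul_cancel_left]
    exact (le_abs_self _).trans hi
  filter_upwards [hδ.eventually_forall_ge_mul_le_gp hl0 hdist hstep hε, hdist ε hε] with i hgp hi
  exact ⟨by linarith [(abs_le.1 hi).2], hgp⟩

end IsRWMeasure

section ProductWalk
variable {X Xs : Type*} [MetricSpace X] [MetricSpace Xs] {o : X} {os : Xs} {δ δs : ℝ}
  {Γ : Subgroup (X ≃ᵢ X)} {Γs : Subgroup (Xs ≃ᵢ Xs)} {p : Γ × Γs → ℝ≥0∞} {hπ hμ hs l ls : ℝ}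

/-- At time `i` the trajectory of `ω`, which converges to `ξ`, progresses regularly in both factors
and its position and the two components of its position have typical information contents. -/
structure IsTypicalPathAt (o : X) (os : Xs) (p : Γ × Γs → ℝ≥0∞) (hπ hμ hs l ls ε : ℝ)
    (ω : ℕ → Γ × Γs) (ξ : Boundary X o × Boundary Xs os) (i : ℕ) : Prop where
  convergesTo_fst : ConvergesTo o (fun n => ((walk ω n).1 : X ≃ᵢ X) o) ξ.1
  convergesTo_snd : ConvergesTo os (fun n => ((walk ω n).2 : Xs ≃ᵢ Xs) os) ξ.2
  isRegularAt_fst : IsRegularAt o l ε (fun n => ((walk ω n).1 : X ≃ᵢ X) o) i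
  isRegularAt_snd : IsRegularAt os ls ε (fun n => ((walk ω n).2 : Xs ≃ᵢ Xs) os) i
  isTypicalAt : IsTypicalAt p hπ ε i (walk ω i)
  isTypicalAt_fst : IsTypicalAt (marginalFst p) hμ ε i (walk ω i).1
  isTypicalAt_snd : IsTypicalAt (marginalSnd p) hs ε i (walk ω i).2

lemma exists_card_isTypicalPathAt_le (hδ : IsHyperbolicWith X δ) (hδs : IsHyperbolicWith Xs δs)
    (hg : FinExpGrowth fun x : Γ => dist o ((x : X ≃ᵢ X) o))
    (hgs : FinExpGrowth fun x : Γs => dist os ((x : Xs ≃ᵢ Xs) os)) (l ls : ℝ) {κ : ℝ}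
    (hκ : 0 ≤ κ) :
    ∃ c > 0, ∀ (ξ : Boundary X o × Boundary Xs os) (a ε : ℝ) (i : ℕ), 0 ≤ ε →
      (l * i - κ ≤ a → ∃ S : Finset Γ, (S.card : ℝ) ≤ Real.exp (c * (ε * i + 1)) ∧
        ∀ ω η, IsTypicalPathAt o os p hπ hμ hs l ls ε ω η i → qbb o os ξ η < Real.exp (-a) →
          (walk ω i).1 ∈ S) ∧
      (ls * i - κ ≤ a → ∃ S : Finset Γs, (S.card : ℝ) ≤ Real.exp (c * (ε * i + 1)) ∧
        ∀ ω η, IsTypicalPathAt o os p hπ hμ hs l ls ε ω η i → qbb o os ξ η < Real.exp (-a) →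
          (walk ω i).2 ∈ S) := by
  obtain ⟨c, hc, hcount⟩ := hδ.exists_card_regular_orbit_le hg l hκ
  obtain ⟨cs, hcs, hcounts⟩ := hδs.exists_card_regular_orbit_le hgs ls hκ
  refine ⟨c + cs, by positivity, fun ξ a ε i hε => ⟨fun ha => ?_, fun ha => ?_⟩⟩
  · obtain ⟨S, hS, hmem⟩ := hcount ξ.1 a ε i hε ha
    refine ⟨S, hS.trans (Real.exp_le_exp.2 (by gcongr; linarith)), fun ω η hω hq => ?_⟩
    exact hmem _ _ hω.isRegularAt_fst hω.convergesTo_fst (max_lt_iff.1 hq).1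
  · obtain ⟨S, hS, hmem⟩ := hcounts ξ.2 a ε i hε ha
    refine ⟨S, hS.trans (Real.exp_le_exp.2 (by gcongr; linarith)), fun ω η hω hq => ?_⟩
    exact hmem _ _ hω.isRegularAt_snd hω.convergesTo_snd (max_lt_iff.1 hq).2

variable [Countable Γ] [Countable Γs] [MeasurableSpace Γ] [DiscreteMeasurableSpace Γ]
  [MeasurableSpace Γs] [DiscreteMeasurableSpace Γs] {P : Measure (ℕ → Γ × Γs)}
  {bnd : (ℕ → Γ × Γs) → Boundary X o × Boundary Xs os}

/-- Near `ξ` the trajectories are confined to few positions at the smaller of the times `k / l` and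
`k / ls`, and in the slower factor also at the larger one; `IsRWMeasure.measure_le_card_mul_exp`
weighs each such pair of positions. -/
lemma IsRWMeasure.exists_measure_isTypicalPathAt_le (hP : IsRWMeasure p P)
    (hδ : IsHyperbolicWith X δ) (hδs : IsHyperbolicWith Xs δs)
    (hg : FinExpGrowth fun x : Γ => dist o ((x : X ≃ᵢ X) o))
    (hgs : FinExpGrowth fun x : Γs => dist os ((x : Xs ≃ᵢ Xs) os))
    (hl0 : 0 < l) (hls0 : 0 < ls) (hent : hπ ≤ hμ + hs) {κ : ℝ} (hκ : 0 ≤ κ) :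
    ∃ C > 0, ∀ (ε : ℝ) (k : ℕ) (ξ : Boundary X o × Boundary Xs os), 0 < ε →
      P {ω | IsTypicalPathAt o os p hπ hμ hs l ls ε ω (bnd ω) ⌊k / l⌋₊ ∧
        IsTypicalPathAt o os p hπ hμ hs l ls ε ω (bnd ω) ⌊k / ls⌋₊ ∧
        qbb o os ξ (bnd ω) < Real.exp (-(k - κ))} ≤
      ENNReal.ofReal (Real.exp (-(((hπ - hs) / l + hs / ls) * k) + C * (ε * k + 1))) := by
  obtain ⟨c, hc, hcount⟩ := exists_card_isTypicalPathAt_le (p := p) (hπ := hπ) (hμ := hμ)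
    (hs := hs) hδ hδs hg hgs l ls hκ
  refine ⟨(|hπ - hs| + |hs|) + 3 * (1 / l + 1 / ls) + 3 * c * ((1 / l + 1 / ls) + 1),
    by positivity, fun ε k ξ hε => ?_⟩
  obtain ⟨hln, hnL⟩ := mul_floor_div_le_and_floor_div_le hl0 hls0.le k.cast_nonneg
  obtain ⟨hlm, hmL⟩ := mul_floor_div_le_and_floor_div_le hls0 hl0.le k.cast_nonneg
  rw [add_comm (1 / ls)] at hmL
  have hexponent := add_div_mul_sub_le_floor (hπ - hs) hs hl0.le hls0.le k.cast_nonneg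
  set n := ⌊k / l⌋₊
  set m := ⌊k / ls⌋₊
  have hcard : ∀ (S : Finset Γ) (Ss : Finset Γs) (i : ℕ),
      (S.card : ℝ) ≤ Real.exp (c * (ε * i + 1)) → (Ss.card : ℝ) ≤ Real.exp (c * (ε * i + 1)) →
      ((S ×ˢ Ss).card : ℝ) ≤ Real.exp (2 * c * (ε * i + 1)) := fun S Ss i hS hSs => by
    rw [Finset.card_product, Nat.cast_mul, mul_assoc, two_mul, Real.exp_add]
    gcongr
  rcases le_total n m with hnm | hmn
  · have := mul_le_mul_of_nonneg_left (Nat.cast_le (α := ℝ).2 hnm) hls0.le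
    obtain ⟨S, hS, hmemS⟩ := (hcount ξ (k - κ) ε n hε.le).1 (by linarith)
    obtain ⟨Ss, hSs, hmemSs⟩ := (hcount ξ (k - κ) ε n hε.le).2 (by linarith)
    obtain ⟨T, hT, hmemT⟩ := (hcount ξ (k - κ) ε m hε.le).2 (by linarith)
    refine hP.measure_le_exp_of_card_le (MonoidHom.snd Γ Γs) hP.marginalSnd hnm (S ×ˢ Ss) T
      (h := hπ) (h' := hs) hε.le k.cast_nonneg hmL (by positivity) hc.le (by positivity)
      (hcard S Ss n hS hSs) hT (by linarith) fun ω ⟨hn, hm, hq⟩ => ?_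
    exact ⟨⟨Finset.mem_product.2 ⟨hmemS _ _ hn hq, hmemSs _ _ hn hq⟩, hmemT _ _ hm hq⟩,
      hn.isTypicalAt, hn.isTypicalAt_snd, hm.isTypicalAt_snd⟩
  · have := mul_le_mul_of_nonneg_left (Nat.cast_le (α := ℝ).2 hmn) hl0.le
    obtain ⟨S, hS, hmemS⟩ := (hcount ξ (k - κ) ε m hε.le).1 (by linarith)
    obtain ⟨Ss, hSs, hmemSs⟩ := (hcount ξ (k - κ) ε m hε.le).2 (by linarith)
    obtain ⟨T, hT, hmemT⟩ := (hcount ξ (k - κ) ε n hε.le).1 (by linarith)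
    have hexp : (hπ - hs) * n + hs * m ≤ hπ * m + hμ * (n - m) := by
      linarith [mul_le_mul_of_nonneg_right hent (sub_nonneg.2 (Nat.cast_le (α := ℝ).2 hmn))]
    refine hP.measure_le_exp_of_card_le (MonoidHom.fst Γ Γs) hP.marginalFst hmn (S ×ˢ Ss) T
      (h := hπ) (h' := hμ) hε.le k.cast_nonneg hnL (by positivity) hc.le (by positivity)
      (hcard S Ss m hS hSs) hT (hexponent.trans hexp) fun ω ⟨hn, hm, hq⟩ => ?_
    exact ⟨⟨Finset.mem_product.2 ⟨hmemS _ _ hm hq, hmemSs _ _ hm hq⟩, hmemT _ _ hn hq⟩,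
      hm.isTypicalAt, hm.isTypicalAt_fst, hn.isTypicalAt_fst⟩

lemma IsRWMeasure.ae_eventually_isTypicalPathAt (hP : IsRWMeasure p P)
    (hδ : IsHyperbolicWith X δ) (hδs : IsHyperbolicWith Xs δs)
    (hg : FinExpGrowth fun x : Γ => dist o ((x : X ≃ᵢ X) o))
    (hgs : FinExpGrowth fun x : Γs => dist os ((x : Xs ≃ᵢ Xs) os))
    (hm : FiniteFirstMoment p fun g =>
      max (dist o ((g.1 : X ≃ᵢ X) o)) (dist os ((g.2 : Xs ≃ᵢ Xs) os)))
    (hhπ : HasEntropy p hπ) (hhμ : HasEntropy (HMDim.marginalFst p) hμ)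
    (hhs : HasEntropy (HMDim.marginalSnd p) hs) (hl0 : 0 < l) (hls0 : 0 < ls)
    (hl : HasDrift (HMDim.marginalFst p) (fun x => dist o ((x : X ≃ᵢ X) o)) l)
    (hls : HasDrift (HMDim.marginalSnd p) (fun x => dist os ((x : Xs ≃ᵢ Xs) os)) ls)
    (hbnd : ∀ᵐ ω ∂P, ConvergesTo o (fun n => ((walk ω n).1 : X ≃ᵢ X) o) (bnd ω).1 ∧
      ConvergesTo os (fun n => ((walk ω n).2 : Xs ≃ᵢ Xs) os) (bnd ω).2) :
    ∀ᵐ ω ∂P, ∀ ε > 0, ∀ᶠ i in atTop, IsTypicalPathAt o os p hπ hμ hs l ls ε ω (bnd ω) i := by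
  have hP₁ := hP.marginalFst
  have hP₂ := hP.marginalSnd
  have hm₁ := hm.marginalFst (f := fun x : Γ => dist o ((x : X ≃ᵢ X) o))
    (fs := fun x : Γs => dist os ((x : Xs ≃ᵢ Xs) os))
  have hm₂ := hm.marginalSnd (f := fun x : Γ => dist o ((x : X ≃ᵢ X) o))
    (fs := fun x : Γs => dist os ((x : Xs ≃ᵢ Xs) os))
  have hfst : Measurable fun (ω : ℕ → Γ × Γs) i => (ω i).1 :=
    measurable_map_increments (MonoidHom.fst Γ Γs)
  have hsnd : Measurable fun (ω : ℕ → Γ × Γs) i => (ω i).2 :=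
    measurable_map_increments (MonoidHom.snd Γ Γs)
  filter_upwards [hbnd,
    ae_of_ae_map hfst.aemeasurable (hP₁.ae_eventually_isRegularAt hδ hm₁ hl0 hl),
    ae_of_ae_map hsnd.aemeasurable (hP₂.ae_eventually_isRegularAt hδs hm₂ hls0 hls),
    hP.ae_eventually_isTypicalAt (hP.finiteFirstMoment_infoContent
      (fun _ => dist_nonneg.trans (le_max_left _ _)) (hg.prod_max hgs) hm) hhπ,
    ae_of_ae_map hfst.aemeasurable (hP₁.ae_eventually_isTypicalAt
      (hP₁.finiteFirstMoment_infoContent (fun _ => dist_nonneg) hg hm₁) hhμ),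
    ae_of_ae_map hsnd.aemeasurable (hP₂.ae_eventually_isTypicalAt
      (hP₂.finiteFirstMoment_infoContent (fun _ => dist_nonneg) hgs hm₂) hhs)]
    with ω hω hreg₁ hreg₂ htyp htyp₁ htyp₂ ε hε
  simp only [walk_fst] at hreg₁ htyp₁
  simp only [walk_snd] at hreg₂ htyp₂
  filter_upwards [hreg₁ ε hε, hreg₂ ε hε, htyp ε hε, htyp₁ ε hε, htyp₂ ε hε] with i h₁ h₂ h h₁' h₂'
  exact ⟨hω.1, hω.2, h₁, h₂, h, h₁', h₂'⟩

end ProductWalk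

/-! ### Measures of small balls -/

section SmallBalls
variable {Ω A : Type*} [MeasurableSpace Ω] [MeasurableSpace A] {P : Measure Ω}

lemma ae_eventually_notMem_of_le_exp {E : ℕ → Set Ω} {c b : ℝ} (hb : 0 < b)
    (hE : ∀ k : ℕ, P (E k) ≤ ENNReal.ofReal (c * Real.exp (-(b * k)))) :
    ∀ᵐ ω ∂P, ∀ᶠ k in atTop, ω ∉ E k := by
  have hsum : Summable fun k : ℕ => c * Real.exp (-(b * k)) := by
    refine Summable.mul_left c ((summable_geometric_of_lt_one (Real.exp_nonneg (-b))
      (Real.exp_lt_one_iff.2 (neg_lt_zero.2 hb))).congr fun k => ?_)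
    rw [← Real.exp_nat_mul, mul_neg, mul_comm]
  exact ae_eventually_notMem
    (ne_top_of_le_ne_top hsum.tsum_ofReal_ne_top (ENNReal.tsum_le_tsum hE))

lemma ae_map_eventually_mem {bnd : Ω → A} (hbnd : Measurable bnd) {U : ℕ → Set A}
    (hU : ∀ k, MeasurableSet (U k)) (h : ∀ᵐ ω ∂P, ∀ᶠ k in atTop, bnd ω ∈ U k) :
    ∀ᵐ ξ ∂P.map bnd, ∀ᶠ k in atTop, ξ ∈ U k := by
  refine (ae_map_iff hbnd.aemeasurable ?_).2 h
  simp only [← Filter.mem_liminf_iff_eventually_mem]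
  exact MeasurableSet.measurableSet_liminf hU

/-- A set of points which are centres of pairwise disjoint `r`-balls of measure more than `a`. -/
def IsHeavyPacking (ν : Measure A) (q : A → A → ℝ) (a r : ℝ) (F : Finset A) : Prop :=
  (∀ ξ ∈ F, ENNReal.ofReal a < ν (qball q ξ r)) ∧
    (F : Set A).PairwiseDisjoint fun ξ => qball q ξ r

lemma IsHeavyPacking.card_le {ν : Measure A} [IsProbabilityMeasure ν] {q : A → A → ℝ} {a r : ℝ}
    {F : Finset A} (hF : IsHeavyPacking ν q a r F) (hq : ∀ ξ, MeasurableSet (qball q ξ r))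
    (ha : 0 < a) : (F.card : ℝ) ≤ a⁻¹ := by
  have hsum : F.card * ENNReal.ofReal a ≤ 1 := calc
    _ = ∑ _ ∈ F, ENNReal.ofReal a := by rw [Finset.sum_const, nsmul_eq_mul]
    _ ≤ ∑ ξ ∈ F, ν (qball q ξ r) := Finset.sum_le_sum fun ξ hξ => (hF.1 ξ hξ).le
    _ = ν (⋃ ξ ∈ F, qball q ξ r) := (measure_biUnion_finset hF.2 fun ξ _ => hq ξ).symm
    _ ≤ 1 := prob_le_one
  rwa [← ENNReal.ofReal_natCast, ← ENNReal.ofReal_mul F.card.cast_nonneg, ENNReal.ofReal_le_one,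
    ← le_div_iff₀ ha, one_div] at hsum

lemma exists_maximal_isHeavyPacking {ν : Measure A} [IsProbabilityMeasure ν] {q : A → A → ℝ}
    {a r : ℝ} (hq : ∀ ξ, MeasurableSet (qball q ξ r)) (ha : 0 < a) :
    ∃ F, Maximal (IsHeavyPacking ν q a r) F := by
  have hbdd : BddAbove (Finset.card '' {F | IsHeavyPacking ν q a r F}) := by
    refine ⟨⌊a⁻¹⌋₊, ?_⟩
    rintro _ ⟨F, hF, rfl⟩
    exact Nat.le_floor (IsHeavyPacking.card_le hF hq ha)
  obtain ⟨F, hF, hcard⟩ := Nat.sSup_mem (Set.Nonempty.image _ ⟨∅, by simp [IsHeavyPacking]⟩) hbdd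
  refine ⟨F, hF, fun F' hF' hFF' => (Finset.eq_of_subset_of_card_le hFF' ?_).ge⟩
  rw [hcard]
  exact le_csSup hbdd ⟨F', hF', rfl⟩

namespace IsQuasiUltrametric
variable {κ : ℝ} {q : A → A → ℝ}

lemma exists_cover_of_lt_measure_qball (hq : IsQuasiUltrametric κ q)
    (hqm : ∀ ξ r, MeasurableSet (qball q ξ r)) (ν : Measure A) [IsProbabilityMeasure ν] {a : ℝ}
    (ha : 0 < a) (k : ℝ) :
    ∃ F : Finset A, (F.card : ℝ) ≤ a⁻¹ ∧
      ∀ ξ, ENNReal.ofReal a < ν (qball q ξ (Real.exp (-k))) →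
        ∃ η ∈ F, ξ ∈ qball q η (Real.exp (-(k - κ))) := by
  obtain ⟨F, hF⟩ := exists_maximal_isHeavyPacking (ν := ν) (fun ξ => hqm ξ (Real.exp (-k))) ha
  refine ⟨F, hF.prop.card_le (fun ξ => hqm ξ _) ha, fun ξ hξ => ?_⟩
  by_contra! hfar
  have hdisj : ∀ η ∈ F, Disjoint (qball q ξ (Real.exp (-k))) (qball q η (Real.exp (-k))) :=
    fun η hη => disjoint_left.2 fun ζ hζξ hζη =>
      hfar η hη (hq.lt_exp hζη ((hq.comm ζ ξ).trans_lt hζξ))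
  have hinsert : IsHeavyPacking ν q a (Real.exp (-k)) (insert ξ F) := by
    refine ⟨(Finset.forall_mem_insert _ _ _).2 ⟨hξ, hF.prop.1⟩, ?_⟩
    rw [Finset.coe_insert]
    exact hF.prop.2.insert fun η hη _ => hdisj η hη
  have hξF := hF.le_of_ge hinsert (Finset.subset_insert ξ F) (Finset.mem_insert_self ξ F)
  have hself : ξ ∈ qball q ξ (Real.exp (-k)) := (hq.self ξ).trans_lt (Real.exp_pos _)
  exact disjoint_left.1 (hdisj ξ hξF) hself hself

lemma ae_eventually_measure_qball_le (hq : IsQuasiUltrametric κ q)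
    (hqm : ∀ ξ r, MeasurableSet (qball q ξ r)) [IsProbabilityMeasure P] {bnd : Ω → A}
    (hbnd : Measurable bnd) {E : ℕ → Set Ω} (hE : ∀ᵐ ω ∂P, ∀ᶠ k in atTop, ω ∈ E k) {D τ c : ℝ}
    (hτ : 0 < τ) (hc : 0 ≤ c)
    (hle : ∀ (k : ℕ) ξ, P (E k ∩ bnd ⁻¹' qball q ξ (Real.exp (-(k - κ)))) ≤
      ENNReal.ofReal (c * Real.exp (-((D + τ) * k)))) :
    ∀ᵐ ξ ∂P.map bnd, ∀ᶠ k : ℕ in atTop,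
      P.map bnd (qball q ξ (Real.exp (-k))) ≤ ENNReal.ofReal (Real.exp (-(D * k))) := by
  have := Measure.isProbabilityMeasure_map (μ := P) hbnd.aemeasurable
  choose F hcard hcover using fun k : ℕ => hq.exists_cover_of_lt_measure_qball hqm (P.map bnd)
    (Real.exp_pos (-(D * k))) k
  let U : ℕ → Set A := fun k => ⋃ η ∈ F k, qball q η (Real.exp (-(k - κ)))
  have hsmall : ∀ k : ℕ, P (E k ∩ bnd ⁻¹' U k) ≤ ENNReal.ofReal (c * Real.exp (-(τ * k))) := by
    intro k
    simp only [U, preimage_iUnion₂, inter_iUnion₂]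
    refine (measure_biUnion_finset_le _ _).trans
      ((Finset.sum_le_sum fun η _ => hle k η).trans ?_)
    rw [Finset.sum_const, nsmul_eq_mul, ← ENNReal.ofReal_natCast,
      ← ENNReal.ofReal_mul (Nat.cast_nonneg _)]
    refine ENNReal.ofReal_le_ofReal
      ((mul_le_mul_of_nonneg_right (hcard k) (by positivity)).trans_eq ?_)
    rw [← Real.exp_neg, mul_left_comm, ← Real.exp_add]
    ring_nf
  have hU : ∀ᵐ ω ∂P, ∀ᶠ k in atTop, bnd ω ∈ (U k)ᶜ := by
    filter_upwards [ae_eventually_notMem_of_le_exp hτ hsmall, hE] with ω hω hωE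
    filter_upwards [hω, hωE] with k hk hkE hkU using hk ⟨hkE, hkU⟩
  filter_upwards [ae_map_eventually_mem hbnd
    (fun k => (Finset.measurableSet_biUnion _ fun η _ => hqm _ _).compl) hU] with ξ hξ
  filter_upwards [hξ] with k hk
  by_contra! hheavy
  obtain ⟨η, hη, hξη⟩ := hcover k ξ hheavy
  exact hk (mem_iUnion₂.2 ⟨η, hη, hξη⟩)

lemma exists_measurableSet_le_measure_qball (hq : IsQuasiUltrametric κ q)
    (hqm : ∀ ξ r, MeasurableSet (qball q ξ r)) {G : Type*} [Countable G] {bnd : Ω → A}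
    (hbnd : Measurable bnd) {E : Set Ω} {w : Ω → G} {k : ℝ}
    (hE : ∀ ω ∈ E, ∀ ω' ∈ E, w ω = w ω' → q (bnd ω) (bnd ω') < Real.exp (-(k + κ)))
    {a : ℝ≥0∞} (ha : 0 < a) :
    ∃ V, MeasurableSet V ∧ (∀ ω ∈ E, a ≤ P (E ∩ w ⁻¹' {w ω}) → bnd ω ∈ V) ∧
      ∀ ξ ∈ V, a ≤ P.map bnd (qball q ξ (Real.exp (-k))) := by
  have hne : ∀ g, a ≤ P (E ∩ w ⁻¹' {g}) → (E ∩ w ⁻¹' {g}).Nonempty := fun g hg =>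
    nonempty_of_measure_ne_zero (ha.trans_le hg).ne'
  refine ⟨⋃ (g) (hg : a ≤ P (E ∩ w ⁻¹' {g})), qball q (bnd (hne g hg).some) (Real.exp (-(k + κ))),
    .iUnion fun g => .iUnion fun hg => hqm _ _, fun ω hω hheavy => ?_, fun ξ hξ => ?_⟩
  · have hsome := (hne _ hheavy).some_mem
    exact mem_iUnion₂.2 ⟨w ω, hheavy, hE _ hsome.1 ω hω hsome.2⟩
  · obtain ⟨g, hg, hξg⟩ := mem_iUnion₂.1 hξ
    obtain ⟨hsomeE, hsome⟩ := (hne g hg).some_mem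
    rw [Measure.map_apply hbnd (hqm _ _)]
    refine hg.trans (measure_mono fun ω ⟨hωE, hω⟩ => ?_)
    have := hq.lt_exp ((hq.comm _ _).trans_lt hξg) (hE _ hsomeE ω hωE (hsome.trans hω.symm))
    rwa [add_sub_cancel_right] at this

end IsQuasiUltrametric

lemma measure_light_fibers_le {G : Type*} (E : Set Ω) (w : Ω → G) (S : Finset G)
    (hS : ∀ ω ∈ E, w ω ∈ S) (a : ℝ≥0∞) :
    P {ω ∈ E | P (E ∩ w ⁻¹' {w ω}) < a} ≤ S.card * a := by
  have hcover : {ω ∈ E | P (E ∩ w ⁻¹' {w ω}) < a} ⊆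
      ⋃ g ∈ S.filter fun g => P (E ∩ w ⁻¹' {g}) < a, E ∩ w ⁻¹' {g} := fun ω ⟨hω, hlight⟩ =>
    mem_iUnion₂.2 ⟨w ω, Finset.mem_filter.2 ⟨hS ω hω, hlight⟩, hω, rfl⟩
  refine (measure_mono hcover).trans ((measure_biUnion_finset_le _ _).trans
    ((Finset.sum_le_card_nsmul _ _ a fun g hg => (Finset.mem_filter.1 hg).2.le).trans ?_))
  rw [nsmul_eq_mul]
  gcongr
  exact Finset.filter_subset _ _

lemma IsQuasiUltrametric.ae_eventually_le_measure_qball {κ : ℝ} {q : A → A → ℝ}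
    (hq : IsQuasiUltrametric κ q) (hqm : ∀ ξ r, MeasurableSet (qball q ξ r)) {G : Type*}
    [Countable G] {bnd : Ω → A} (hbnd : Measurable bnd) {E : ℕ → Set Ω}
    (hE : ∀ᵐ ω ∂P, ∀ᶠ k in atTop, ω ∈ E k) {w : ℕ → Ω → G}
    (hw : ∀ (k : ℕ), ∀ ω ∈ E k, ∀ ω' ∈ E k, w k ω = w k ω' →
      q (bnd ω) (bnd ω') < Real.exp (-(k + κ)))
    {S : ℕ → Finset G} (hS : ∀ k, ∀ ω ∈ E k, w k ω ∈ S k) {c b : ℝ}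
    (hcard : ∀ k : ℕ, ((S k).card : ℝ) ≤ c * Real.exp (b * k)) :
    ∀ᵐ ξ ∂P.map bnd, ∀ᶠ k : ℕ in atTop,
      ENNReal.ofReal (Real.exp (-((b + 1) * k))) ≤ P.map bnd (qball q ξ (Real.exp (-k))) := by
  have ha : ∀ k : ℕ, 0 < ENNReal.ofReal (Real.exp (-((b + 1) * k))) := fun k =>
    ENNReal.ofReal_pos.2 (Real.exp_pos _)
  choose V hVm hV hVle using fun k => hq.exists_measurableSet_le_measure_qball hqm (P := P) hbnd
    (hw k) (ha k)
  have hlight : ∀ k : ℕ, P {ω ∈ E k | P (E k ∩ w k ⁻¹' {w k ω}) <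
      ENNReal.ofReal (Real.exp (-((b + 1) * k)))} ≤ ENNReal.ofReal (c * Real.exp (-(1 * k))) := by
    intro k
    refine (measure_light_fibers_le (E k) (w k) (S k) (hS k) _).trans ?_
    rw [← ENNReal.ofReal_natCast, ← ENNReal.ofReal_mul (Nat.cast_nonneg _)]
    refine ENNReal.ofReal_le_ofReal
      ((mul_le_mul_of_nonneg_right (hcard k) (Real.exp_nonneg _)).trans_eq ?_)
    rw [mul_assoc, ← Real.exp_add]
    ring_nf
  have hmem : ∀ᵐ ω ∂P, ∀ᶠ k in atTop, bnd ω ∈ V k := by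
    filter_upwards [ae_eventually_notMem_of_le_exp one_pos hlight, hE] with ω hω hωE
    filter_upwards [hω, hωE] with k hk hkE
    exact hV k ω hkE (not_lt.1 fun hlt => hk ⟨hkE, hlt⟩)
  filter_upwards [ae_map_eventually_mem hbnd hVm hmem] with ξ hξ
  filter_upwards [hξ] with k hk using hVle k ξ hk

end SmallBalls

/-! ### The lower local dimension -/

section LocalDimension
variable {F : ℝ → ℝ} {D M : ℝ}

lemma tendsto_neg_log_nhdsGT_zero : Tendsto (fun r : ℝ => -Real.log r) (𝓝[>] 0) atTop :=
  tendsto_neg_atBot_atTop.comp Real.tendsto_log_nhdsGT_zero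

lemma eventually_exp_le_of_monotone (hF : Monotone F)
    (hM : ∀ᶠ k : ℕ in atTop, Real.exp (-(M * k)) ≤ F (Real.exp (-k))) :
    ∀ᶠ r in 𝓝[>] (0 : ℝ), Real.exp (-(2 * |M| * -Real.log r)) ≤ F r := by
  have hfloor : Tendsto (fun r : ℝ => ⌊-Real.log r⌋₊ + 1) (𝓝[>] 0) atTop :=
    (tendsto_add_atTop_nat 1).comp (tendsto_nat_floor_atTop.comp tendsto_neg_log_nhdsGT_zero)
  filter_upwards [hfloor.eventually hM, self_mem_nhdsWithin,
    tendsto_neg_log_nhdsGT_zero.eventually_ge_atTop 1] with r hr hr0 hlog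
  have hle := Nat.floor_le (zero_le_one.trans hlog)
  have hexp : Real.exp (-(⌊-Real.log r⌋₊ + 1 : ℕ)) ≤ r := by
    rw [← Real.le_log_iff_exp_le hr0, Nat.cast_add_one]
    linarith [Nat.lt_floor_add_one (-Real.log r)]
  refine (Real.exp_le_exp.2 (neg_le_neg ?_)).trans (hr.trans (hF hexp))
  calc M * (⌊-Real.log r⌋₊ + 1 : ℕ) ≤ |M| * (⌊-Real.log r⌋₊ + 1 : ℕ) := by
        gcongr
        exact le_abs_self M
    _ ≤ |M| * (2 * -Real.log r) := by
        push_cast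
        gcongr
        linarith
    _ = 2 * |M| * -Real.log r := by ring

lemma eventually_le_exp_of_monotone (hF : Monotone F)
    (hD : ∀ᶠ k : ℕ in atTop, F (Real.exp (-k)) ≤ Real.exp (-(D * k))) :
    ∀ᶠ r in 𝓝[>] (0 : ℝ), F r ≤ Real.exp (-(D * -Real.log r - |D|)) := by
  have hfloor : Tendsto (fun r : ℝ => ⌊-Real.log r⌋₊) (𝓝[>] 0) atTop :=
    tendsto_nat_floor_atTop.comp tendsto_neg_log_nhdsGT_zero
  filter_upwards [hfloor.eventually hD, self_mem_nhdsWithin,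
    tendsto_neg_log_nhdsGT_zero.eventually_ge_atTop 0] with r hr hr0 hlog
  have hexp : r ≤ Real.exp (-⌊-Real.log r⌋₊) := by
    rw [← Real.log_le_iff_le_exp hr0]
    linarith [Nat.floor_le hlog]
  exact (hF hexp).trans (hr.trans
    (Real.exp_le_exp.2 (neg_le_neg (mul_sub_abs_le_mul_floor D hlog))))

/-- The lower bound `hM` only serves to keep the ratio bounded: the `liminf` of a real function
which tends to `+∞` would be the junk value `0`. -/
lemma le_liminf_log_div_log (hF : Monotone F)
    (hD : ∀ ε > 0, ∀ᶠ k : ℕ in atTop, F (Real.exp (-k)) ≤ Real.exp (-((D - ε) * k)))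
    (hM : ∀ᶠ k : ℕ in atTop, Real.exp (-(M * k)) ≤ F (Real.exp (-k))) :
    D ≤ liminf (fun r => Real.log (F r) / Real.log r) (𝓝[>] 0) := by
  have hlower := eventually_exp_le_of_monotone hF hM
  have hbdd : ∀ᶠ r in 𝓝[>] (0 : ℝ), Real.log (F r) / Real.log r ≤ 2 * |M| := by
    filter_upwards [hlower, tendsto_neg_log_nhdsGT_zero.eventually_gt_atTop 0] with r hr hlog
    rw [← neg_div_neg_eq, div_le_iff₀ hlog, neg_le]
    exact (Real.le_log_iff_exp_le ((Real.exp_pos _).trans_le hr)).2 hr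
  refine le_of_forall_pos_sub_le fun ε hε => le_liminf_of_le
    (IsBoundedUnder.isCoboundedUnder_ge ⟨_, eventually_map.2 hbdd⟩) ?_
  filter_upwards [hlower, eventually_le_exp_of_monotone hF (hD (ε / 2) (half_pos hε)),
    tendsto_neg_log_nhdsGT_zero.eventually_gt_atTop 0,
    tendsto_neg_log_nhdsGT_zero.eventually_ge_atTop (|D - ε / 2| / (ε / 2))]
    with r hlow hupp hlog hlarge
  rw [← neg_div_neg_eq, le_div_iff₀ hlog, le_neg]
  refine ((Real.log_le_iff_le_exp ((Real.exp_pos _).trans_le hlow)).2 hupp).trans ?_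
  rw [div_le_iff₀ (half_pos hε)] at hlarge
  linarith

lemma ae_le_liminf_log_measure_div_log {A : Type*} [MeasurableSpace A] {ν : Measure A}
    [IsFiniteMeasure ν] {q : A → A → ℝ}
    (hD : ∀ τ > 0, ∀ᵐ ξ ∂ν, ∀ᶠ k : ℕ in atTop,
      ν (qball q ξ (Real.exp (-k))) ≤ ENNReal.ofReal (Real.exp (-((D - τ) * k))))
    (hM : ∀ᵐ ξ ∂ν, ∀ᶠ k : ℕ in atTop,
      ENNReal.ofReal (Real.exp (-(M * k))) ≤ ν (qball q ξ (Real.exp (-k)))) :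
    ∀ᵐ ξ ∂ν, D ≤ liminf (fun r => Real.log (ν (qball q ξ r)).toReal / Real.log r) (𝓝[>] 0) := by
  filter_upwards [ae_all_iff.2 fun j : ℕ => hD (1 / (j + 1)) Nat.one_div_pos_of_nat, hM]
    with ξ hupper hlower
  refine le_liminf_log_div_log (F := fun r => (ν (qball q ξ r)).toReal) (M := M)
    (fun r r' hr => ENNReal.toReal_mono (measure_ne_top _ _)
      (measure_mono fun η hη => lt_of_lt_of_le hη hr)) (fun ε hε => ?_) ?_
  · obtain ⟨j, hj⟩ := exists_nat_one_div_lt hε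
    filter_upwards [hupper j] with k hk
    refine (ENNReal.toReal_le_of_le_ofReal (Real.exp_pos _).le hk).trans (Real.exp_le_exp.2 ?_)
    gcongr
  · filter_upwards [hlower] with k hk
    exact (ENNReal.ofReal_le_iff_le_toReal (measure_ne_top _ _)).1 hk

end LocalDimension

section ProductWalk
variable {X Xs : Type*} [MetricSpace X] [MetricSpace Xs] {o : X} {os : Xs} {δ δs : ℝ}
  {Γ : Subgroup (X ≃ᵢ X)} {Γs : Subgroup (Xs ≃ᵢ Xs)} {p : Γ × Γs → ℝ≥0∞} {hπ hμ hs l ls : ℝ}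

lemma isQuasiUltrametric_qbb (hδ : IsHyperbolicWith X δ) (hδs : IsHyperbolicWith Xs δs) (o : X)
    (os : Xs) : IsQuasiUltrametric (max (3 * δ) (3 * δs)) (qbb o os) :=
  (hδ.isQuasiUltrametric_qB o).prod_max (hδs.isQuasiUltrametric_qB os)

lemma IsTypicalPathAt.max_dist_le {ε : ℝ} {ω : ℕ → Γ × Γs} {ξ : Boundary X o × Boundary Xs os}
    {i : ℕ} (hω : IsTypicalPathAt o os p hπ hμ hs l ls ε ω ξ i) :
    max (dist o (((walk ω i).1 : X ≃ᵢ X) o)) (dist os (((walk ω i).2 : Xs ≃ᵢ Xs) os)) ≤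
      (max l ls + ε) * i := by
  refine max_le (hω.isRegularAt_fst.dist_le.trans ?_) (hω.isRegularAt_snd.dist_le.trans ?_) <;>
    gcongr
  exacts [le_max_left _ _, le_max_right _ _]

lemma IsTypicalPathAt.qbb_le_exp {ε : ℝ} {ω ω' : ℕ → Γ × Γs}
    {ξ ξ' : Boundary X o × Boundary Xs os} {i : ℕ}
    (hω : IsTypicalPathAt o os p hπ hμ hs l ls ε ω ξ i)
    (hω' : IsTypicalPathAt o os p hπ hμ hs l ls ε ω' ξ' i) (hδ : IsHyperbolicWith X δ)
    (hδs : IsHyperbolicWith Xs δs) (hwalk : walk ω i = walk ω' i) :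
    qbb o os ξ ξ' ≤ Real.exp (-((min l ls - ε) * i - max (3 * δ) (3 * δs))) := by
  refine max_le
    ((hω.isRegularAt_fst.qB_le_exp hω'.isRegularAt_fst hδ hω.convergesTo_fst hω'.convergesTo_fst
      (by simp only [hwalk])).trans (Real.exp_le_exp.2 (neg_le_neg (sub_le_sub ?_ ?_))))
    ((hω.isRegularAt_snd.qB_le_exp hω'.isRegularAt_snd hδs hω.convergesTo_snd hω'.convergesTo_snd
      (by simp only [hwalk])).trans (Real.exp_le_exp.2 (neg_le_neg (sub_le_sub ?_ ?_))))
  · gcongr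
    exact min_le_left _ _
  · exact le_max_left _ _
  · gcongr
    exact min_le_right _ _
  · exact le_max_right _ _

variable [Countable Γ] [Countable Γs] [MeasurableSpace Γ] [MeasurableSpace Γs]
  {P : Measure (ℕ → Γ × Γs)} {bnd : (ℕ → Γ × Γs) → Boundary X o × Boundary Xs os}

lemma exists_ae_eventually_le_measure_qball_qbb (hδ : IsHyperbolicWith X δ)
    (hδs : IsHyperbolicWith Xs δs)
    (hg : FinExpGrowth fun x : Γ => dist o ((x : X ≃ᵢ X) o))
    (hgs : FinExpGrowth fun x : Γs => dist os ((x : Xs ≃ᵢ Xs) os))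
    (hl0 : 0 < l) (hls0 : 0 < ls) (hbnd : Measurable bnd)
    (htyp : ∀ᵐ ω ∂P, ∀ ε > 0, ∀ᶠ i in atTop,
      IsTypicalPathAt o os p hπ hμ hs l ls ε ω (bnd ω) i) :
    ∃ M : ℝ, ∀ᵐ ξ ∂P.map bnd, ∀ᶠ k : ℕ in atTop,
      ENNReal.ofReal (Real.exp (-(M * k))) ≤ P.map bnd (qball (qbb o os) ξ (Real.exp (-k))) := by
  set κ := max (3 * δ) (3 * δs)
  set ε := min l ls / 2
  have hε : 0 < ε := half_pos (lt_min hl0 hls0)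
  have hlmin : min l ls - ε = ε := sub_half _
  obtain ⟨R, hR⟩ := exists_nat_gt (2 / ε)
  have hR0 : 0 < R := Nat.cast_pos.1 ((by positivity : 0 < 2 / ε).trans hR)
  obtain ⟨c, -, hcount⟩ := (hg.prod_max hgs).exists_ncard_setOf_le
  have hlen : ∀ k : ℕ, 0 ≤ (max l ls + ε) * (R * k : ℕ) := fun k => by positivity
  refine ⟨c * ((max l ls + ε) * R) + 1,
    (isQuasiUltrametric_qbb hδ hδs o os).ae_eventually_le_measure_qball measurableSet_qball_qbb hbnd
      (E := fun k => {ω | IsTypicalPathAt o os p hπ hμ hs l ls ε ω (bnd ω) (R * k) ∧ 2 * κ < k})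
      ?_ (w := fun k ω => walk ω (R * k)) (fun k ω hω ω' hω' hwalk => ?_)
      (S := fun k => (hcount _ (hlen k)).1.toFinset)
      (fun k ω hω => (Set.Finite.mem_toFinset _).2 hω.1.max_dist_le) (c := c) fun k => ?_⟩
  · filter_upwards [htyp] with ω hω
    exact ((tendsto_id.const_mul_atTop' hR0).eventually (hω ε hε)).and
      (tendsto_natCast_atTop_atTop.eventually_gt_atTop _)
  · refine (hω.1.qbb_le_exp hω'.1 hδ hδs hwalk).trans_lt (Real.exp_lt_exp.2 (neg_lt_neg ?_))
    have hkR : 2 * (k : ℝ) ≤ ε * (R * k : ℕ) := by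
      rw [div_lt_iff₀' hε] at hR
      rw [Nat.cast_mul, ← mul_assoc]
      gcongr
    rw [hlmin]
    linarith [hω.2]
  · rw [← Set.ncard_eq_toFinset_card _ (hcount _ (hlen k)).1]
    refine (hcount _ (hlen k)).2.trans_eq ?_
    push_cast
    ring_nf

variable [DiscreteMeasurableSpace Γ] [DiscreteMeasurableSpace Γs]

lemma IsRWMeasure.ae_eventually_measure_qball_le (hP : IsRWMeasure p P)
    (hδ : IsHyperbolicWith X δ) (hδs : IsHyperbolicWith Xs δs)
    (hg : FinExpGrowth fun x : Γ => dist o ((x : X ≃ᵢ X) o))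
    (hgs : FinExpGrowth fun x : Γs => dist os ((x : Xs ≃ᵢ Xs) os))
    (hl0 : 0 < l) (hls0 : 0 < ls) (hent : hπ ≤ hμ + hs) (hbnd : Measurable bnd)
    (htyp : ∀ᵐ ω ∂P, ∀ ε > 0, ∀ᶠ i in atTop,
      IsTypicalPathAt o os p hπ hμ hs l ls ε ω (bnd ω) i) {τ : ℝ} (hτ : 0 < τ) :
    ∀ᵐ ξ ∂P.map bnd, ∀ᶠ k : ℕ in atTop, P.map bnd (qball (qbb o os) ξ (Real.exp (-k))) ≤
      ENNReal.ofReal (Real.exp (-(((hπ - hs) / l + hs / ls - τ) * k))) := by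
  have := hP.1
  have hκ : 0 ≤ max (3 * δ) (3 * δs) := le_max_of_le_left (by linarith [hδ.nonneg o])
  obtain ⟨C, hC, hmeasure⟩ := hP.exists_measure_isTypicalPathAt_le (bnd := bnd) hδ hδs hg hgs hl0
    hls0 hent hκ
  have hε : 0 < τ / (2 * C) := by positivity
  have hfloor : ∀ {v : ℝ}, 0 < v → Tendsto (fun k : ℕ => ⌊k / v⌋₊) atTop atTop := fun hv =>
    tendsto_nat_floor_atTop.comp (tendsto_natCast_atTop_atTop.atTop_div_const hv)
  refine (isQuasiUltrametric_qbb hδ hδs o os).ae_eventually_measure_qball_le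
    measurableSet_qball_qbb hbnd (τ := τ / 2) (c := Real.exp C)
    (E := fun k => {ω | IsTypicalPathAt o os p hπ hμ hs l ls (τ / (2 * C)) ω (bnd ω) ⌊k / l⌋₊ ∧
      IsTypicalPathAt o os p hπ hμ hs l ls (τ / (2 * C)) ω (bnd ω) ⌊k / ls⌋₊})
    ?_ (half_pos hτ) (Real.exp_nonneg C) fun k ξ => ?_
  · filter_upwards [htyp] with ω hω
    exact ((hfloor hl0).eventually (hω _ hε)).and ((hfloor hls0).eventually (hω _ hε))
  · refine (measure_mono (t := {ω | _ ∧ _ ∧ _}) fun ω hω => ⟨hω.1.1, hω.1.2, hω.2⟩).trans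
      ((hmeasure _ k ξ hε).trans_eq ?_)
    rw [← Real.exp_add]
    congr 2
    field_simp
    ring

end ProductWalk

theorem statement15_general
    {X Xs : Type*} [MetricSpace X] [MetricSpace Xs] (hX : IsHyperbolic X) (hXs : IsHyperbolic Xs)
    (o : X) (os : Xs)
    (Γ : Subgroup (X ≃ᵢ X)) (Γs : Subgroup (Xs ≃ᵢ Xs)) [Countable Γ] [Countable Γs]
    [MeasurableSpace Γ] [DiscreteMeasurableSpace Γ]
    [MeasurableSpace Γs] [DiscreteMeasurableSpace Γs]
    (hgrow : FinExpGrowth fun x : Γ => dist o ((x : X ≃ᵢ X) o))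
    (hgrows : FinExpGrowth fun y : Γs => dist os ((y : Xs ≃ᵢ Xs) os))
    (p : Γ × Γs → ℝ≥0∞)
    (hmom : FiniteFirstMoment p fun g : Γ × Γs =>
      dist (o, os) (((g.1 : X ≃ᵢ X) o), ((g.2 : Xs ≃ᵢ Xs) os)))
    (hμne : IsNonElemMeasure (marginalFst p)) (hμsne : IsNonElemMeasure (marginalSnd p))
    (hπ hs l ls : ℝ) (hhπ : HasEntropy p hπ) (hhs : HasEntropy (marginalSnd p) hs)
    (hl : HasDrift (marginalFst p) (fun x => dist o ((x : X ≃ᵢ X) o)) l)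
    (hls : HasDrift (marginalSnd p) (fun y => dist os ((y : Xs ≃ᵢ Xs) os)) ls)
    (P : Measure (ℕ → Γ × Γs)) (hP : IsRWMeasure p P)
    (ν : Measure (Boundary X o × Boundary Xs os))
    (hν : IsJointHarmonic o os P (fun ω n => ((walk ω n).1 : X ≃ᵢ X) o)
      (fun ω n => ((walk ω n).2 : Xs ≃ᵢ Xs) os) ν) :
    ∀ᵐ ξ ∂ν, (hπ - hs) / l + hs / ls ≤
      liminf (fun r => Real.log (ν (qball (qbb o os) ξ r)).toReal / Real.log r) (𝓝[>] 0) := by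
  obtain ⟨δ, -, hδ⟩ := hX
  obtain ⟨δs, -, hδs⟩ := hXs
  obtain ⟨bnd, hbnd, rfl, hconv⟩ := hν
  have := hP.1
  have := Measure.isProbabilityMeasure_map (μ := P) hbnd.aemeasurable
  have hmom₁ := hmom.marginalFst (f := fun x : Γ => dist o ((x : X ≃ᵢ X) o))
    (fs := fun x : Γs => dist os ((x : Xs ≃ᵢ Xs) os))
  have hmom₂ := hmom.marginalSnd (f := fun x : Γ => dist o ((x : X ≃ᵢ X) o))
    (fs := fun x : Γs => dist os ((x : Xs ≃ᵢ Xs) os))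
  have hl0 := hP.marginalFst.drift_pos (isLengthFunction_dist o Γ) hgrow hmom₁ hμne hl
  have hls0 := hP.marginalSnd.drift_pos (isLengthFunction_dist os Γs) hgrows hmom₂ hμsne hls
  obtain ⟨hμ, hhμ, hent⟩ := hP.exists_hasEntropy_marginalFst (fun _ => dist_nonneg)
    (fun _ => dist_nonneg) hgrow hgrows hmom hhπ hhs
  have htyp := hP.ae_eventually_isTypicalPathAt (bnd := bnd) hδ hδs hgrow hgrows hmom hhπ hhμ
    hhs hl0 hls0 hl hls (hconv.mono fun ω ⟨h₁, h₂, h⟩ => by rw [h]; exact ⟨⟨h₁, rfl⟩, ⟨h₂, rfl⟩⟩)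
  obtain ⟨M, hlower⟩ :=
    exists_ae_eventually_le_measure_qball_qbb hδ hδs hgrow hgrows hl0 hls0 hbnd htyp
  exact ae_le_liminf_log_measure_div_log (fun τ hτ => hP.ae_eventually_measure_qball_le hδ hδs hgrow
    hgrows hl0 hls0 hent hbnd htyp hτ) hlower

/-- Proposition 4.4: the a.e. lower bound for the harmonic measure
on the product of boundaries, for a product of countable isometry groups of finite
exponential growth. -/
theorem statement15
    (X Xs : Type*) [MetricSpace X] [MetricSpace Xs] [ProperSpace X] [ProperSpace Xs]
    (hX : IsHyperbolic X) (hXs : IsHyperbolic Xs)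
    (hXg : IsRoughGeodesicSpace X) (hXsg : IsRoughGeodesicSpace Xs)
    (hXb : HasBoundedGrowthAtSomeScale X) (hXsb : HasBoundedGrowthAtSomeScale Xs)
    (o : X) (os : Xs)
    (Γ : Subgroup (X ≃ᵢ X)) (Γs : Subgroup (Xs ≃ᵢ Xs)) [Countable Γ] [Countable Γs]
    [MeasurableSpace Γ] [DiscreteMeasurableSpace Γ]
    [MeasurableSpace Γs] [DiscreteMeasurableSpace Γs]
    (hgrow : FinExpGrowth fun x : Γ => dist o ((x : X ≃ᵢ X) o))
    (hgrows : FinExpGrowth fun y : Γs => dist os ((y : Xs ≃ᵢ Xs) os))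
    (p : Γ × Γs → ℝ≥0∞) (hp : IsProb p)
    (hmom : FiniteFirstMoment p fun g : Γ × Γs =>
      dist (o, os) (((g.1 : X ≃ᵢ X) o), ((g.2 : Xs ≃ᵢ Xs) os)))
    (hμne : IsNonElemMeasure fun x : Γ => ∑' y : Γs, p (x, y))
    (hμsne : IsNonElemMeasure fun y : Γs => ∑' x : Γ, p (x, y))
    (hπ hs l ls : ℝ) (hhπ : HasEntropy p hπ)
    (hhs : HasEntropy (fun y : Γs => ∑' x : Γ, p (x, y)) hs)
    (hl : HasDrift (fun x : Γ => ∑' y : Γs, p (x, y))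
      (fun x => dist o ((x : X ≃ᵢ X) o)) l)
    (hls : HasDrift (fun y : Γs => ∑' x : Γ, p (x, y))
      (fun y => dist os ((y : Xs ≃ᵢ Xs) os)) ls)
    (P : Measure (ℕ → Γ × Γs)) (hP : IsRWMeasure p P)
    (ν : Measure (Boundary X o × Boundary Xs os))
    (hν : IsJointHarmonic o os P (fun ω n => ((walk ω n).1 : X ≃ᵢ X) o)
      (fun ω n => ((walk ω n).2 : Xs ≃ᵢ Xs) os) ν)
 :
    ∀ᵐ ξ ∂ν,
      (hπ - hs) / l + hs / ls ≤
        Filter.liminf (fun r : ℝ =>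
            Real.log (ν (qball (qbb o os) ξ r)).toReal / Real.log r)
          (nhdsWithin 0 (Set.Ioi 0)) :=
  statement15_general hX hXs o os Γ Γs hgrow hgrows p hmom hμne hμsne hπ hs l ls hhπ hhs hl hls
    P hP ν hν

end HMDim
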